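/- arXiv:1504.00538 — 2 statements merged into one kernel-verified Lean document; each statement's English description precedes it below -/
import Mathlib

section
/- Let A* be a block-nondegenerate local maximizer of f over the feasible set. Then there exists δ > 0 such that for every HOOI sequence {A^k}_{k≥0} with ‖A⁰ − A*‖_F ≤ δ, there exists a feasible point Ā that is a local maximizer of f such that for every n, Aₙ^k(Aₙ^k)ᵀ → ĀₙĀₙᵀ in Frobenius norm as k → ∞. -/
open Matrix BigOperators Filter

def froSq {ι κ : Type*} [Fintype ι] [Fintype κ] (M : Matrix ι κ ℝ) : ℝ :=
  ∑ i, ∑ j, (M i j) ^ 2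

noncomputable def fro {ι κ : Type*} [Fintype ι] [Fintype κ] (M : Matrix ι κ ℝ) : ℝ :=
  Real.sqrt (froSq M)

noncomputable def eigList {m : ℕ} {κ : Type*} [Fintype κ] (Y : Matrix (Fin m) κ ℝ) : List ℝ :=
  ((((Finset.univ : Finset (Fin m)).val.map
      (fun j => (Matrix.isHermitian_mul_conjTranspose_self Y).eigenvalues j)).sort (· ≤ ·)).reverse)

noncomputable def sval {m : ℕ} {κ : Type*} [Fintype κ] (Y : Matrix (Fin m) κ ℝ) (i : ℕ) : ℝ :=
  Real.sqrt ((eigList Y).getD (i - 1) 0)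

/-- Feasibility: every factor matrix has orthonormal columns. -/
def TFeas {N : ℕ} {I r : Fin N → ℕ}
    (A : (n : Fin N) → Matrix (Fin (I n)) (Fin (r n)) ℝ) : Prop :=
  ∀ n, (A n)ᵀ * A n = 1

/-- `Gₙ(A) = unfoldₙ(X ×₁ A₁ᵀ ⋯ ×_{n−1} A_{n−1}ᵀ ×_{n+1} A_{n+1}ᵀ ⋯ ×_N A_Nᵀ)`. -/
noncomputable def Gmat {N : ℕ} {I r : Fin N → ℕ} (X : ((n : Fin N) → Fin (I n)) → ℝ)
    (A : (n : Fin N) → Matrix (Fin (I n)) (Fin (r n)) ℝ) (n : Fin N) :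
    Matrix (Fin (I n)) ((m : {m : Fin N // m ≠ n}) → Fin (r m.1)) ℝ :=
  fun j c => ∑ idx : ((m : {m : Fin N // m ≠ n}) → Fin (I m.1)),
    X (fun i => if h : i = n then Fin.cast (by rw [h]) j else idx ⟨i, h⟩) *
      ∏ m : {m : Fin N // m ≠ n}, A m.1 (idx m) (c m)

/-- `f(A) = ‖X ×₁ A₁ᵀ ⋯ ×_N A_Nᵀ‖_F²`. -/
noncomputable def fval {N : ℕ} {I r : Fin N → ℕ} (X : ((n : Fin N) → Fin (I n)) → ℝ)
    (A : (n : Fin N) → Matrix (Fin (I n)) (Fin (r n)) ℝ) : ℝ :=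
  ∑ c : ((n : Fin N) → Fin (r n)),
    (∑ idx : ((n : Fin N) → Fin (I n)), X idx * ∏ n, A n (idx n) (c n)) ^ 2

/-- A critical point: `Gₙ(A)Gₙ(A)ᵀAₙ = AₙAₙᵀGₙ(A)Gₙ(A)ᵀAₙ` for all `n`. -/
def Critical {N : ℕ} {I r : Fin N → ℕ} (X : ((n : Fin N) → Fin (I n)) → ℝ)
    (A : (n : Fin N) → Matrix (Fin (I n)) (Fin (r n)) ℝ) : Prop :=
  ∀ n, Gmat X A n * (Gmat X A n)ᵀ * A n =
    A n * (A n)ᵀ * (Gmat X A n * (Gmat X A n)ᵀ * A n)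

/-- A block-wise maximizer. -/
def BlockMax {N : ℕ} {I r : Fin N → ℕ} (X : ((n : Fin N) → Fin (I n)) → ℝ)
    (A : (n : Fin N) → Matrix (Fin (I n)) (Fin (r n)) ℝ) : Prop :=
  ∀ n, ∀ B : Matrix (Fin (I n)) (Fin (r n)) ℝ, Bᵀ * B = 1 →
    froSq (Bᵀ * Gmat X A n) ≤ froSq ((A n)ᵀ * Gmat X A n)

/-- Block-nondegeneracy: `σ_{rₙ}(Gₙ(A)) > σ_{rₙ+1}(Gₙ(A))` for all `n`. -/
def NonDeg {N : ℕ} {I r : Fin N → ℕ} (X : ((n : Fin N) → Fin (I n)) → ℝ)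
    (A : (n : Fin N) → Matrix (Fin (I n)) (Fin (r n)) ℝ) : Prop :=
  ∀ n, sval (Gmat X A n) (r n + 1) < sval (Gmat X A n) (r n)

/-- The hybrid tuple used in HOOI: the already-updated blocks `i < n` come from
`Anew`, the rest from `Aold`. -/
def hyb {N : ℕ} {I r : Fin N → ℕ}
    (Aold Anew : (n : Fin N) → Matrix (Fin (I n)) (Fin (r n)) ℝ) (n : Fin N) :
    (i : Fin N) → Matrix (Fin (I i)) (Fin (r i)) ℝ :=
  fun i => if i < n then Anew i else Aold i

/-- `Gₙ^k = unfoldₙ(X ×₁ (A₁^{k+1})ᵀ ⋯ ×_{n−1} (A_{n−1}^{k+1})ᵀ ×_{n+1} (A_{n+1}^k)ᵀ ⋯ ×_N (A_N^k)ᵀ)`. -/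
noncomputable def Gseq {N : ℕ} {I r : Fin N → ℕ} (X : ((n : Fin N) → Fin (I n)) → ℝ)
    (A : ℕ → (n : Fin N) → Matrix (Fin (I n)) (Fin (r n)) ℝ) (k : ℕ) (n : Fin N) :
    Matrix (Fin (I n)) ((m : {m : Fin N // m ≠ n}) → Fin (r m.1)) ℝ :=
  Gmat X (hyb (A k) (A (k + 1)) n) n

/-- A HOOI sequence. -/
def IsHOOI {N : ℕ} {I r : Fin N → ℕ} (X : ((n : Fin N) → Fin (I n)) → ℝ)
    (A : ℕ → (n : Fin N) → Matrix (Fin (I n)) (Fin (r n)) ℝ) : Prop :=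
  (∀ k, TFeas (A k)) ∧
  ∀ k (n : Fin N), ∀ B : Matrix (Fin (I n)) (Fin (r n)) ℝ, Bᵀ * B = 1 →
    froSq (Bᵀ * Gseq X A k n) ≤ froSq ((A (k + 1) n)ᵀ * Gseq X A k n)

/-- A greedy HOOI sequence. -/
def IsGreedyHOOI {N : ℕ} {I r : Fin N → ℕ} (X : ((n : Fin N) → Fin (I n)) → ℝ)
    (A : ℕ → (n : Fin N) → Matrix (Fin (I n)) (Fin (r n)) ℝ) : Prop :=
  IsHOOI X A ∧
  ∀ k (n : Fin N), ∀ B : Matrix (Fin (I n)) (Fin (r n)) ℝ, Bᵀ * B = 1 →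
    (∀ C : Matrix (Fin (I n)) (Fin (r n)) ℝ, Cᵀ * C = 1 →
      froSq (Cᵀ * Gseq X A k n) ≤ froSq (Bᵀ * Gseq X A k n)) →
    fro (A (k + 1) n - A k n) ≤ fro (B - A k n)

/-- `Ā` is a limit point of the sequence `{A^k}` (blockwise in Frobenius norm). -/
def IsLimitPt {N : ℕ} {I r : Fin N → ℕ}
    (A : ℕ → (n : Fin N) → Matrix (Fin (I n)) (Fin (r n)) ℝ)
    (Abar : (n : Fin N) → Matrix (Fin (I n)) (Fin (r n)) ℝ) : Prop :=
  ∃ φ : ℕ → ℕ, StrictMono φ ∧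
    ∀ n, Tendsto (fun k => fro (A (φ k) n - Abar n)) atTop (nhds 0)

/-- `‖A − B‖_F = √(∑ₙ ‖Aₙ − Bₙ‖_F²)` on tuples. -/
noncomputable def tdist {N : ℕ} {I r : Fin N → ℕ}
    (A B : (n : Fin N) → Matrix (Fin (I n)) (Fin (r n)) ℝ) : ℝ :=
  Real.sqrt (∑ n, froSq (A n - B n))

/-- A local maximizer of `f` over the feasible set. -/
def LocalMax {N : ℕ} {I r : Fin N → ℕ} (X : ((n : Fin N) → Fin (I n)) → ℝ)
    (A : (n : Fin N) → Matrix (Fin (I n)) (Fin (r n)) ℝ) : Prop :=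
  TFeas A ∧ ∃ ε > (0 : ℝ), ∀ B : (n : Fin N) → Matrix (Fin (I n)) (Fin (r n)) ℝ,
    TFeas B → tdist B A ≤ ε → fval X B ≤ fval X A

/-- A globally optimal solution. -/
def GlobalMax {N : ℕ} {I r : Fin N → ℕ} (X : ((n : Fin N) → Fin (I n)) → ℝ)
    (A : (n : Fin N) → Matrix (Fin (I n)) (Fin (r n)) ℝ) : Prop :=
  TFeas A ∧ ∀ B : (n : Fin N) → Matrix (Fin (I n)) (Fin (r n)) ℝ,
    TFeas B → fval X B ≤ fval X A


namespace HOOI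
open PowerSeries in
theorem dvr_to_ps {k O : Type*} [Field k] [CommRing O] [IsDomain O] [IsDiscreteValuationRing O]
    [Algebra k O] (hres : ∀ a : O, ∃ c : k, a - algebraMap k O c ∈ IsLocalRing.maximalIdeal O) :
    ∃ ψ : O →ₐ[k] k⟦X⟧, (∀ a, a ≠ 0 → ψ a ≠ 0) ∧
      ∀ a ∈ IsLocalRing.maximalIdeal O, constantCoeff (ψ a) = 0 := by
  obtain ⟨p, hp⟩ := IsDiscreteValuationRing.exists_irreducible O
  have hm : IsLocalRing.maximalIdeal O = Ideal.span {p} := hp.maximalIdeal_eq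
  have hp0 : p ≠ 0 := hp.ne_zero
  have h1 : ∀ a : O, ∃ c : k, ∃ b : O, a = algebraMap k O c + p * b := by
    intro a
    obtain ⟨c, hc⟩ := hres a
    rw [hm, Ideal.mem_span_singleton] at hc
    obtain ⟨b, hb⟩ := hc
    exact ⟨c, b, by rw [← hb]; ring⟩
  choose c t ht using h1
  have huniq : ∀ (x y : k) (u v : O), algebraMap k O x + p * u = algebraMap k O y + p * v →
      x = y ∧ u = v := by
    intro x y u v h
    have hxy : x = y := by
      by_contra hne
      have h2 : algebraMap k O (x - y) = p * (v - u) := by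
        rw [map_sub]; linear_combination h
      have hu : IsUnit (algebraMap k O (x - y)) := (IsUnit.mk0 _ (sub_ne_zero.2 hne)).map _
      rw [h2] at hu
      exact hp.not_isUnit (isUnit_of_mul_isUnit_left hu)
    refine ⟨hxy, ?_⟩
    subst hxy
    exact mul_left_cancel₀ hp0 (add_left_cancel h)
  have cadd : ∀ a b, c (a + b) = c a + c b ∧ t (a + b) = t a + t b := by
    intro a b
    apply huniq
    rw [← ht, map_add]
    conv_lhs => rw [ht a, ht b]
    ring
  have cmul : ∀ a b, c (a * b) = c a * c b ∧
      t (a * b) = algebraMap k O (c a) * t b + t a * b := by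
    intro a b
    apply huniq
    rw [← ht, map_mul]
    have e1 : a * b = (algebraMap k O (c a) + p * t a) * b := by rw [← ht]
    have e2 : algebraMap k O (c a) * b = algebraMap k O (c a) * (algebraMap k O (c b) + p * t b) := by
      rw [← ht]
    linear_combination e1 + e2
  have calg : ∀ x : k, c (algebraMap k O x) = x ∧ t (algebraMap k O x) = 0 := by
    intro x
    apply huniq
    rw [← ht]; ring
  let co : ℕ → O → k := fun n a => c (t^[n] a)
  have co_add : ∀ n a b, co n (a + b) = co n a + co n b := by
    intro n
    induction n with
    | zero => intro a b; exact (cadd a b).1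
    | succ n ih =>
      intro a b
      simp only [co, Function.iterate_succ_apply] at ih ⊢
      rw [(cadd a b).2]; exact ih _ _
  have t0 : t 0 = 0 := by simpa using (calg 0).2
  have c0 : c 0 = 0 := by simpa using (calg 0).1
  have tn0 : ∀ n, t^[n] 0 = 0 := fun n => Function.iterate_fixed t0 n
  let ps : O → k⟦X⟧ := fun a => PowerSeries.mk fun n => co n a
  have ps_rec : ∀ a, ps a = C (c a) + X * ps (t a) := by
    intro a
    ext n
    cases n with
    | zero => simp [ps, co]
    | succ n => simp [ps, co, PowerSeries.coeff_succ_X_mul, PowerSeries.coeff_C]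
  have ps_add : ∀ a b, ps (a + b) = ps a + ps b := by
    intro a b; ext n; simp [ps, co_add]
  have ps_alg : ∀ x : k, ps (algebraMap k O x) = C x := by
    intro x
    rw [ps_rec, (calg x).1, (calg x).2]
    have : ps 0 = 0 := by ext n; simp [ps, co, tn0, c0]
    rw [this]; simp
  have ps_mul : ∀ n a b, coeff n (ps (a * b)) = coeff n (ps a * ps b) := by
    intro n
    induction n with
    | zero =>
      intro a b
      simp [ps, co, (cmul a b).1, PowerSeries.coeff_mul]
    | succ n ih =>
      intro a b
      rw [ps_rec (a * b), ps_rec a, (cmul a b).2, ps_add, add_mul, mul_assoc]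
      simp only [map_add, PowerSeries.coeff_succ_X_mul, ih]
      rw [PowerSeries.coeff_C_mul, ps_alg, PowerSeries.coeff_C_mul, ps_rec b, map_add,
        PowerSeries.coeff_succ_X_mul]
      simp [PowerSeries.coeff_C]
  let ψ : O →ₐ[k] k⟦X⟧ :=
    { toFun := ps
      map_one' := by have := ps_alg 1; simpa using this
      map_mul' := fun a b => by ext n; exact ps_mul n a b
      map_zero' := by have := ps_alg 0; simpa using this
      map_add' := ps_add
      commutes' := fun x => by rw [ps_alg]; rfl }
  have hψp : ψ p = X := by
    have h := huniq (c p) 0 (t p) 1 (by rw [← ht]; simp)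
    change ps p = X
    rw [ps_rec, h.1, h.2]
    have : ps 1 = 1 := ψ.map_one
    rw [this]; simp
  refine ⟨ψ, ?_, ?_⟩
  · intro a ha
    obtain ⟨n, u, rfl⟩ := IsDiscreteValuationRing.eq_unit_mul_pow_irreducible ha hp
    rw [map_mul, map_pow, hψp]
    exact mul_ne_zero ((u.isUnit.map ψ).ne_zero) (pow_ne_zero _ PowerSeries.X_ne_zero)
  · intro a ha
    rw [hm, Ideal.mem_span_singleton] at ha
    obtain ⟨b, rfl⟩ := ha
    rw [map_mul, hψp]; simp

open PowerSeries in
/-- Log-derivative obstruction. -/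
theorem ps_no_log {k : Type*} [Field k] [CharZero k] (G H : k⟦X⟧) (hG : G ≠ 0)
    (h0 : constantCoeff G = 0) (h : PowerSeries.derivative k G = G * H) : False := by
  have hex : ∃ n, coeff n G ≠ 0 := by
    by_contra hcon; push Not at hcon; exact hG (by ext n; simpa using hcon n)
  classical
  let e := Nat.find hex
  have he : coeff e G ≠ 0 := Nat.find_spec hex
  have hlt : ∀ m, m < e → coeff m G = 0 := fun m hm => by
    have := Nat.find_min hex hm; simpa using this
  have hepos : e ≠ 0 := by
    intro h'; rw [h'] at he; exact he (by simpa using h0)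
  obtain ⟨m, hm⟩ := Nat.exists_eq_succ_of_ne_zero hepos
  have h1 := congrArg (coeff m) h
  rw [PowerSeries.coeff_derivative, PowerSeries.coeff_mul] at h1
  rw [Finset.sum_eq_zero] at h1
  · rcases mul_eq_zero.1 h1 with h2 | h2
    · exact he (by rw [hm]; exact h2)
    · exact (Nat.cast_add_one_ne_zero m) h2
  · intro x hx
    rw [Finset.HasAntidiagonal.mem_antidiagonal] at hx
    rw [hlt x.1 (by omega), zero_mul]

open PowerSeries in
theorem dedekind_curve {k C O : Type*} [Field k] [CommRing C] [IsDedekindDomain C] [Algebra k C]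
    (Q : Ideal C) [Q.IsPrime] (hQ0 : Q ≠ ⊥) [CommRing O] [IsDomain O] [Algebra C O]
    [IsLocalization.AtPrime O Q] [Algebra k O] [IsScalarTower k C O]
    (hresC : ∀ x : C, ∃ c : k, x - algebraMap k C c ∈ Q) (F : C) (hF0 : F ≠ 0) (hF : F ∈ Q) :
    ∃ ψ : C →ₐ[k] k⟦X⟧, ψ F ≠ 0 ∧ constantCoeff (ψ F) = 0 := by
  have : IsDiscreteValuationRing O :=
    IsLocalization.AtPrime.isDiscreteValuationRing_of_dedekind_domain C hQ0 O
  have hresO : ∀ a : O, ∃ c : k, a - algebraMap k O c ∈ IsLocalRing.maximalIdeal O := by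
    intro a
    obtain ⟨x, s, rfl⟩ := IsLocalization.exists_mk'_eq Q.primeCompl a
    obtain ⟨cx, hx⟩ := hresC x
    obtain ⟨cs, hs⟩ := hresC s
    have hcs : cs ≠ 0 := by
      rintro rfl
      rw [map_zero, sub_zero] at hs
      exact s.2 hs
    refine ⟨cx / cs, ?_⟩
    have hu : IsUnit (algebraMap C O s) := IsLocalization.map_units O s
    rw [← Ideal.unit_mul_mem_iff_mem _ hu]
    have e1 : x - algebraMap k C (cx / cs) * s ∈ Q := by
      have : x - algebraMap k C (cx / cs) * s =
          (x - algebraMap k C cx) - algebraMap k C (cx / cs) * (s - algebraMap k C cs) := by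
        have : algebraMap k C cx = algebraMap k C (cx / cs) * algebraMap k C cs := by
          rw [← map_mul, div_mul_cancel₀ _ hcs]
        rw [this]; ring
      rw [this]
      exact Q.sub_mem hx (Q.mul_mem_left _ hs)
    have e2 : algebraMap C O s * (IsLocalization.mk' O x s - algebraMap k O (cx / cs)) =
        algebraMap C O (x - algebraMap k C (cx / cs) * s) := by
      rw [mul_sub, IsLocalization.mk'_spec', map_sub, map_mul, ← IsScalarTower.algebraMap_apply k C O]
      ring
    rw [e2]
    exact (IsLocalization.AtPrime.to_map_mem_maximal_iff O Q _).2 e1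
  obtain ⟨ψ, h1, h2⟩ := dvr_to_ps (k := k) (O := O) hresO
  refine ⟨ψ.comp (IsScalarTower.toAlgHom k C O), ?_, ?_⟩
  · apply h1
    exact fun h => hF0 ((IsLocalization.injective O Q.primeCompl_le_nonZeroDivisors) (h.trans (map_zero _).symm))
  · apply h2
    exact (IsLocalization.AtPrime.to_map_mem_maximal_iff O Q _).2 hF

open PowerSeries in
theorem curve_dim_one {k A : Type*} [Field k] [IsAlgClosed k] [CharZero k] [CommRing A] [IsDomain A]
    [Algebra k A] [Algebra (Polynomial k) A] [IsScalarTower k (Polynomial k) A]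
    [FaithfulSMul (Polynomial k) A]
    [Algebra.IsIntegral (Polynomial k) A] [Algebra.FiniteType k A]
    (F : A) (hF : F ≠ 0) (M : Ideal A) [M.IsPrime] (hFM : F ∈ M) :
    ∃ ψ : A →ₐ[k] k⟦X⟧, ψ F ≠ 0 ∧ constantCoeff (ψ F) = 0 := by
  let E := FractionRing A
  let _ : Algebra (FractionRing (Polynomial k)) E := FractionRing.liftAlgebra (Polynomial k) E
  have : IsScalarTower (Polynomial k) (FractionRing (Polynomial k)) E :=
    FractionRing.isScalarTower_liftAlgebra _ _
  have : Module.Finite (Polynomial k) A := by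
    have : Algebra.FiniteType (Polynomial k) A := Algebra.FiniteType.of_restrictScalars_finiteType k _ _
    exact Algebra.IsIntegral.finite
  have : FiniteDimensional (FractionRing (Polynomial k)) E := by
    infer_instance
  let C := integralClosure (Polynomial k) E
  have : IsDedekindDomain C := integralClosure.isDedekindDomain (Polynomial k) (FractionRing (Polynomial k)) E
  let j : A →ₐ[Polynomial k] C := (IsScalarTower.toAlgHom (Polynomial k) A E).codRestrict C
    (fun a => (Algebra.IsIntegral.isIntegral (R := Polynomial k) a).map (IsScalarTower.toAlgHom (Polynomial k) A E))
  have hj : Function.Injective j := by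
    intro a b hab
    have := congrArg (fun z : C => (z : E)) hab
    exact IsFractionRing.injective A E this
  have hjint : j.toRingHom.IsIntegral := by
    have h1 : (algebraMap (Polynomial k) C).IsIntegral := fun x => Algebra.IsIntegral.isIntegral x
    have h2 : algebraMap (Polynomial k) C = j.toRingHom.comp (algebraMap (Polynomial k) A) :=
      (j.comp_algebraMap).symm
    rw [h2] at h1
    exact RingHom.IsIntegral.tower_top _ _ h1
  obtain ⟨Q, hQ, hQM⟩ : ∃ Q : Ideal C, Q.IsPrime ∧ Q.comap j.toRingHom = M := by
    let _ : Algebra A C := j.toRingHom.toAlgebra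
    have : Algebra.IsIntegral A C := ⟨hjint⟩
    obtain ⟨Q, -, hQ, h⟩ := Ideal.exists_ideal_over_prime_of_isIntegral M (⊥ : Ideal C) (by
      intro x hx
      have hx' : j x = 0 := hx
      rw [hj (hx'.trans (map_zero j).symm)]
      exact M.zero_mem)
    exact ⟨Q, hQ, h⟩
  have hjF : j F ∈ Q := by
    have : F ∈ Q.comap j.toRingHom := by rw [hQM]; exact hFM
    exact this
  have hjF0 : j F ≠ 0 := fun h => hF (hj (h.trans (map_zero j).symm))
  have hQ0 : Q ≠ ⊥ := by
    rintro rfl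
    exact hjF0 hjF
  have hQmax : Q.IsMaximal := hQ.isMaximal hQ0
  have : Module.Finite (Polynomial k) C :=
    IsIntegralClosure.finite (Polynomial k) (FractionRing (Polynomial k)) E C
  have : Algebra.FiniteType k C := Algebra.FiniteType.trans (S := Polynomial k) inferInstance inferInstance
  have hresC : ∀ x : C, ∃ c : k, x - algebraMap k C c ∈ Q := by
    intro x
    let _ : Field (C ⧸ Q) := Ideal.Quotient.field Q
    have : Algebra.FiniteType k (C ⧸ Q) := inferInstance
    have : Module.Finite k (C ⧸ Q) := finite_of_finite_type_of_isJacobsonRing k (C ⧸ Q)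
    obtain ⟨c, hc⟩ := (IsAlgClosed.algebraMap_bijective_of_isIntegral (k := k) (K := C ⧸ Q)).2
      (Ideal.Quotient.mk Q x)
    refine ⟨c, ?_⟩
    rw [← Ideal.Quotient.eq, ← hc]
    rfl
  obtain ⟨ψ, h1, h2⟩ := dedekind_curve (k := k) (C := C) (O := Localization.AtPrime Q) Q hQ0 hresC (j F) hjF0 hjF
  exact ⟨ψ.comp (j.restrictScalars k), h1, h2⟩

open PowerSeries in
theorem curve_sel {k A : Type*} [Field k] [IsAlgClosed k] [CharZero k] [CommRing A] [IsDomain A]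
    [Algebra k A] [Algebra.FiniteType k A]
    (F : A) (hF : F ≠ 0) (hFu : ¬ IsUnit F) :
    ∃ ψ : A →ₐ[k] k⟦X⟧, ψ F ≠ 0 ∧ constantCoeff (ψ F) = 0 := by
  obtain ⟨M, hM, hFM⟩ := exists_max_ideal_of_mem_nonunits hFu
  obtain ⟨s, g, hginj, hgint⟩ := exists_integral_inj_algHom_of_fg k A
  let _ : Algebra (MvPolynomial (Fin s) k) A := g.toRingHom.toAlgebra
  have : IsScalarTower k (MvPolynomial (Fin s) k) A := IsScalarTower.of_algebraMap_eq' (g.comp_algebraMap).symm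
  have : Algebra.IsIntegral (MvPolynomial (Fin s) k) A := ⟨hgint⟩
  have : FaithfulSMul (MvPolynomial (Fin s) k) A := (faithfulSMul_iff_algebraMap_injective (MvPolynomial (Fin s) k) A).2 hginj
  -- a nonzero multiple of `F` in the base
  obtain ⟨c0, hc0, hc0F⟩ : ∃ c0 : (MvPolynomial (Fin s) k), c0 ≠ 0 ∧ algebraMap (MvPolynomial (Fin s) k) A c0 ∈ Ideal.span {F} := by
    have := Ideal.comap_ne_bot_of_integral_mem (R := (MvPolynomial (Fin s) k)) hF (Ideal.mem_span_singleton_self F)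
      (Algebra.IsIntegral.isIntegral F)
    obtain ⟨c, hc, hc'⟩ := Submodule.exists_mem_ne_zero_of_ne_bot this
    exact ⟨c, hc', hc⟩
  have hspan : Ideal.span {F} ≤ M := (Ideal.span_singleton_le_iff_mem _).2 hFM
  -- the point under `M`
  have hresA : ∀ x : A, ∃ c : k, x - algebraMap k A c ∈ M := by
    intro x
    let _ : Field (A ⧸ M) := Ideal.Quotient.field M
    have : Module.Finite k (A ⧸ M) := finite_of_finite_type_of_isJacobsonRing k (A ⧸ M)
    obtain ⟨c, hc⟩ := (IsAlgClosed.algebraMap_bijective_of_isIntegral (k := k) (K := A ⧸ M)).2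
      (Ideal.Quotient.mk M x)
    refine ⟨c, ?_⟩
    rw [← Ideal.Quotient.eq, ← hc]
    rfl
  choose p hp using fun i : Fin s => hresA (algebraMap (MvPolynomial (Fin s) k) A (MvPolynomial.X i))
  have hpt : ∀ q : (MvPolynomial (Fin s) k), algebraMap (MvPolynomial (Fin s) k) A q - algebraMap k A (MvPolynomial.eval p q) ∈ M := by
    intro q
    rw [← Ideal.Quotient.eq]
    let φ1 : (MvPolynomial (Fin s) k) →ₐ[k] A ⧸ M := (Ideal.Quotient.mkₐ k M).comp (IsScalarTower.toAlgHom k (MvPolynomial (Fin s) k) A)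
    let φ2 : (MvPolynomial (Fin s) k) →ₐ[k] A ⧸ M := (Algebra.ofId k (A ⧸ M)).comp (MvPolynomial.aeval p)
    have : φ1 = φ2 := by
      apply MvPolynomial.algHom_ext
      intro i
      have := (Ideal.Quotient.eq).2 (hp i)
      simpa [φ1, φ2] using this
    have := DFunLike.congr_fun this q
    simpa [φ1, φ2, MvPolynomial.aeval_eq_eval, MvPolynomial.coe_aeval_eq_eval] using this
  have hM1 : ∀ q : (MvPolynomial (Fin s) k), MvPolynomial.eval p q = 0 → algebraMap (MvPolynomial (Fin s) k) A q ∈ M := by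
    intro q hq
    have := hpt q
    rwa [hq, map_zero, sub_zero] at this
  have hM2 : ∀ q : (MvPolynomial (Fin s) k), algebraMap (MvPolynomial (Fin s) k) A q ∈ M → MvPolynomial.eval p q = 0 := by
    intro q hq
    by_contra hne
    have h1 := M.sub_mem hq (hpt q)
    rw [sub_sub_cancel] at h1
    exact hM.ne_top (Ideal.eq_top_of_isUnit_mem _ h1 ((IsUnit.mk0 _ hne).map _))
  have hc0p : MvPolynomial.eval p c0 = 0 := hM2 _ (hspan hc0F)
  obtain ⟨q, hq⟩ : ∃ q, MvPolynomial.eval q c0 ≠ 0 := by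
    by_contra hcon
    push Not at hcon
    exact hc0 (MvPolynomial.funext (fun x => by simpa using hcon x))
  let ℓ : (MvPolynomial (Fin s) k) →ₐ[k] Polynomial k :=
    MvPolynomial.aeval (fun i => Polynomial.C (p i) + Polynomial.X * Polynomial.C (q i - p i))
  have hℓ0 : ∀ r : (MvPolynomial (Fin s) k), (ℓ r).eval 0 = MvPolynomial.eval p r := by
    intro r
    have : (Polynomial.aeval (R := k) (0 : k)).comp ℓ = MvPolynomial.aeval p := by
      apply MvPolynomial.algHom_ext
      intro i; simp [ℓ]
    have := DFunLike.congr_fun this r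
    simpa [MvPolynomial.coe_aeval_eq_eval, Polynomial.coe_aeval_eq_eval] using this
  have hℓ1 : ∀ r : (MvPolynomial (Fin s) k), (ℓ r).eval 1 = MvPolynomial.eval q r := by
    intro r
    have : (Polynomial.aeval (R := k) (1 : k)).comp ℓ = MvPolynomial.aeval q := by
      apply MvPolynomial.algHom_ext
      intro i; simp [ℓ]
    have := DFunLike.congr_fun this r
    simpa [MvPolynomial.coe_aeval_eq_eval, Polynomial.coe_aeval_eq_eval] using this
  have hpq : p ≠ q := by rintro rfl; exact hq hc0p
  have hℓsurj : Function.Surjective ℓ := by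
    obtain ⟨i, hi⟩ := Function.ne_iff.1 hpq
    have hi' : q i - p i ≠ 0 := sub_ne_zero.2 (Ne.symm hi)
    have : ℓ.comp (Polynomial.aeval (R := k)
        ((MvPolynomial.X i - MvPolynomial.C (p i)) * MvPolynomial.C (q i - p i)⁻¹)) = AlgHom.id k _ := by
      apply Polynomial.algHom_ext
      simp only [AlgHom.comp_apply, Polynomial.aeval_X, map_mul, map_sub, AlgHom.id_apply, ℓ,
        MvPolynomial.aeval_X, MvPolynomial.aeval_C, Polynomial.algebraMap_eq]
      rw [add_sub_cancel_left, mul_assoc, ← Polynomial.C_sub, ← Polynomial.C_mul,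
        mul_inv_cancel₀ hi', Polynomial.C_1, mul_one]
    intro y
    exact ⟨_, DFunLike.congr_fun this y⟩
  let Q : Ideal (MvPolynomial (Fin s) k) := RingHom.ker ℓ
  have : Q.IsPrime := RingHom.ker_isPrime _
  let m0 : Ideal (MvPolynomial (Fin s) k) := M.under (MvPolynomial (Fin s) k)
  have hQm : Q ≤ m0 := by
    intro r hr
    apply hM1
    rw [← hℓ0]
    have : ℓ r = 0 := hr
    rw [this]; simp
  obtain ⟨Q', hQ'M, hQ'prime, hQ'over⟩ := Ideal.exists_ideal_le_liesOver_of_le (p := Q) (q := m0) M hQm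
  have hover : ∀ r : (MvPolynomial (Fin s) k), algebraMap (MvPolynomial (Fin s) k) A r ∈ Q' ↔ ℓ r = 0 := by
    intro r
    have : Q = Q'.under (MvPolynomial (Fin s) k) := hQ'over.over
    change r ∈ Q'.under (MvPolynomial (Fin s) k) ↔ r ∈ Q
    rw [this]
  have hFQ' : F ∉ Q' := by
    intro h
    have h1 : algebraMap (MvPolynomial (Fin s) k) A c0 ∈ Q' := (Ideal.span_singleton_le_iff_mem _).2 h hc0F
    rw [hover] at h1
    apply hq
    rw [← hℓ1, h1]; simp
  let A' := A ⧸ Q'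
  let h0 : (MvPolynomial (Fin s) k) →ₐ[k] A' := (Ideal.Quotient.mkₐ k Q').comp (IsScalarTower.toAlgHom k (MvPolynomial (Fin s) k) A)
  have hker : ∀ r : (MvPolynomial (Fin s) k), ℓ r = 0 → h0 r = 0 := by
    intro r hr
    exact Ideal.Quotient.eq_zero_iff_mem.2 ((hover r).2 hr)
  let e : ((MvPolynomial (Fin s) k) ⧸ RingHom.ker ℓ) ≃ₐ[k] Polynomial k := Ideal.quotientKerAlgEquivOfSurjective hℓsurj
  let h1 : Polynomial k →ₐ[k] A' := (Ideal.Quotient.liftₐ (RingHom.ker ℓ) h0 (fun r hr => hker r hr)).comp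
    e.symm.toAlgHom
  have hh1 : ∀ r : (MvPolynomial (Fin s) k), h1 (ℓ r) = h0 r := by
    intro r
    have : e.symm (ℓ r) = Ideal.Quotient.mk _ r := by
      rw [AlgEquiv.symm_apply_eq]; rfl
    change (Ideal.Quotient.liftₐ (RingHom.ker ℓ) h0 (fun r hr => hker r hr)) (e.symm (ℓ r)) = h0 r
    rw [this]; rfl
  let _ : Algebra (Polynomial k) A' := h1.toRingHom.toAlgebra
  have : IsScalarTower k (Polynomial k) A' := IsScalarTower.of_algebraMap_eq' (h1.comp_algebraMap).symm
  have : FaithfulSMul (Polynomial k) A' := by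
    refine (faithfulSMul_iff_algebraMap_injective _ _).2 ?_
    rw [injective_iff_map_eq_zero]
    intro y hy
    obtain ⟨r, rfl⟩ := hℓsurj y
    have hy' : h0 r = 0 := (hh1 r).symm.trans hy
    exact (hover r).1 (Ideal.Quotient.eq_zero_iff_mem.1 hy')
  have : Algebra.IsIntegral (Polynomial k) A' := by
    constructor
    intro y
    obtain ⟨a, rfl⟩ := Ideal.Quotient.mk_surjective y
    have ha : IsIntegral (MvPolynomial (Fin s) k) a := Algebra.IsIntegral.isIntegral a
    obtain ⟨P, hPm, hP⟩ := ha
    refine ⟨P.map ℓ.toRingHom, hPm.map _, ?_⟩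
    have e1 : (algebraMap (Polynomial k) A').comp ℓ.toRingHom =
        (Ideal.Quotient.mk Q').comp (algebraMap (MvPolynomial (Fin s) k) A) := by
      exact RingHom.ext fun r => hh1 r
    rw [Polynomial.eval₂_map, e1, ← Polynomial.hom_eval₂, hP, map_zero]
  have : (M.map (Ideal.Quotient.mk Q')).IsPrime :=
    Ideal.map_isPrime_of_surjective Ideal.Quotient.mk_surjective (by rw [Ideal.mk_ker]; exact hQ'M)
  obtain ⟨ψ, hψ1, hψ2⟩ := curve_dim_one (k := k) (A := A') (Ideal.Quotient.mk Q' F)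
    (fun h => hFQ' (Ideal.Quotient.eq_zero_iff_mem.1 h)) (M.map (Ideal.Quotient.mk Q'))
    (Ideal.mem_map_of_mem _ hFM)
  exact ⟨ψ.comp (Ideal.Quotient.mkₐ k Q'), hψ1, hψ2⟩

open PowerSeries in
/-- Curve selection for a non-unit non-zero-divisor of a finitely generated algebra. -/
theorem curve_sel' {k S : Type*} [Field k] [IsAlgClosed k] [CharZero k] [CommRing S]
    [Algebra k S] [Algebra.FiniteType k S]
    (F : S) (hF : F ∈ nonZeroDivisors S) (hFu : ¬ IsUnit F) :
    ∃ ψ : S →ₐ[k] k⟦X⟧, ψ F ≠ 0 ∧ constantCoeff (ψ F) = 0 := by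
  obtain ⟨M, hM, hFM⟩ := exists_max_ideal_of_mem_nonunits hFu
  have : M.IsPrime := hM.isPrime
  obtain ⟨p, hp, hpM⟩ := Ideal.exists_minimalPrimes_le (I := (⊥ : Ideal S)) (J := M) bot_le
  have : p.IsPrime := hp.1.1
  have hFp : F ∉ p := fun h =>
    Set.disjoint_left.1 (Ideal.disjoint_nonZeroDivisors_of_mem_minimalPrimes hp) h hF
  obtain ⟨ψ, h1, h2⟩ := curve_sel (k := k) (A := S ⧸ p) (Ideal.Quotient.mk p F)
    (fun h => hFp (Ideal.Quotient.eq_zero_iff_mem.1 h)) (by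
      intro hu
      have := hu.map (Ideal.Quotient.factor hpM)
      rw [Ideal.Quotient.factor_mk] at this
      have h0 : Ideal.Quotient.mk M F = 0 := Ideal.Quotient.eq_zero_iff_mem.2 hFM
      rw [h0] at this
      exact not_isUnit_zero this)
  exact ⟨ψ.comp (Ideal.Quotient.mkₐ k p), h1, h2⟩

end HOOI


namespace HOOI

def uR {R : Type*} [CommRing R] {N : ℕ} {I r : Fin N → ℕ} (X : ((n : Fin N) → Fin (I n)) → R)
    (A : (n : Fin N) → Matrix (Fin (I n)) (Fin (r n)) R) (c : (n : Fin N) → Fin (r n)) : R :=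
  ∑ idx : ((n : Fin N) → Fin (I n)), X idx * ∏ n, A n (idx n) (c n)

def GR {R : Type*} [CommRing R] {N : ℕ} {I r : Fin N → ℕ} (X : ((n : Fin N) → Fin (I n)) → R)
    (A : (n : Fin N) → Matrix (Fin (I n)) (Fin (r n)) R) (n : Fin N) :
    Matrix (Fin (I n)) ((m : {m : Fin N // m ≠ n}) → Fin (r m.1)) R :=
  fun j c => ∑ idx : ((m : {m : Fin N // m ≠ n}) → Fin (I m.1)),
    X (fun i => if h : i = n then Fin.cast (by rw [h]) j else idx ⟨i, h⟩) *
      ∏ m : {m : Fin N // m ≠ n}, A m.1 (idx m) (c m)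

def fR {R : Type*} [CommRing R] {N : ℕ} {I r : Fin N → ℕ} (X : ((n : Fin N) → Fin (I n)) → R)
    (A : (n : Fin N) → Matrix (Fin (I n)) (Fin (r n)) R) : R :=
  ∑ c : ((n : Fin N) → Fin (r n)), (uR X A c) ^ 2

def gR {R : Type*} [CommRing R] {N : ℕ} {I r : Fin N → ℕ} (X : ((n : Fin N) → Fin (I n)) → R)
    (A : (n : Fin N) → Matrix (Fin (I n)) (Fin (r n)) R) (n : Fin N) :
    Matrix (Fin (I n)) (Fin (r n)) R :=
  GR X A n * (GR X A n)ᵀ * A n - A n * ((A n)ᵀ * (GR X A n * (GR X A n)ᵀ * A n))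

theorem Gmat_eq {N : ℕ} {I r : Fin N → ℕ} (X : ((n : Fin N) → Fin (I n)) → ℝ)
    (A : (n : Fin N) → Matrix (Fin (I n)) (Fin (r n)) ℝ) (n : Fin N) :
    Gmat X A n = GR X A n := rfl

theorem fval_eq {N : ℕ} {I r : Fin N → ℕ} (X : ((n : Fin N) → Fin (I n)) → ℝ)
    (A : (n : Fin N) → Matrix (Fin (I n)) (Fin (r n)) ℝ) :
    fval X A = fR X A := rfl

/-- combine an index in block n with the rest -/
def comb {N : ℕ} {I : Fin N → ℕ} (n : Fin N) (j : Fin (I n))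
    (idx : (m : {m : Fin N // m ≠ n}) → Fin (I m.1)) : (i : Fin N) → Fin (I i) :=
  fun i => if h : i = n then Fin.cast (by rw [h]) j else idx ⟨i, h⟩

theorem comb_self {N : ℕ} {I : Fin N → ℕ} (n : Fin N) (j : Fin (I n))
    (idx : (m : {m : Fin N // m ≠ n}) → Fin (I m.1)) : comb n j idx n = j := by
  simp [comb]

theorem comb_ne {N : ℕ} {I : Fin N → ℕ} (n : Fin N) (j : Fin (I n))
    (idx : (m : {m : Fin N // m ≠ n}) → Fin (I m.1)) (m : {m : Fin N // m ≠ n}) :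
    comb n j idx m.1 = idx m := by
  simp [comb, m.2]

def combE {N : ℕ} (I : Fin N → ℕ) (n : Fin N) :
    (Fin (I n) × ((m : {m : Fin N // m ≠ n}) → Fin (I m.1))) ≃ ((i : Fin N) → Fin (I i)) where
  toFun p := comb n p.1 p.2
  invFun x := (x n, fun m => x m.1)
  left_inv p := by
    ext1
    · exact comb_self n p.1 p.2
    · funext m; exact comb_ne n p.1 p.2 m
  right_inv x := by
    funext i
    by_cases h : i = n
    · subst h; exact comb_self _ _ _
    · exact comb_ne n (x n) (fun m => x m.1) ⟨i, h⟩

theorem sum_comb {R : Type*} [AddCommMonoid R] {N : ℕ} {I : Fin N → ℕ} (n : Fin N)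
    (F : ((i : Fin N) → Fin (I i)) → R) :
    ∑ x, F x = ∑ j, ∑ idx, F (comb n j idx) := by
  rw [← (combE I n).sum_comp, Fintype.sum_prod_type]; rfl

theorem prod_split {R : Type*} [CommMonoid R] {N : ℕ} (n : Fin N) (F : Fin N → R) :
    ∏ i, F i = F n * ∏ m : {m : Fin N // m ≠ n}, F m.1 :=
  Fintype.prod_eq_mul_prod_subtype_ne F n

theorem u_split {R : Type*} [CommRing R] {N : ℕ} {I r : Fin N → ℕ}
    (X : ((n : Fin N) → Fin (I n)) → R)
    (A : (n : Fin N) → Matrix (Fin (I n)) (Fin (r n)) R) (n : Fin N) (c : (n : Fin N) → Fin (r n)) :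
    uR X A c = ∑ j, A n j (c n) * GR X A n j (fun m => c m.1) := by
  unfold uR
  rw [sum_comb n]
  refine Finset.sum_congr rfl fun j _ => ?_
  unfold GR
  rw [Finset.mul_sum]
  refine Finset.sum_congr rfl fun idx _ => ?_
  rw [prod_split n, comb_self]
  simp only [comb_ne]
  change X (comb n j idx) * _ = _ * (X (comb n j idx) * _)
  ring

theorem u_split' {R : Type*} [CommRing R] {N : ℕ} {I r : Fin N → ℕ}
    (X : ((n : Fin N) → Fin (I n)) → R)
    (A : (n : Fin N) → Matrix (Fin (I n)) (Fin (r n)) R) (n : Fin N) (a : Fin (r n))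
    (c : (m : {m : Fin N // m ≠ n}) → Fin (r m.1)) :
    uR X A (comb n a c) = ((A n)ᵀ * GR X A n) a c := by
  rw [u_split X A n, comb_self, Matrix.mul_apply]
  simp only [comb_ne, Matrix.transpose_apply]

theorem fval_block {N : ℕ} {I r : Fin N → ℕ} (X : ((n : Fin N) → Fin (I n)) → ℝ)
    (A : (n : Fin N) → Matrix (Fin (I n)) (Fin (r n)) ℝ) (n : Fin N) :
    fval X A = froSq ((A n)ᵀ * Gmat X A n) := by
  rw [fval_eq, fR, sum_comb n]
  unfold froSq
  simp only [u_split', Gmat_eq]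

theorem GR_congr {R : Type*} [CommRing R] {N : ℕ} {I r : Fin N → ℕ}
    (X : ((n : Fin N) → Fin (I n)) → R)
    (A B : (n : Fin N) → Matrix (Fin (I n)) (Fin (r n)) R) (n : Fin N)
    (h : ∀ m, m ≠ n → A m = B m) : GR X A n = GR X B n := by
  funext j c
  unfold GR
  refine Finset.sum_congr rfl fun idx _ => ?_
  congr 1
  refine Finset.prod_congr rfl fun m _ => ?_
  rw [h m.1 m.2]

def mapT {R S : Type*} {N : ℕ} {I r : Fin N → ℕ} (φ : R → S)
    (A : (n : Fin N) → Matrix (Fin (I n)) (Fin (r n)) R) :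
    (n : Fin N) → Matrix (Fin (I n)) (Fin (r n)) S := fun n => (A n).map φ

theorem uR_map {R S : Type*} [CommRing R] [CommRing S] (φ : R →+* S) {N : ℕ} {I r : Fin N → ℕ}
    (X : ((n : Fin N) → Fin (I n)) → R)
    (A : (n : Fin N) → Matrix (Fin (I n)) (Fin (r n)) R) (c) :
    uR (fun i => φ (X i)) (mapT φ A) c = φ (uR X A c) := by
  simp [uR, mapT, map_sum, map_prod]

theorem fR_map {R S : Type*} [CommRing R] [CommRing S] (φ : R →+* S) {N : ℕ} {I r : Fin N → ℕ}
    (X : ((n : Fin N) → Fin (I n)) → R)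
    (A : (n : Fin N) → Matrix (Fin (I n)) (Fin (r n)) R) :
    fR (fun i => φ (X i)) (mapT φ A) = φ (fR X A) := by
  simp [fR, uR_map]

theorem GR_map {R S : Type*} [CommRing R] [CommRing S] (φ : R →+* S) {N : ℕ} {I r : Fin N → ℕ}
    (X : ((n : Fin N) → Fin (I n)) → R)
    (A : (n : Fin N) → Matrix (Fin (I n)) (Fin (r n)) R) (n) :
    GR (fun i => φ (X i)) (mapT φ A) n = (GR X A n).map φ := by
  funext j c
  simp [GR, mapT, map_sum, map_prod]

theorem gR_map {R S : Type*} [CommRing R] [CommRing S] (φ : R →+* S) {N : ℕ} {I r : Fin N → ℕ}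
    (X : ((n : Fin N) → Fin (I n)) → R)
    (A : (n : Fin N) → Matrix (Fin (I n)) (Fin (r n)) R) (n) :
    gR (fun i => φ (X i)) (mapT φ A) n = (gR X A n).map φ := by
  simp only [gR, GR_map]
  simp only [mapT]
  have hs : ∀ (P Q : Matrix (Fin (I n)) (Fin (r n)) R), (P - Q).map φ = P.map φ - Q.map φ :=
    fun P Q => Matrix.map_sub φ (map_sub φ) P Q
  simp only [hs, Matrix.map_mul, Matrix.transpose_map]

theorem deriv_prod {R : Type*} [CommRing R] (D : Derivation ℤ R R) {ι : Type*} [Fintype ι]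
    [DecidableEq ι] (F : ι → R) :
    D (∏ i, F i) = ∑ n, D (F n) * ∏ m ∈ Finset.univ.erase n, F m := by
  have : ∀ s : Finset ι, D (∏ i ∈ s, F i) = ∑ n ∈ s, D (F n) * ∏ m ∈ s.erase n, F m := by
    intro s
    induction s using Finset.induction_on with
    | empty => simp
    | insert a s ha ih =>
      rw [Finset.prod_insert ha, Derivation.leibniz, ih, Finset.sum_insert ha,
        Finset.erase_insert ha, smul_eq_mul, smul_eq_mul, Finset.mul_sum, add_comm, mul_comm]
      congr 1
      refine Finset.sum_congr rfl fun n hn => ?_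
      have hne : a ≠ n := by rintro rfl; exact ha hn
      rw [Finset.erase_insert_of_ne hne, Finset.prod_insert (by simp [ha])]
      ring
  exact this _

theorem deriv_uR {R : Type*} [CommRing R] (D : Derivation ℤ R R) {N : ℕ} {I r : Fin N → ℕ}
    (X : ((n : Fin N) → Fin (I n)) → R) (hX : ∀ i, D (X i) = 0)
    (A : (n : Fin N) → Matrix (Fin (I n)) (Fin (r n)) R) (c) :
    D (uR X A c) = ∑ n, ∑ j, D (A n j (c n)) * GR X A n j (fun m => c m.1) := by
  have h1 : ∀ n, ∑ j, D (A n j (c n)) * GR X A n j (fun m => c m.1) =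
      uR X (Function.update A n ((A n).map D)) c := by
    intro n
    rw [u_split _ _ n]
    refine Finset.sum_congr rfl fun j _ => ?_
    rw [Function.update_self, Matrix.map_apply]
    have := GR_congr X A (Function.update A n ((A n).map D)) n
      (fun m hm => by rw [Function.update_of_ne hm])
    rw [this]
  simp only [h1]
  unfold uR
  rw [map_sum, Finset.sum_comm]
  refine Finset.sum_congr rfl fun idx _ => ?_
  rw [Derivation.leibniz, hX, smul_zero, add_zero, deriv_prod, smul_eq_mul, Finset.mul_sum]
  refine Finset.sum_congr rfl fun n _ => ?_
  rw [← Finset.mul_prod_erase Finset.univ _ (Finset.mem_univ n), Function.update_self]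
  congr 2
  refine Finset.prod_congr rfl fun m hm => ?_
  rw [Function.update_of_ne (Finset.ne_of_mem_erase hm)]

theorem deriv_fR {R : Type*} [CommRing R] (D : Derivation ℤ R R) {N : ℕ} {I r : Fin N → ℕ}
    (X : ((n : Fin N) → Fin (I n)) → R) (hX : ∀ i, D (X i) = 0)
    (A : (n : Fin N) → Matrix (Fin (I n)) (Fin (r n)) R) :
    D (fR X A) = 2 * ∑ n, ∑ j, ∑ a, D (A n j a) * (GR X A n * (GR X A n)ᵀ * A n) j a := by
  unfold fR
  rw [map_sum]
  have h1 : ∀ c, D (uR X A c ^ 2) = 2 * ∑ n, ∑ j,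
      D (A n j (c n)) * (GR X A n j (fun m => c m.1) * uR X A c) := by
    intro c
    rw [Derivation.leibniz_pow, deriv_uR D X hX, nsmul_eq_mul, smul_eq_mul, pow_one, Finset.mul_sum]
    push_cast
    congr 1
    refine Finset.sum_congr rfl fun n _ => ?_
    rw [Finset.mul_sum]
    exact Finset.sum_congr rfl fun n _ => by ring
  simp only [h1]
  rw [← Finset.mul_sum, Finset.sum_comm]
  congr 1
  refine Finset.sum_congr rfl fun n _ => ?_
  rw [Finset.sum_comm]
  refine Finset.sum_congr rfl fun j _ => ?_
  rw [sum_comb n]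
  refine Finset.sum_congr rfl fun a _ => ?_
  simp only [u_split', comb_self, comb_ne]
  rw [← Finset.mul_sum, Matrix.mul_assoc, Matrix.mul_apply]
  congr 1
  refine Finset.sum_congr rfl fun c _ => ?_
  congr 1
  rw [Matrix.mul_apply, Matrix.mul_apply]
  exact Finset.sum_congr rfl fun x _ => mul_comm _ _

theorem skew_cancel {R : Type*} [CommRing R] [NoZeroDivisors R] [CharZero R]
    (D : Derivation ℤ R R) {p q : ℕ}
    (A : Matrix (Fin p) (Fin q) R) (hA : Aᵀ * A = 1) (M : Matrix (Fin p) (Fin p) R)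
    (hM : Mᵀ = M) :
    ∑ j, ∑ a, D (A j a) * (A * (Aᵀ * (M * A))) j a = 0 := by
  set W : Matrix (Fin q) (Fin q) R := (A.map D)ᵀ * A with hW
  have hsk : Wᵀ = -W := by
    ext a b
    have := congrArg (fun Z => D (Z b a)) hA
    simp only [Matrix.mul_apply, map_sum, Derivation.leibniz, smul_eq_mul,
      Matrix.transpose_apply, Finset.sum_add_distrib] at this
    have h0 : D ((1 : Matrix (Fin q) (Fin q) R) b a) = 0 := by
      rw [Matrix.one_apply]; split_ifs <;> simp
    rw [h0] at this
    simp only [hW, Matrix.transpose_apply, Matrix.neg_apply, Matrix.mul_apply, Matrix.map_apply]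
    rw [eq_neg_iff_add_eq_zero, ← this, add_comm]
    exact congrArg₂ (· + ·) (Finset.sum_congr rfl fun x _ => mul_comm _ _)
      (Finset.sum_congr rfl fun x _ => mul_comm _ _)
  have h1 : ∑ j, ∑ a, D (A j a) * (A * (Aᵀ * (M * A))) j a = Matrix.trace (W * (Aᵀ * (M * A))) := by
    rw [hW, Matrix.mul_assoc, Matrix.trace, Finset.sum_comm]
    refine Finset.sum_congr rfl fun a _ => ?_
    rw [Matrix.diag_apply, Matrix.mul_apply]
    simp [Matrix.transpose_apply]
  set K := Aᵀ * (M * A) with hK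
  have hKs : Kᵀ = K := by
    simp only [hK, Matrix.transpose_mul, Matrix.transpose_transpose, hM, Matrix.mul_assoc]
  have h2 : Matrix.trace (W * K) = - Matrix.trace (W * K) := by
    conv_lhs => rw [← Matrix.trace_transpose, Matrix.transpose_mul, hKs, hsk, Matrix.trace_mul_comm]
    simp
  rw [h1]
  exact self_eq_neg.mp h2

theorem deriv_fR' {R : Type*} [CommRing R] [NoZeroDivisors R] [CharZero R]
    (D : Derivation ℤ R R) {N : ℕ} {I r : Fin N → ℕ}
    (X : ((n : Fin N) → Fin (I n)) → R) (hX : ∀ i, D (X i) = 0)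
    (A : (n : Fin N) → Matrix (Fin (I n)) (Fin (r n)) R) (hA : ∀ n, (A n)ᵀ * A n = 1) :
    D (fR X A) = 2 * ∑ n, ∑ j, ∑ a, D (A n j a) * gR X A n j a := by
  rw [deriv_fR D X hX]
  congr 1
  refine Finset.sum_congr rfl fun n _ => ?_
  have := skew_cancel D (A n) (hA n) (GR X A n * (GR X A n)ᵀ) (by simp [Matrix.transpose_mul])
  rw [← sub_eq_zero, ← this, ← Finset.sum_sub_distrib]
  refine Finset.sum_congr rfl fun j _ => ?_
  rw [← Finset.sum_sub_distrib]
  refine Finset.sum_congr rfl fun a _ => ?_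
  rw [gR, Matrix.sub_apply]; ring

end HOOI


namespace HOOI

def toIntDer {R : Type*} [CommRing R] (d : R →+ R) (h : ∀ a b, d (a * b) = a • d b + b • d a) :
    Derivation ℤ R R :=
  Derivation.mk' d.toIntLinearMap h

theorem entry_le_one {p q : ℕ} (A : Matrix (Fin p) (Fin q) ℝ) (h : Aᵀ * A = 1) (i : Fin p) (a : Fin q) :
    |A i a| ≤ 1 := by
  have h1 := congrFun (congrFun h a) a
  rw [Matrix.mul_apply, Matrix.one_apply_eq] at h1
  simp only [Matrix.transpose_apply] at h1
  have : A i a * A i a ≤ 1 := by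
    rw [← h1]
    exact Finset.single_le_sum (f := fun x => A x a * A x a) (fun x _ => mul_self_nonneg _) (Finset.mem_univ i)
  exact abs_le_one_iff_mul_self_le_one.mpr this

theorem adjoin_bound {V : Type*} (T : Set (V → ℂ)) (β : V → ℝ) (hβ : ∀ v, 0 ≤ β v)
    (hT : ∀ s ∈ T, ∀ v, ‖s v‖ ≤ 1 + β v) (s : V → ℂ) (hs : s ∈ Algebra.adjoin ℂ T) :
    ∃ C : ℝ, 0 ≤ C ∧ ∃ D : ℕ, ∀ v, ‖s v‖ ≤ C * (1 + β v) ^ D := by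
  induction hs using Algebra.adjoin_induction with
  | mem x hx => exact ⟨1, by norm_num, 1, fun v => by simpa using hT x hx v⟩
  | algebraMap c => exact ⟨‖c‖, norm_nonneg _, 0, fun v => by simp⟩
  | add x y _ _ hx hy =>
    obtain ⟨C, hC, D, h⟩ := hx
    obtain ⟨C', hC', D', h'⟩ := hy
    refine ⟨C + C', by positivity, D + D', fun v => ?_⟩
    have h1 : (1:ℝ) ≤ 1 + β v := by linarith [hβ v]
    calc ‖x v + y v‖ ≤ ‖x v‖ + ‖y v‖ := norm_add_le _ _
      _ ≤ C * (1 + β v) ^ D + C' * (1 + β v) ^ D' := add_le_add (h v) (h' v)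
      _ ≤ C * (1 + β v) ^ (D + D') + C' * (1 + β v) ^ (D + D') := by
        gcongr <;> first | exact h1 | omega
      _ = _ := by ring
  | mul x y _ _ hx hy =>
    obtain ⟨C, hC, D, h⟩ := hx
    obtain ⟨C', hC', D', h'⟩ := hy
    refine ⟨C * C', by positivity, D + D', fun v => ?_⟩
    calc ‖x v * y v‖ = ‖x v‖ * ‖y v‖ := norm_mul _ _
      _ ≤ (C * (1 + β v) ^ D) * (C' * (1 + β v) ^ D') :=
        mul_le_mul (h v) (h' v) (norm_nonneg _) ((norm_nonneg _).trans (h v))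
      _ = _ := by ring

theorem ofReal_fR {N : ℕ} {I r : Fin N → ℕ} (X : ((n : Fin N) → Fin (I n)) → ℝ)
    (A : (n : Fin N) → Matrix (Fin (I n)) (Fin (r n)) ℝ) :
    fR (fun i => (X i : ℂ)) (mapT (fun x : ℝ => (x : ℂ)) A) = ((fval X A : ℝ) : ℂ) :=
  fR_map Complex.ofRealHom X A

theorem ofReal_gR {N : ℕ} {I r : Fin N → ℕ} (X : ((n : Fin N) → Fin (I n)) → ℝ)
    (A : (n : Fin N) → Matrix (Fin (I n)) (Fin (r n)) ℝ) (n j a) :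
    gR (fun i => (X i : ℂ)) (mapT (fun x : ℝ => (x : ℂ)) A) n j a = ((gR X A n j a : ℝ) : ℂ) := by
  have := gR_map Complex.ofRealHom X A n
  exact congrFun (congrFun this j) a

theorem loj {N : ℕ} {I r : Fin N → ℕ} (X : ((n : Fin N) → Fin (I n)) → ℝ) (t0 : ℝ) :
    ∃ C : ℝ, 0 < C ∧ ∃ D : ℕ, 1 ≤ D ∧
      ∀ A : (n : Fin N) → Matrix (Fin (I n)) (Fin (r n)) ℝ, TFeas A → fval X A ≠ t0 →
      1 ≤ |t0 - fval X A| * (C * (1 + (∑ n, ∑ j, ∑ a, |gR X A n j a|) / |t0 - fval X A|) ^ D) := by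
  classical
  let V := {A : (n : Fin N) → Matrix (Fin (I n)) (Fin (r n)) ℝ // TFeas A ∧ fval X A ≠ t0}
  let xf : (Σ n, Fin (I n) × Fin (r n)) → V → ℂ := fun p v => ((v.1 p.1 p.2.1 p.2.2 : ℝ) : ℂ)
  let bf : (Σ n, Fin (I n) × Fin (r n)) → V → ℂ :=
    fun p v => ((gR X v.1 p.1 p.2.1 p.2.2 / (t0 - fval X v.1) : ℝ) : ℂ)
  let T : Set (V → ℂ) := Set.range xf ∪ Set.range bf
  have hTfin : T.Finite := (Set.finite_range _).union (Set.finite_range _)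
  let S := Algebra.adjoin ℂ T
  have hxS : ∀ p, xf p ∈ S := fun p => Algebra.subset_adjoin (Or.inl ⟨p, rfl⟩)
  have hbS : ∀ p, bf p ∈ S := fun p => Algebra.subset_adjoin (Or.inr ⟨p, rfl⟩)
  let AS : (n : Fin N) → Matrix (Fin (I n)) (Fin (r n)) S := fun n => Matrix.of fun j a => ⟨xf ⟨n, j, a⟩, hxS _⟩
  let bS : (n : Fin N) → Matrix (Fin (I n)) (Fin (r n)) S := fun n => Matrix.of fun j a => ⟨bf ⟨n, j, a⟩, hbS _⟩
  let XS : ((n : Fin N) → Fin (I n)) → S := fun i => algebraMap ℂ S (X i : ℂ)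
  let ev : V → S →+* ℂ := fun v => (Pi.evalRingHom (fun _ => ℂ) v).comp S.subtype
  have hext : ∀ x y : S, (∀ v, ev v x = ev v y) → x = y := fun x y h =>
    Subtype.ext (funext h)
  have hevA : ∀ v, mapT (ev v) AS = mapT (fun x : ℝ => (x : ℂ)) v.1 := fun v => rfl
  have hevX : ∀ v, (fun i => ev v (XS i)) = fun i => (X i : ℂ) := fun v => rfl
  have hevf : ∀ v, ev v (fR XS AS) = ((fval X v.1 : ℝ) : ℂ) := by
    intro v
    rw [← fR_map, hevA, hevX, ofReal_fR]
  have hevg : ∀ v n j a, ev v (gR XS AS n j a) = ((gR X v.1 n j a : ℝ) : ℂ) := by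
    intro v n j a
    have := gR_map (ev v) XS AS n
    rw [hevA, hevX] at this
    have h2 := congrFun (congrFun this j) a
    rw [ofReal_gR] at h2
    exact h2.symm
  let F : S := algebraMap ℂ S (t0 : ℂ) - fR XS AS
  have hevF : ∀ v, ev v F = ((t0 - fval X v.1 : ℝ) : ℂ) := by
    intro v
    have : ev v (algebraMap ℂ S (t0 : ℂ)) = t0 := rfl
    simp only [F]
    rw [map_sub, this, hevf]; push_cast; rfl
  have hne : ∀ v : V, t0 - fval X v.1 ≠ 0 := fun v => sub_ne_zero.mpr v.2.2.symm
  have hFne : ∀ v, ev v F ≠ 0 := by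
    intro v; rw [hevF]; exact_mod_cast hne v
  have hFnz : F ∈ nonZeroDivisors S := by
    rw [mem_nonZeroDivisors_iff_right]
    intro y hy
    refine hext _ _ fun v => ?_
    have := congrArg (ev v) hy
    rw [map_mul, map_zero] at this
    rw [map_zero]
    exact (mul_eq_zero.mp this).resolve_right (hFne v)
  have hg : ∀ n j a, gR XS AS n j a = F * bS n j a := by
    intro n j a
    refine hext _ _ fun v => ?_
    have : ev v (bS n j a) = ((gR X v.1 n j a / (t0 - fval X v.1) : ℝ) : ℂ) := rfl
    rw [map_mul, hevg, hevF, this, ← Complex.ofReal_mul, mul_div_cancel₀ _ (hne v)]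
  have hAo : ∀ n, (AS n)ᵀ * AS n = 1 := by
    intro n
    ext1 a b
    refine hext _ _ fun v => ?_
    have h1 := congrFun (congrFun (v.2.1 n) a) b
    rw [Matrix.mul_apply, map_sum]
    have h2 : ∀ j, ev v ((AS n)ᵀ a j * AS n j b) = (((v.1 n)ᵀ a j * v.1 n j b : ℝ) : ℂ) := by
      intro j; rw [map_mul]; push_cast; rfl
    simp only [h2]
    rw [← Complex.ofReal_sum, ← Matrix.mul_apply, h1, Matrix.one_apply, Matrix.one_apply]
    split_ifs <;> simp
  have hft : Algebra.FiniteType ℂ S := by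
    have : S.FG := ⟨hTfin.toFinset, by simp [S]⟩
    exact S.fg_iff_finiteType.mp this
  have hunit : IsUnit F := by
    by_contra hFu
    obtain ⟨ψ, hψ1, hψ2⟩ := curve_sel' (k := ℂ) F hFnz hFu
    let D := toIntDer (R := PowerSeries ℂ) (PowerSeries.derivative ℂ : PowerSeries ℂ →ₗ[ℂ] PowerSeries ℂ).toAddMonoidHom
      (fun a b => Derivation.leibniz (PowerSeries.derivative ℂ) a b)
    have hDal : ∀ c : ℂ, D (algebraMap ℂ _ c) = 0 := fun c => Derivation.map_algebraMap (PowerSeries.derivative ℂ) c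
    have hX : ∀ i, D (ψ (XS i)) = 0 := fun i => by
      simp only [XS]; rw [AlgHom.commutes]; exact hDal _
    have hA' : ∀ n, (mapT ψ AS n)ᵀ * mapT ψ AS n = 1 := by
      intro n
      have := congrArg (fun Z => Z.map ψ) (hAo n)
      simp only [Matrix.map_mul] at this
      rw [Matrix.map_one _ (map_zero ψ) (map_one ψ)] at this
      exact this
    have : CharZero (PowerSeries ℂ) := algebraRat.charZero _
    have hD := deriv_fR' (R := PowerSeries ℂ) D (fun i => ψ (XS i)) hX (mapT ψ AS) hA'
    have hf' := fR_map (ψ : S →+* PowerSeries ℂ) XS AS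
    have hg' : ∀ n j a, gR (fun i => ψ (XS i)) (mapT ψ AS) n j a = ψ F * ψ (bS n j a) := by
      intro n j a
      rw [← map_mul, ← hg]
      exact congrFun (congrFun (gR_map (ψ : S →+* PowerSeries ℂ) XS AS n) j) a
    have hD2 : D (ψ F) = - D (fR (fun i => ψ (XS i)) (mapT ψ AS)) := by
      have : ψ F = algebraMap ℂ _ (t0 : ℂ) - fR (fun i => ψ (XS i)) (mapT ψ AS) := by
        have h3 : fR (fun i => ψ (XS i)) (mapT ψ AS) = ψ (fR XS AS) := hf'
        rw [h3]
        simp only [F]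
        rw [map_sub, AlgHom.commutes]
      rw [this, map_sub, hDal, zero_sub]
    refine ps_no_log (ψ F) (- (2 * ∑ n, ∑ j, ∑ a, D (mapT ψ AS n j a) * ψ (bS n j a))) hψ1 hψ2 ?_
    change D (ψ F) = _
    rw [hD2, hD]
    simp only [hg', Finset.mul_sum, mul_neg]
    congr 1
    refine Finset.sum_congr rfl fun n _ => Finset.sum_congr rfl fun j _ => Finset.sum_congr rfl fun a _ => ?_
    ring
  obtain ⟨y, hy⟩ := hunit.exists_right_inv
  let β : V → ℝ := fun v => (∑ n, ∑ j, ∑ a, |gR X v.1 n j a|) / |t0 - fval X v.1|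
  have hβ : ∀ v, 0 ≤ β v := fun v => by positivity
  obtain ⟨C, hC, D, hCD⟩ := adjoin_bound T β hβ (by
    rintro s (⟨⟨n, j, a⟩, rfl⟩ | ⟨⟨n, j, a⟩, rfl⟩) v
    · have : ‖xf ⟨n, j, a⟩ v‖ = |v.1 n j a| := Complex.norm_real _
      rw [this]
      linarith [entry_le_one (v.1 n) (v.2.1 n) j a, hβ v]
    · have : ‖bf ⟨n, j, a⟩ v‖ = |gR X v.1 n j a / (t0 - fval X v.1)| := Complex.norm_real _
      rw [this, abs_div]
      have h1 : |gR X v.1 n j a| ≤ ∑ n, ∑ j, ∑ a, |gR X v.1 n j a| := by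
        refine le_trans ?_ (Finset.single_le_sum (f := fun n => ∑ j, ∑ a, |gR X v.1 n j a|) (fun _ _ => by positivity) (Finset.mem_univ n))
        refine le_trans ?_ (Finset.single_le_sum (f := fun j => ∑ a, |gR X v.1 n j a|) (fun _ _ => by positivity) (Finset.mem_univ j))
        exact (Finset.single_le_sum (f := fun a => |gR X v.1 n j a|) (fun _ _ => by positivity) (Finset.mem_univ a))
      have h2 : |gR X v.1 n j a| / |t0 - fval X v.1| ≤ β v := by
        simp only [β]; gcongr
      linarith) y.1 y.2
  refine ⟨C + 1, by linarith, D + 1, by omega, fun A hA hfA => ?_⟩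
  have h1 := hCD ⟨A, hA, hfA⟩
  have h2 := congrArg (ev ⟨A, hA, hfA⟩) hy
  rw [map_mul, map_one, hevF] at h2
  have h3 := congrArg norm h2
  rw [norm_mul, Complex.norm_real, norm_one, Real.norm_eq_abs] at h3
  refine h3.symm.trans_le ?_
  refine mul_le_mul_of_nonneg_left (le_trans h1 ?_) (abs_nonneg _)
  have h4 := hβ ⟨A, hA, hfA⟩
  change C * (1 + β ⟨A, hA, hfA⟩) ^ D ≤ (C + 1) * (1 + β ⟨A, hA, hfA⟩) ^ (D + 1)
  gcongr
  · linarith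
  · linarith
  · omega

end HOOI


namespace HOOI

structure Gap {p : ℕ} (M P : Matrix (Fin p) (Fin p) ℝ) (a b : ℝ) : Prop where
  comm : P * M = M * P
  lo : ∀ x : Fin p → ℝ, P *ᵥ x = x → a * (x ⬝ᵥ x) ≤ x ⬝ᵥ (M *ᵥ x)
  hi : ∀ x : Fin p → ℝ, P *ᵥ x = 0 → x ⬝ᵥ (M *ᵥ x) ≤ b * (x ⬝ᵥ x)

theorem trace_cols {p q : ℕ} (M : Matrix (Fin p) (Fin p) ℝ) (Y : Matrix (Fin p) (Fin q) ℝ) :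
    Matrix.trace (Yᵀ * (M * Y)) = ∑ i, (fun j => Y j i) ⬝ᵥ (M *ᵥ fun j => Y j i) := by
  simp [Matrix.trace, Matrix.mul_apply, dotProduct, Matrix.mulVec]

theorem trace_cols1 {p q : ℕ} (Y : Matrix (Fin p) (Fin q) ℝ) :
    Matrix.trace (Yᵀ * Y) = ∑ i, (fun j => Y j i) ⬝ᵥ (fun j => Y j i) := by
  simp [Matrix.trace, Matrix.mul_apply, dotProduct]

theorem Gap.lo_mat {p q : ℕ} {M P : Matrix (Fin p) (Fin p) ℝ} {a b : ℝ} (h : Gap M P a b)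
    (Y : Matrix (Fin p) (Fin q) ℝ) (hY : P * Y = Y) :
    a * Matrix.trace (Yᵀ * Y) ≤ Matrix.trace (Yᵀ * (M * Y)) := by
  rw [trace_cols, trace_cols1, Finset.mul_sum]
  refine Finset.sum_le_sum fun i _ => h.lo _ ?_
  funext j
  exact congrFun (congrFun hY j) i

theorem Gap.hi_mat {p q : ℕ} {M P : Matrix (Fin p) (Fin p) ℝ} {a b : ℝ} (h : Gap M P a b)
    (Y : Matrix (Fin p) (Fin q) ℝ) (hY : P * Y = 0) :
    Matrix.trace (Yᵀ * (M * Y)) ≤ b * Matrix.trace (Yᵀ * Y) := by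
  rw [trace_cols, trace_cols1, Finset.mul_sum]
  refine Finset.sum_le_sum fun i _ => h.hi _ ?_
  funext j
  exact congrFun (congrFun hY j) i

theorem froSq_trace {ι κ : Type*} [Fintype ι] [Fintype κ] (Y : Matrix ι κ ℝ) :
    froSq Y = Matrix.trace (Yᵀ * Y) := by
  simp only [froSq, Matrix.trace, Matrix.diag_apply, Matrix.mul_apply, Matrix.transpose_apply]
  rw [Finset.sum_comm]
  simp only [pow_two]

theorem proj_facts {p q : ℕ} (B : Matrix (Fin p) (Fin q) ℝ) (hB : Bᵀ * B = 1) :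
    (B * Bᵀ)ᵀ = B * Bᵀ ∧ (B * Bᵀ) * (B * Bᵀ) = B * Bᵀ ∧ Matrix.trace (B * Bᵀ) = q := by
  refine ⟨by simp, ?_, ?_⟩
  · rw [Matrix.mul_assoc, ← Matrix.mul_assoc Bᵀ, hB, Matrix.one_mul]
  · rw [Matrix.trace_mul_comm, hB]; simp

theorem growth_PQ {p : ℕ} {M P Q : Matrix (Fin p) (Fin p) ℝ} {a b t : ℝ} (h : Gap M P a b)
    (hP : Pᵀ = P) (hPP : P * P = P) (hPt : P.trace = t)
    (hQ : Qᵀ = Q) (hQQ : Q * Q = Q) (hQt : Q.trace = t) :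
    (a - b) / 2 * froSq (P - Q) ≤ Matrix.trace (M * P) - Matrix.trace (M * Q) := by
  have hc := h.comm
  have hPM : P * (M * P) = M * P := by rw [← Matrix.mul_assoc, hc, Matrix.mul_assoc, hPP]
  have e1 : froSq (P - Q) = 2 * t - 2 * Matrix.trace (P * Q) := by
    rw [froSq_trace, Matrix.transpose_sub, hP, hQ]
    simp only [Matrix.sub_mul, Matrix.mul_sub, hPP, hQQ, Matrix.trace_sub, hPt, hQt,
      Matrix.trace_mul_comm Q P]
    ring
  have e2 : Matrix.trace ((P - P * Q)ᵀ * (P - P * Q)) = t - Matrix.trace (P * Q) := by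
    simp only [Matrix.transpose_sub, Matrix.transpose_mul, hP, hQ, Matrix.sub_mul, Matrix.mul_sub,
      Matrix.trace_sub]
    have h1 : P * (P * Q) = P * Q := by rw [← Matrix.mul_assoc, hPP]
    have h2 : Matrix.trace (Q * P * P) = Matrix.trace (P * Q) := by
      rw [Matrix.mul_assoc, hPP, Matrix.trace_mul_comm]
    have h3 : Matrix.trace (Q * P * (P * Q)) = Matrix.trace (P * Q) := by
      rw [Matrix.mul_assoc, h1, Matrix.trace_mul_comm, Matrix.mul_assoc, hQQ]
    rw [h1, h2, h3, hPP, hPt]; ring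
  have e3 : Matrix.trace ((Q - P * Q)ᵀ * (Q - P * Q)) = t - Matrix.trace (P * Q) := by
    simp only [Matrix.transpose_sub, Matrix.transpose_mul, hP, hQ, Matrix.sub_mul, Matrix.mul_sub,
      Matrix.trace_sub]
    have h1 : Matrix.trace (Q * (P * Q)) = Matrix.trace (P * Q) := by
      rw [Matrix.trace_mul_comm, Matrix.mul_assoc, hQQ]
    have h2 : Matrix.trace (Q * P * Q) = Matrix.trace (P * Q) := by
      rw [Matrix.mul_assoc, h1]
    have h3 : Matrix.trace (Q * P * (P * Q)) = Matrix.trace (P * Q) := by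
      rw [Matrix.mul_assoc, ← Matrix.mul_assoc P, hPP, h1]
    rw [h1, h2, h3, hQQ, hQt]; ring
  have e4 : Matrix.trace ((P - P * Q)ᵀ * (M * (P - P * Q))) =
      Matrix.trace (M * P) - Matrix.trace (M * P * Q) := by
    simp only [Matrix.transpose_sub, Matrix.transpose_mul, hP, hQ, Matrix.sub_mul, Matrix.mul_sub,
      Matrix.trace_sub]
    have h1 : P * (M * (P * Q)) = M * P * Q := by
      rw [← Matrix.mul_assoc M, ← Matrix.mul_assoc, hPM]
    have h2 : Matrix.trace (Q * P * (M * P)) = Matrix.trace (M * P * Q) := by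
      rw [Matrix.mul_assoc, hPM, Matrix.trace_mul_comm]
    have h3 : Matrix.trace (Q * P * (M * (P * Q))) = Matrix.trace (M * P * Q) := by
      rw [Matrix.mul_assoc, h1, Matrix.trace_mul_comm, Matrix.mul_assoc, hQQ]
    rw [h1, h2, h3, hPM]; ring
  have e5 : Matrix.trace ((Q - P * Q)ᵀ * (M * (Q - P * Q))) =
      Matrix.trace (M * Q) - Matrix.trace (M * P * Q) := by
    simp only [Matrix.transpose_sub, Matrix.transpose_mul, hP, hQ, Matrix.sub_mul, Matrix.mul_sub,
      Matrix.trace_sub]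
    have h0 : Matrix.trace (Q * (M * Q)) = Matrix.trace (M * Q) := by
      rw [Matrix.trace_mul_comm, Matrix.mul_assoc, hQQ]
    have h1 : Matrix.trace (Q * (M * (P * Q))) = Matrix.trace (M * P * Q) := by
      rw [Matrix.trace_mul_comm, Matrix.mul_assoc, Matrix.mul_assoc, hQQ, Matrix.mul_assoc]
    have h2 : Matrix.trace (Q * P * (M * Q)) = Matrix.trace (M * P * Q) := by
      rw [Matrix.trace_mul_comm, Matrix.mul_assoc M, ← Matrix.mul_assoc Q, hQQ, Matrix.trace_mul_comm,
        Matrix.mul_assoc Q, hc, Matrix.trace_mul_comm]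
    have h3 : Matrix.trace (Q * P * (M * (P * Q))) = Matrix.trace (M * P * Q) := by
      rw [Matrix.mul_assoc, ← Matrix.mul_assoc M, ← Matrix.mul_assoc P, hPM, Matrix.trace_mul_comm,
        Matrix.mul_assoc, hQQ]
    rw [h0, h1, h2, h3]; ring
  have l1 := h.lo_mat (P - P * Q) (by rw [Matrix.mul_sub, ← Matrix.mul_assoc, hPP])
  have l2 := h.hi_mat (Q - P * Q) (by rw [Matrix.mul_sub, ← Matrix.mul_assoc, hPP, sub_self])
  rw [e2, e4] at l1
  rw [e3, e5] at l2
  rw [e1]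
  nlinarith

theorem trace_BMB {p q : ℕ} (M : Matrix (Fin p) (Fin p) ℝ) (B : Matrix (Fin p) (Fin q) ℝ) :
    Matrix.trace (Bᵀ * (M * B)) = Matrix.trace (M * (B * Bᵀ)) := by
  rw [Matrix.trace_mul_comm, Matrix.mul_assoc]

/-- Rotation curve -/
theorem rot_orth {p q : ℕ} (B : Matrix (Fin p) (Fin q) ℝ) (hB : Bᵀ * B = 1)
    (c : Fin q → ℝ) (w : Fin p → ℝ) (hc : c ⬝ᵥ c = 1) (hw : w ⬝ᵥ w = 1) (hBw : Bᵀ *ᵥ w = 0)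
    (α s : ℝ) (hα : α ^ 2 + s ^ 2 = 1) :
    let B' := B + Matrix.vecMulVec ((α - 1) • (B *ᵥ c) + s • w) c
    B'ᵀ * B' = 1 ∧
    B' * B'ᵀ = B * Bᵀ - Matrix.vecMulVec (B *ᵥ c) (B *ᵥ c) +
      Matrix.vecMulVec (α • (B *ᵥ c) + s • w) (α • (B *ᵥ c) + s • w) := by
  intro B'
  set u := B *ᵥ c with hu
  have hBu : Bᵀ *ᵥ u = c := by rw [hu, Matrix.mulVec_mulVec, hB, Matrix.one_mulVec]
  have huu : u ⬝ᵥ u = 1 := by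
    rw [← hc, ← hBu, Matrix.mulVec_transpose, ← Matrix.dotProduct_mulVec, ← Matrix.mulVec_transpose,
      hBu]
  have huw : u ⬝ᵥ w = 0 := by
    rw [hu, dotProduct_comm, Matrix.dotProduct_mulVec, ← Matrix.mulVec_transpose, hBw,
      zero_dotProduct]
  set z := (α - 1) • u + s • w with hz
  have hBz : Bᵀ *ᵥ z = (α - 1) • c := by
    rw [hz, Matrix.mulVec_add, Matrix.mulVec_smul, Matrix.mulVec_smul, hBu, hBw, smul_zero, add_zero]
  have hzz : z ⬝ᵥ z = (α - 1) ^ 2 + s ^ 2 := by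
    rw [hz]
    simp only [add_dotProduct, dotProduct_add, smul_dotProduct, dotProduct_smul, huu, huw, hw,
      dotProduct_comm w u, smul_eq_mul]
    ring
  have hzB : z ᵥ* B = (α - 1) • c := by rw [← Matrix.mulVec_transpose, hBz]
  have hcB : c ᵥ* Bᵀ = u := by rw [Matrix.vecMul_transpose]
  have hB' : B' = B + Matrix.vecMulVec z c := rfl
  have h1 : α • u + s • w = u + z := by rw [hz]; module
  rw [h1, hB', Matrix.transpose_add, Matrix.transpose_vecMulVec]
  clear_value z u
  constructor
  · rw [Matrix.add_mul, Matrix.mul_add, Matrix.mul_add, hB, Matrix.mul_vecMulVec, Matrix.vecMulVec_mul,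
      hBz, hzB, Matrix.vecMulVec_mul_vecMulVec, hzz]
    simp only [Matrix.smul_vecMulVec, Matrix.vecMulVec_smul]
    have : ∀ C : Matrix (Fin q) (Fin q) ℝ, 1 + (α - 1) • C + ((α - 1) • C + ((α - 1) ^ 2 + s ^ 2) • C)
        = 1 + (α ^ 2 + s ^ 2 - 1) • C := by intro C; module
    rw [this, hα]; simp
  · rw [Matrix.add_mul, Matrix.mul_add, Matrix.mul_add, Matrix.mul_vecMulVec, Matrix.vecMulVec_mul,
      ← hu, hcB, Matrix.vecMulVec_mul_vecMulVec, hc]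
    simp only [one_smul, Matrix.add_vecMulVec, Matrix.vecMulVec_add]
    abel

theorem froSq_vecMulVec {p q : ℕ} (z : Fin p → ℝ) (c : Fin q → ℝ) :
    froSq (Matrix.vecMulVec z c) = (z ⬝ᵥ z) * (c ⬝ᵥ c) := by
  simp only [froSq, Matrix.vecMulVec_apply, dotProduct, Finset.sum_mul_sum]
  exact Finset.sum_congr rfl fun i _ => Finset.sum_congr rfl fun j _ => by ring

theorem first_order_unit {p q : ℕ} (M : Matrix (Fin p) (Fin p) ℝ) (hM : Mᵀ = M)
    (B : Matrix (Fin p) (Fin q) ℝ) (hB : Bᵀ * B = 1)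
    (ε : ℝ) (hε : 0 < ε)
    (hmax : ∀ B' : Matrix (Fin p) (Fin q) ℝ, B'ᵀ * B' = 1 → froSq (B' - B) ≤ ε →
      Matrix.trace (M * (B' * B'ᵀ)) ≤ Matrix.trace (M * (B * Bᵀ)))
    (c : Fin q → ℝ) (w : Fin p → ℝ) (hc : c ⬝ᵥ c = 1) (hw : w ⬝ᵥ w = 1) (hBw : Bᵀ *ᵥ w = 0) :
    (B *ᵥ c) ⬝ᵥ (M *ᵥ w) ≤ 0 ∧ ((B *ᵥ c) ⬝ᵥ (M *ᵥ w) = 0 →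
      w ⬝ᵥ (M *ᵥ w) ≤ (B *ᵥ c) ⬝ᵥ (M *ᵥ (B *ᵥ c))) := by
  set u := B *ᵥ c with hu
  have hBu : Bᵀ *ᵥ u = c := by rw [hu, Matrix.mulVec_mulVec, hB, Matrix.one_mulVec]
  have huu : u ⬝ᵥ u = 1 := by
    rw [← hc, ← hBu, Matrix.mulVec_transpose, ← Matrix.dotProduct_mulVec, ← Matrix.mulVec_transpose,
      hBu]
  have huw : u ⬝ᵥ w = 0 := by
    rw [hu, dotProduct_comm, Matrix.dotProduct_mulVec, ← Matrix.mulVec_transpose, hBw,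
      zero_dotProduct]
  have hwu : w ⬝ᵥ (M *ᵥ u) = u ⬝ᵥ (M *ᵥ w) := by
    rw [Matrix.dotProduct_mulVec, dotProduct_comm, ← Matrix.mulVec_transpose, hM]
  set γ := u ⬝ᵥ (M *ᵥ w)
  set β := w ⬝ᵥ (M *ᵥ w)
  set κ := u ⬝ᵥ (M *ᵥ u)
  -- key inequality
  have key : ∀ t : ℝ, 0 < t → 4 * t ^ 2 ≤ ε → t * (β - κ) + (1 - t ^ 2) * γ ≤ 0 := by
    intro t ht htε
    have hpos : (0:ℝ) < 1 + t ^ 2 := by positivity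
    set α := (1 - t ^ 2) / (1 + t ^ 2) with hα
    set s := 2 * t / (1 + t ^ 2) with hs
    have has : α ^ 2 + s ^ 2 = 1 := by rw [hα, hs]; field_simp; ring
    obtain ⟨h1, h2⟩ := rot_orth B hB c w hc hw hBw α s has
    have h3 := hmax _ h1 (by
      rw [add_sub_cancel_left, froSq_vecMulVec, hc, mul_one, ← hu]
      simp only [add_dotProduct, dotProduct_add, smul_dotProduct, dotProduct_smul, huu, huw, hw,
        dotProduct_comm w u, smul_eq_mul]
      have : (α - 1) * ((α - 1) * 1) + s * ((α - 1) * 0) + ((α - 1) * (s * 0) + s * (s * 1))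
        = 4 * t ^ 2 / (1 + t ^ 2) := by rw [hα, hs]; field_simp; ring
      have h5 : 4 * t ^ 2 / (1 + t ^ 2) ≤ 4 * t ^ 2 := div_le_self (by positivity) (by nlinarith)
      linarith)
    rw [h2, ← hu] at h3
    simp only [Matrix.mul_add, Matrix.mul_sub, Matrix.trace_add, Matrix.trace_sub,
      Matrix.mul_vecMulVec, Matrix.trace_vecMulVec] at h3
    have h4 : (M *ᵥ (α • u + s • w)) ⬝ᵥ (α • u + s • w) = α ^ 2 * κ + 2 * α * s * γ + s ^ 2 * β := by
      rw [dotProduct_comm]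
      simp only [Matrix.mulVec_add, Matrix.mulVec_smul, add_dotProduct, dotProduct_add,
        smul_dotProduct, dotProduct_smul, smul_eq_mul, hwu]
      change α * (α * κ + s * γ) + s * (α * γ + s * β) = _
      ring
    rw [h4, dotProduct_comm (M *ᵥ u) u] at h3
    change _ - κ + _ ≤ _ at h3
    have h50 : α ^ 2 * κ = κ - s ^ 2 * κ := by rw [eq_sub_of_add_eq has]; ring
    have h5 : s * (2 * α * γ + s * (β - κ)) ≤ 0 := by
      have : s * (2 * α * γ + s * (β - κ)) = 2 * α * s * γ + s ^ 2 * β - s ^ 2 * κ := by ring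
      linarith
    have hspos : 0 < s := by positivity
    have h6 : 2 * α * γ + s * (β - κ) ≤ 0 := by
      by_contra hcon
      push Not at hcon
      have := mul_pos hspos hcon
      linarith
    have h7 : 2 * α * γ + s * (β - κ) = (2 / (1 + t ^ 2)) * (t * (β - κ) + (1 - t ^ 2) * γ) := by
      rw [hα, hs]; field_simp; ring
    rw [h7] at h6
    have : 0 < 2 / (1 + t ^ 2) := by positivity
    by_contra hcon
    push Not at hcon
    have := mul_pos this hcon
    linarith
  have hev : ∀ᶠ t : ℝ in nhdsWithin 0 (Set.Ioi 0), 0 < t ∧ 4 * t ^ 2 ≤ ε := by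
    have h1 : ∀ᶠ t : ℝ in nhdsWithin 0 (Set.Ioi 0), 0 < t := eventually_mem_nhdsWithin
    have h2 : ∀ᶠ t : ℝ in nhds 0, 4 * t ^ 2 < ε := by
      have : Continuous fun t : ℝ => 4 * t ^ 2 := by fun_prop
      have h3 := this.tendsto 0
      exact h3.eventually (gt_mem_nhds (by simpa using hε))
    filter_upwards [h1, nhdsWithin_le_nhds h2] with t a b
    exact ⟨a, b.le⟩
  constructor
  · have hcont : Continuous fun t : ℝ => t * (β - κ) + (1 - t ^ 2) * γ := by fun_prop
    have h3 : Tendsto (fun t : ℝ => t * (β - κ) + (1 - t ^ 2) * γ) (nhdsWithin 0 (Set.Ioi 0)) (nhds γ) := by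
      have := (hcont.tendsto 0).mono_left (nhdsWithin_le_nhds (s := Set.Ioi 0))
      simpa using this
    refine le_of_tendsto h3 ?_
    filter_upwards [hev] with t ht
    exact key t ht.1 ht.2
  · intro hγ
    obtain ⟨t, ht, ht2⟩ := hev.exists
    have := key t ht ht2
    rw [hγ] at this
    have h2 : t * (β - κ) ≤ 0 := by linarith
    by_contra hcon
    push Not at hcon
    have := mul_pos ht (sub_pos.mpr hcon)
    linarith

theorem first_order {p q : ℕ} (M : Matrix (Fin p) (Fin p) ℝ) (hM : Mᵀ = M)
    (B : Matrix (Fin p) (Fin q) ℝ) (hB : Bᵀ * B = 1)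
    (ε : ℝ) (hε : 0 < ε)
    (hmax : ∀ B' : Matrix (Fin p) (Fin q) ℝ, B'ᵀ * B' = 1 → froSq (B' - B) ≤ ε →
      Matrix.trace (M * (B' * B'ᵀ)) ≤ Matrix.trace (M * (B * Bᵀ)))
    (c : Fin q → ℝ) (w : Fin p → ℝ) (hBw : Bᵀ *ᵥ w = 0) :
    (B *ᵥ c) ⬝ᵥ (M *ᵥ w) = 0 ∧
      (w ⬝ᵥ (M *ᵥ w)) * (c ⬝ᵥ c) ≤ ((B *ᵥ c) ⬝ᵥ (M *ᵥ (B *ᵥ c))) * (w ⬝ᵥ w) := by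
  by_cases hc0 : c = 0
  · subst hc0; simp
  by_cases hw0 : w = 0
  · subst hw0; simp
  have pos : ∀ {k : ℕ} (x : Fin k → ℝ), x ≠ 0 → 0 < x ⬝ᵥ x := fun x hx =>
    lt_of_le_of_ne (by rw [dotProduct]; exact Finset.sum_nonneg fun i _ => mul_self_nonneg _)
      (fun h => hx (dotProduct_self_eq_zero.mp h.symm))
  have hcp := pos c hc0
  have hwp := pos w hw0
  set lc := Real.sqrt (c ⬝ᵥ c)
  set lw := Real.sqrt (w ⬝ᵥ w)
  have hlc : lc ^ 2 = c ⬝ᵥ c := Real.sq_sqrt hcp.le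
  have hlw : lw ^ 2 = w ⬝ᵥ w := Real.sq_sqrt hwp.le
  have hlc0 : 0 < lc := Real.sqrt_pos.mpr hcp
  have hlw0 : 0 < lw := Real.sqrt_pos.mpr hwp
  have norm1 : ∀ {k : ℕ} (x : Fin k → ℝ) (l : ℝ), 0 < l → l ^ 2 = x ⬝ᵥ x →
      (l⁻¹ • x) ⬝ᵥ (l⁻¹ • x) = 1 := by
    intro k x l hl h
    rw [smul_dotProduct, dotProduct_smul, ← h, smul_eq_mul, smul_eq_mul]; field_simp
  have h1 := first_order_unit M hM B hB ε hε hmax (lc⁻¹ • c) (lw⁻¹ • w) (norm1 c lc hlc0 hlc)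
    (norm1 w lw hlw0 hlw) (by rw [Matrix.mulVec_smul, hBw, smul_zero])
  have h2 := first_order_unit M hM B hB ε hε hmax (lc⁻¹ • c) (-(lw⁻¹ • w)) (norm1 c lc hlc0 hlc)
    (by rw [neg_dotProduct_neg]; exact norm1 w lw hlw0 hlw)
    (by rw [Matrix.mulVec_neg, Matrix.mulVec_smul, hBw, smul_zero, neg_zero])
  have h3 : (B *ᵥ (lc⁻¹ • c)) ⬝ᵥ (M *ᵥ (lw⁻¹ • w)) = 0 := by
    have := h2.1
    rw [Matrix.mulVec_neg, dotProduct_neg] at this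
    linarith [h1.1]
  have h4 := h1.2 h3
  simp only [Matrix.mulVec_smul, smul_dotProduct, dotProduct_smul, smul_eq_mul] at h3 h4
  constructor
  · have hne : lc⁻¹ ≠ 0 := inv_ne_zero hlc0.ne'
    have hne2 : lw⁻¹ ≠ 0 := inv_ne_zero hlw0.ne'
    simpa [hne, hne2, hlc0.ne', hlw0.ne'] using h3
  · rw [← hlc, ← hlw]
    have h5 : ∀ x l : ℝ, l⁻¹ * (l⁻¹ * x) = x / l ^ 2 := by intro x l; field_simp
    rw [h5, h5, div_le_div_iff₀ (by positivity) (by positivity)] at h4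
    exact h4

theorem first_order_comm {p q : ℕ} (M : Matrix (Fin p) (Fin p) ℝ) (hM : Mᵀ = M)
    (B : Matrix (Fin p) (Fin q) ℝ) (hB : Bᵀ * B = 1)
    (h : ∀ (c : Fin q → ℝ) (w : Fin p → ℝ), Bᵀ *ᵥ w = 0 → (B *ᵥ c) ⬝ᵥ (M *ᵥ w) = 0) :
    (B * Bᵀ) * M = M * (B * Bᵀ) ∧ M * B = (B * Bᵀ) * (M * B) := by
  have h1 : Bᵀ * (M * (1 - B * Bᵀ)) = 0 := by
    ext a j
    have := h (Pi.single a 1) (fun i => (1 - B * Bᵀ : Matrix (Fin p) (Fin p) ℝ) i j) (by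
      have h2 : Bᵀ * (1 - B * Bᵀ) = 0 := by
        rw [Matrix.mul_sub, ← Matrix.mul_assoc, hB]; simp
      funext b
      exact congrFun (congrFun h2 b) j)
    rw [Matrix.zero_apply, ← this, dotProduct_comm, Matrix.dotProduct_mulVec, dotProduct_comm]
    simp only [single_one_dotProduct]
    rw [← Matrix.mulVec_transpose]
    rfl
  have h2 : (1 - B * Bᵀ) * (M * B) = 0 := by
    have := congrArg Matrix.transpose h1
    simp only [Matrix.transpose_mul, Matrix.transpose_sub, Matrix.transpose_transpose, hM,
      Matrix.transpose_one, Matrix.transpose_zero] at this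
    rw [← this, Matrix.mul_assoc]
  rw [Matrix.sub_mul, Matrix.one_mul, sub_eq_zero] at h2
  rw [Matrix.mul_sub, Matrix.mul_one, Matrix.mul_sub, sub_eq_zero] at h1
  refine ⟨?_, h2⟩
  calc B * Bᵀ * M = B * (Bᵀ * (M * (B * Bᵀ))) := by rw [Matrix.mul_assoc, ← h1]
    _ = (B * Bᵀ * (M * B)) * Bᵀ := by simp only [Matrix.mul_assoc]
    _ = M * (B * Bᵀ) := by rw [← h2, Matrix.mul_assoc]

end HOOI


namespace HOOI

theorem count_hi (l : List ℝ) (hl : l.Pairwise (· ≥ ·)) (q : ℕ) (hq : 1 ≤ q) (hqp : q ≤ l.length) :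
    q ≤ l.countP (fun x => decide (l.getD (q - 1) 0 ≤ x)) := by
  have h1 : q - 1 < l.length := by omega
  have h2 : ∀ x ∈ l.take q, l.getD (q - 1) 0 ≤ x := by
    intro x hx
    obtain ⟨i, hi, rfl⟩ := List.getElem_of_mem hx
    rw [List.length_take] at hi
    rw [List.getElem_take, List.getD_eq_getElem _ _ h1]
    rcases Nat.lt_or_ge i (q - 1) with h | h
    · exact List.pairwise_iff_getElem.mp hl i (q - 1) (by omega) h1 h
    · have : i = q - 1 := by omega
      subst this; exact le_rfl
  calc q = (l.take q).length := by rw [List.length_take]; omega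
    _ = (l.take q).countP (fun x => decide (l.getD (q - 1) 0 ≤ x)) := by
        symm; rw [List.countP_eq_length]; intro x hx; simpa using h2 x hx
    _ ≤ _ := (List.take_sublist q l).countP_le

theorem count_lo (l : List ℝ) (hl : l.Pairwise (· ≥ ·)) (q : ℕ) :
    l.length - q ≤ l.countP (fun x => decide (x ≤ l.getD q 0)) := by
  have h2 : ∀ x ∈ l.drop q, x ≤ l.getD q 0 := by
    intro x hx
    obtain ⟨i, hi, rfl⟩ := List.getElem_of_mem hx
    rw [List.length_drop] at hi
    have h1 : q < l.length := by omega
    rw [List.getElem_drop, List.getD_eq_getElem _ _ h1]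
    rcases Nat.eq_zero_or_pos i with h | h
    · subst h; exact le_rfl
    · exact List.pairwise_iff_getElem.mp hl q (q + i) h1 (by omega) (by omega)
  calc l.length - q = (l.drop q).length := by rw [List.length_drop]
    _ = (l.drop q).countP (fun x => decide (x ≤ l.getD q 0)) := by
        symm; rw [List.countP_eq_length]; intro x hx; simpa using h2 x hx
    _ ≤ _ := (List.drop_sublist q l).countP_le

theorem eigList_facts {m : ℕ} {κ : Type*} [Fintype κ] (Y : Matrix (Fin m) κ ℝ) :
    (eigList Y).Pairwise (· ≥ ·) ∧ (eigList Y).length = m ∧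
    ∀ (P : ℝ → Prop) [DecidablePred P], (eigList Y).countP (fun x => decide (P x)) =
      (Finset.univ.filter fun j => P ((Matrix.isHermitian_mul_conjTranspose_self Y).eigenvalues j)).card := by
  refine ⟨?_, ?_, ?_⟩
  · unfold eigList
    rw [List.pairwise_reverse]
    exact Multiset.pairwise_sort _ _
  · simp [eigList]
  · intro P _
    unfold eigList
    rw [List.countP_reverse, ← Multiset.coe_countP, Multiset.sort_eq, Multiset.countP_map]
    rfl

theorem spectral {p : ℕ} (M : Matrix (Fin p) (Fin p) ℝ) (hM : M.IsHermitian) :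
    ∃ U : Matrix (Fin p) (Fin p) ℝ, U * Uᵀ = 1 ∧ M = U * (Matrix.diagonal hM.eigenvalues * Uᵀ) := by
  refine ⟨hM.eigenvectorUnitary, ?_, ?_⟩
  · have := Matrix.mem_unitaryGroup_iff.mp hM.eigenvectorUnitary.2
    rwa [Matrix.star_eq_conjTranspose, Matrix.conjTranspose_eq_transpose_of_trivial] at this
  · have := hM.spectral_theorem
    rw [Unitary.conjStarAlgAut_apply] at this
    conv_lhs => rw [this]
    rw [Matrix.mul_assoc, Matrix.star_eq_conjTranspose, Matrix.conjTranspose_eq_transpose_of_trivial]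
    rfl

theorem spectral_forms {p : ℕ} (M U : Matrix (Fin p) (Fin p) ℝ) (l : Fin p → ℝ) (hU : U * Uᵀ = 1)
    (h : M = U * (Matrix.diagonal l * Uᵀ)) (x : Fin p → ℝ) :
    x ⬝ᵥ x = ∑ j, (Uᵀ *ᵥ x) j ^ 2 ∧ x ⬝ᵥ (M *ᵥ x) = ∑ j, l j * (Uᵀ *ᵥ x) j ^ 2 := by
  constructor
  · have : x ⬝ᵥ x = (Uᵀ *ᵥ x) ⬝ᵥ (Uᵀ *ᵥ x) := by
      rw [Matrix.dotProduct_mulVec, ← Matrix.mulVec_transpose, Matrix.transpose_transpose,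
        Matrix.mulVec_mulVec, hU, Matrix.one_mulVec]
    rw [this, dotProduct]; simp only [pow_two]
  · rw [h, ← Matrix.mulVec_mulVec, ← Matrix.mulVec_mulVec, Matrix.dotProduct_mulVec,
      ← Matrix.mulVec_transpose, dotProduct]
    refine Finset.sum_congr rfl fun j _ => ?_
    rw [Matrix.mulVec_diagonal]; ring

theorem dot_B {p q : ℕ} (B : Matrix (Fin p) (Fin q) ℝ) (hB : Bᵀ * B = 1) (c : Fin q → ℝ) :
    (B *ᵥ c) ⬝ᵥ (B *ᵥ c) = c ⬝ᵥ c := by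
  rw [Matrix.dotProduct_mulVec, ← Matrix.mulVec_transpose, Matrix.mulVec_mulVec, hB, Matrix.one_mulVec]

theorem dot_Bw {p q : ℕ} (B : Matrix (Fin p) (Fin q) ℝ) (c : Fin q → ℝ) (w : Fin p → ℝ)
    (hw : Bᵀ *ᵥ w = 0) : (B *ᵥ c) ⬝ᵥ w = 0 := by
  rw [dotProduct_comm, Matrix.dotProduct_mulVec, ← Matrix.mulVec_transpose, hw, zero_dotProduct]

theorem dot_self_nonneg {k : ℕ} (x : Fin k → ℝ) : 0 ≤ x ⬝ᵥ x := by
  rw [dotProduct]; exact Finset.sum_nonneg fun i _ => mul_self_nonneg _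

theorem dot_self_pos {k : ℕ} (x : Fin k → ℝ) (hx : x ≠ 0) : 0 < x ⬝ᵥ x :=
  lt_of_le_of_ne (dot_self_nonneg x) (fun h => hx (dotProduct_self_eq_zero.mp h.symm))

theorem form_add {p : ℕ} (M : Matrix (Fin p) (Fin p) ℝ) (hM : Mᵀ = M) (u w : Fin p → ℝ)
    (h : u ⬝ᵥ (M *ᵥ w) = 0) :
    (u + w) ⬝ᵥ (M *ᵥ (u + w)) = u ⬝ᵥ (M *ᵥ u) + w ⬝ᵥ (M *ᵥ w) := by
  have hwu : w ⬝ᵥ (M *ᵥ u) = 0 := by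
    rw [Matrix.dotProduct_mulVec, dotProduct_comm, ← Matrix.mulVec_transpose, hM, h]
  simp only [Matrix.mulVec_add, add_dotProduct, dotProduct_add, h, hwu]
  ring

theorem gap_of_counts {p q : ℕ} (M : Matrix (Fin p) (Fin p) ℝ) (hM : M.IsHermitian)
    (B : Matrix (Fin p) (Fin q) ℝ) (hB : Bᵀ * B = 1) (a b : ℝ)
    (ha : q ≤ (Finset.univ.filter fun j => a ≤ hM.eigenvalues j).card)
    (hb : p - q ≤ (Finset.univ.filter fun j => hM.eigenvalues j ≤ b).card)
    (hfo : ∀ (c : Fin q → ℝ) (w : Fin p → ℝ), Bᵀ *ᵥ w = 0 → (B *ᵥ c) ⬝ᵥ (M *ᵥ w) = 0 ∧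
      (w ⬝ᵥ (M *ᵥ w)) * (c ⬝ᵥ c) ≤ ((B *ᵥ c) ⬝ᵥ (M *ᵥ (B *ᵥ c))) * (w ⬝ᵥ w)) :
    Gap M (B * Bᵀ) a b := by
  classical
  have hMt : Mᵀ = M := by
    have := hM.eq; rwa [Matrix.conjTranspose_eq_transpose_of_trivial] at this
  obtain ⟨U, hU, hspec⟩ := spectral M hM
  set l := hM.eigenvalues
  refine ⟨(first_order_comm M hMt B hB fun c w hw => (hfo c w hw).1).1, ?_, ?_⟩
  · intro u hu
    -- u = B c
    set c := Bᵀ *ᵥ u with hc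
    have hu' : B *ᵥ c = u := by rw [hc, Matrix.mulVec_mulVec, hu]
    have hcc : c ⬝ᵥ c = u ⬝ᵥ u := by rw [← hu', dot_B B hB]
    by_contra hcon
    push Not at hcon
    have hu0 : u ≠ 0 := by rintro rfl; simp at hcon
    have hup := dot_self_pos u hu0
    let Jc := {j : Fin p // ¬ a ≤ l j}
    let T : ((Fin p → ℝ) × ℝ) →ₗ[ℝ] ((Fin q → ℝ) × (Jc → ℝ)) :=
      { toFun := fun xs => (Bᵀ *ᵥ xs.1 - xs.2 • c, fun j => (Uᵀ *ᵥ xs.1) j.1)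
        map_add' := by
          intro x y
          ext i
          · simp [Matrix.mulVec_add, add_mul]; ring
          · simp [Matrix.mulVec_add]
        map_smul' := by
          intro t x
          ext i
          · simp [Matrix.mulVec_smul]; ring
          · simp [Matrix.mulVec_smul] }
    have hker : LinearMap.ker T ≠ ⊥ := by
      apply LinearMap.ker_ne_bot_of_finrank_lt
      have hcard : Fintype.card Jc + (Finset.univ.filter fun j => a ≤ l j).card = p := by
        have h4 : Fintype.card Jc = (Finset.univ.filter fun j => ¬ a ≤ l j).card := Fintype.card_subtype _
        rw [h4, add_comm, Finset.card_filter_add_card_filter_not, Finset.card_univ, Fintype.card_fin]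
      simp only [Module.finrank_prod, Module.finrank_fintype_fun_eq_card, Fintype.card_fin, Module.finrank_self]
      omega
    obtain ⟨⟨x, s⟩, hxs, hne⟩ := (Submodule.ne_bot_iff _).mp hker
    rw [LinearMap.mem_ker] at hxs
    have e1 : Bᵀ *ᵥ x = s • c := sub_eq_zero.mp (congrArg Prod.fst hxs)
    have e2 : ∀ j, ¬ a ≤ l j → (Uᵀ *ᵥ x) j = 0 := fun j hj => congrFun (congrArg Prod.snd hxs) ⟨j, hj⟩
    have hx0 : x ≠ 0 := by
      rintro rfl
      rw [Matrix.mulVec_zero] at e1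
      have hc0 : c ≠ 0 := by
        rintro h0; rw [h0] at hcc; simp at hcc; linarith
      have : s = 0 := by
        rcases smul_eq_zero.mp e1.symm with h | h
        · exact h
        · exact absurd h hc0
      apply hne; rw [this]; rfl
    have hxp := dot_self_pos x hx0
    obtain ⟨f1, f2⟩ := spectral_forms M U l hU hspec x
    have g1 : a * (x ⬝ᵥ x) ≤ x ⬝ᵥ (M *ᵥ x) := by
      rw [f1, f2, Finset.mul_sum]
      refine Finset.sum_le_sum fun j _ => ?_
      by_cases hj : a ≤ l j
      · exact mul_le_mul_of_nonneg_right hj (sq_nonneg _)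
      · rw [e2 j hj]; simp
    set w := x - s • u with hw
    have hBu : Bᵀ *ᵥ u = c := rfl
    have hBw : Bᵀ *ᵥ w = 0 := by
      rw [hw, Matrix.mulVec_sub, Matrix.mulVec_smul, e1, hBu, sub_self]
    have hxw : x = s • u + w := by rw [hw]; abel
    obtain ⟨k1, k2⟩ := hfo c w hBw
    rw [hu'] at k1 k2
    have huw : u ⬝ᵥ w = 0 := by rw [← hu']; exact dot_Bw B c w hBw
    have g2 : x ⬝ᵥ (M *ᵥ x) = s ^ 2 * (u ⬝ᵥ (M *ᵥ u)) + w ⬝ᵥ (M *ᵥ w) := by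
      rw [hxw, form_add M hMt _ _ (by rw [smul_dotProduct, k1, smul_zero]), Matrix.mulVec_smul,
        smul_dotProduct, dotProduct_smul, smul_eq_mul, smul_eq_mul]; ring
    have g3 : x ⬝ᵥ x = s ^ 2 * (u ⬝ᵥ u) + w ⬝ᵥ w := by
      rw [hxw]
      simp only [add_dotProduct, dotProduct_add, smul_dotProduct, dotProduct_smul, huw,
        dotProduct_comm w u, smul_eq_mul]
      ring
    rw [hcc] at k2
    have hww := dot_self_nonneg w
    rw [g2, g3] at g1
    rw [g3] at hxp
    -- multiply by u·u
    have g4 : (a * (s ^ 2 * (u ⬝ᵥ u) + w ⬝ᵥ w)) * (u ⬝ᵥ u) ≤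
      (s ^ 2 * (u ⬝ᵥ (M *ᵥ u)) + w ⬝ᵥ (M *ᵥ w)) * (u ⬝ᵥ u) := mul_le_mul_of_nonneg_right g1 hup.le
    have g5 : (s ^ 2 * (u ⬝ᵥ u) + w ⬝ᵥ w) * (u ⬝ᵥ (M *ᵥ u)) < (s ^ 2 * (u ⬝ᵥ u) + w ⬝ᵥ w) * (a * (u ⬝ᵥ u)) :=
      mul_lt_mul_of_pos_left hcon hxp
    nlinarith
  · intro w hw
    have hBw : Bᵀ *ᵥ w = 0 := by
      have : Bᵀ *ᵥ ((B * Bᵀ) *ᵥ w) = Bᵀ *ᵥ w := by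
        rw [Matrix.mulVec_mulVec, ← Matrix.mul_assoc, hB, Matrix.one_mul]
      rw [← this, hw, Matrix.mulVec_zero]
    by_contra hcon
    push Not at hcon
    have hw0 : w ≠ 0 := by rintro rfl; simp at hcon
    have hwp := dot_self_pos w hw0
    let Jc := {j : Fin p // ¬ l j ≤ b}
    let T : ((Fin q → ℝ) × ℝ) →ₗ[ℝ] (Jc → ℝ) :=
      { toFun := fun xs => fun j => (Uᵀ *ᵥ (B *ᵥ xs.1 + xs.2 • w)) j.1
        map_add' := by
          intro x y
          ext i
          simp [Matrix.mulVec_add, add_smul]; ring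
        map_smul' := by
          intro t x
          ext i
          simp [Matrix.mulVec_smul, Matrix.mulVec_add, mul_smul]; ring }
    have hker : LinearMap.ker T ≠ ⊥ := by
      apply LinearMap.ker_ne_bot_of_finrank_lt
      have hcard : Fintype.card Jc + (Finset.univ.filter fun j => l j ≤ b).card = p := by
        have h4 : Fintype.card Jc = (Finset.univ.filter fun j => ¬ l j ≤ b).card := Fintype.card_subtype _
        rw [h4, add_comm, Finset.card_filter_add_card_filter_not, Finset.card_univ, Fintype.card_fin]
      simp only [Module.finrank_prod, Module.finrank_fintype_fun_eq_card, Fintype.card_fin, Module.finrank_self]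
      omega
    obtain ⟨⟨c, s⟩, hxs, hne⟩ := (Submodule.ne_bot_iff _).mp hker
    rw [LinearMap.mem_ker] at hxs
    set u := B *ᵥ c with hu
    set x := u + s • w with hx
    have e2 : ∀ j, ¬ l j ≤ b → (Uᵀ *ᵥ x) j = 0 := fun j hj => congrFun hxs ⟨j, hj⟩
    have huw : u ⬝ᵥ w = 0 := dot_Bw B c w hBw
    have huu : u ⬝ᵥ u = c ⬝ᵥ c := dot_B B hB c
    have g3 : x ⬝ᵥ x = s ^ 2 * (w ⬝ᵥ w) + u ⬝ᵥ u := by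
      rw [hx]
      simp only [add_dotProduct, dotProduct_add, smul_dotProduct, dotProduct_smul, huw,
        dotProduct_comm w u, smul_eq_mul]
      ring
    have hxp : 0 < s ^ 2 * (w ⬝ᵥ w) + u ⬝ᵥ u := by
      by_cases hs : s = 0
      · have hc0 : c ≠ 0 := by
          rintro rfl; apply hne; rw [hs]; rfl
        rw [huu]
        have := dot_self_pos c hc0
        positivity
      · have := dot_self_nonneg u
        positivity
    obtain ⟨k1, k2⟩ := hfo c w hBw
    rw [← hu] at k1 k2
    rw [← huu] at k2
    have g2 : x ⬝ᵥ (M *ᵥ x) = s ^ 2 * (w ⬝ᵥ (M *ᵥ w)) + u ⬝ᵥ (M *ᵥ u) := by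
      rw [hx, form_add M hMt _ _ (by rw [Matrix.mulVec_smul, dotProduct_smul, k1, smul_zero]), Matrix.mulVec_smul,
        smul_dotProduct, dotProduct_smul, smul_eq_mul, smul_eq_mul]; ring
    obtain ⟨f1, f2⟩ := spectral_forms M U l hU hspec x
    have g1 : x ⬝ᵥ (M *ᵥ x) ≤ b * (x ⬝ᵥ x) := by
      rw [f1, f2, Finset.mul_sum]
      refine Finset.sum_le_sum fun j _ => ?_
      by_cases hj : l j ≤ b
      · exact mul_le_mul_of_nonneg_right hj (sq_nonneg _)
      · rw [e2 j hj]; simp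
    rw [g2, g3] at g1
    have g4 := mul_le_mul_of_nonneg_right g1 hwp.le
    have g5 := mul_lt_mul_of_pos_left hcon hxp
    nlinarith

theorem gap_of_nondeg {p q : ℕ} {κ : Type*} [Fintype κ] (hqp : q ≤ p) (Y : Matrix (Fin p) κ ℝ)
    (B : Matrix (Fin p) (Fin q) ℝ) (hB : Bᵀ * B = 1) (hnd : sval Y (q + 1) < sval Y q)
    (ε : ℝ) (hε : 0 < ε)
    (hmax : ∀ B' : Matrix (Fin p) (Fin q) ℝ, B'ᵀ * B' = 1 → froSq (B' - B) ≤ ε →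
      Matrix.trace (Y * Yᵀ * (B' * B'ᵀ)) ≤ Matrix.trace (Y * Yᵀ * (B * Bᵀ))) :
    ∃ a b, 0 < a ∧ b < a ∧ Gap (Y * Yᵀ) (B * Bᵀ) a b := by
  have hq1 : 1 ≤ q := by
    by_contra h
    have : q = 0 := by omega
    subst this
    simp [sval] at hnd
  obtain ⟨h1, h2, h3⟩ := eigList_facts Y
  have hM := Matrix.isHermitian_mul_conjTranspose_self Y
  refine ⟨(eigList Y).getD (q - 1) 0, (eigList Y).getD q 0, ?_, ?_, ?_⟩
  · apply Real.sqrt_pos.mp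
    exact lt_of_le_of_lt (Real.sqrt_nonneg _) hnd
  · have : sval Y (q + 1) = Real.sqrt ((eigList Y).getD q 0) := rfl
    rw [this] at hnd
    exact lt_of_not_ge fun h => absurd hnd (not_lt.mpr (Real.sqrt_le_sqrt h))
  · have hfo := first_order (Y * Yᵀ) (by simp) B hB ε hε hmax
    have hYY : Y * Yᴴ = Y * Yᵀ := by rw [Matrix.conjTranspose_eq_transpose_of_trivial]
    rw [← hYY] at hfo ⊢
    refine gap_of_counts (Y * Yᴴ) hM B hB _ _ ?_ ?_ hfo
    · rw [← h3 (fun x => (eigList Y).getD (q - 1) 0 ≤ x)]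
      exact count_hi _ h1 q hq1 (by omega)
    · rw [← h3 (fun x => x ≤ (eigList Y).getD q 0)]
      have := count_lo _ h1 q
      rwa [h2] at this

end HOOI


namespace HOOI

section FroNorm
attribute [local instance] Matrix.frobeniusNormedAddCommGroup Matrix.frobeniusNormedSpace

theorem fro_eq_norm {ι κ : Type*} [Fintype ι] [Fintype κ] (M : Matrix ι κ ℝ) : fro M = ‖M‖ := by
  rw [Matrix.frobenius_norm_def, fro, froSq, Real.sqrt_eq_rpow]
  congr 1
  refine Finset.sum_congr rfl fun i _ => Finset.sum_congr rfl fun j _ => ?_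
  rw [Real.rpow_two, Real.norm_eq_abs, sq_abs]

theorem fro_nonneg {ι κ : Type*} [Fintype ι] [Fintype κ] (M : Matrix ι κ ℝ) : 0 ≤ fro M :=
  Real.sqrt_nonneg _

theorem fro_add {ι κ : Type*} [Fintype ι] [Fintype κ] (M M' : Matrix ι κ ℝ) :
    fro (M + M') ≤ fro M + fro M' := by
  simp only [fro_eq_norm]; exact norm_add_le _ _

theorem fro_sub_comm {ι κ : Type*} [Fintype ι] [Fintype κ] (M M' : Matrix ι κ ℝ) :
    fro (M - M') = fro (M' - M) := by
  simp only [fro_eq_norm]; exact norm_sub_rev _ _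

theorem fro_tri {ι κ : Type*} [Fintype ι] [Fintype κ] (M M' M'' : Matrix ι κ ℝ) :
    fro (M - M'') ≤ fro (M - M') + fro (M' - M'') := by
  simp only [fro_eq_norm]; exact norm_sub_le_norm_sub_add_norm_sub _ _ _

theorem fro_mul {p q r : ℕ} (M : Matrix (Fin p) (Fin q) ℝ) (M' : Matrix (Fin q) (Fin r) ℝ) :
    fro (M * M') ≤ fro M * fro M' := by
  simp only [fro_eq_norm]; exact Matrix.frobenius_norm_mul _ _

theorem fro_transpose {p q : ℕ} (M : Matrix (Fin p) (Fin q) ℝ) :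
    fro Mᵀ = fro M := by
  simp only [fro_eq_norm]; exact Matrix.frobenius_norm_transpose _

theorem fro_zero {ι κ : Type*} [Fintype ι] [Fintype κ] : fro (0 : Matrix ι κ ℝ) = 0 := by
  rw [fro_eq_norm]; exact norm_zero

end FroNorm

theorem froSq_nonneg {ι κ : Type*} [Fintype ι] [Fintype κ] (M : Matrix ι κ ℝ) : 0 ≤ froSq M :=
  Finset.sum_nonneg fun _ _ => Finset.sum_nonneg fun _ _ => sq_nonneg _

theorem fro_sq {ι κ : Type*} [Fintype ι] [Fintype κ] (M : Matrix ι κ ℝ) : fro M ^ 2 = froSq M :=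
  Real.sq_sqrt (froSq_nonneg M)

theorem entry_le_fro {ι κ : Type*} [Fintype ι] [Fintype κ] (M : Matrix ι κ ℝ) (i : ι) (j : κ) :
    |M i j| ≤ fro M := by
  refine Real.abs_le_sqrt ?_
  unfold froSq
  refine le_trans ?_ (Finset.single_le_sum (f := fun i => ∑ j, M i j ^ 2)
    (fun _ _ => Finset.sum_nonneg fun _ _ => sq_nonneg _) (Finset.mem_univ i))
  exact (Finset.single_le_sum (f := fun j => M i j ^ 2) (fun _ _ => sq_nonneg _) (Finset.mem_univ j))

theorem fro_le_sum {ι κ : Type*} [Fintype ι] [Fintype κ] (M : Matrix ι κ ℝ) :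
    fro M ≤ ∑ i, ∑ j, |M i j| := by
  have h0 : 0 ≤ ∑ i, ∑ j, |M i j| := by positivity
  rw [fro, Real.sqrt_le_left h0]
  calc froSq M ≤ ∑ i, (∑ j, |M i j|) ^ 2 := by
        refine Finset.sum_le_sum fun i _ => ?_
        refine le_trans (le_of_eq ?_) (Finset.sum_sq_le_sq_sum_of_nonneg fun a _ => abs_nonneg _)
        simp only [sq_abs]
    _ ≤ _ := Finset.sum_sq_le_sq_sum_of_nonneg fun a _ => by positivity

theorem trace_cs {p q : ℕ} (M M' : Matrix (Fin p) (Fin q) ℝ) :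
    Matrix.trace (Mᵀ * M') ≤ fro M * fro M' := by
  have h1 : Matrix.trace (Mᵀ * M') = ∑ x : Fin p × Fin q, M x.1 x.2 * M' x.1 x.2 := by
    rw [Fintype.sum_prod_type, Finset.sum_comm]; simp [Matrix.trace, Matrix.mul_apply]
  have h2 : ∀ M : Matrix (Fin p) (Fin q) ℝ, fro M = Real.sqrt (∑ x : Fin p × Fin q, M x.1 x.2 ^ 2) := by
    intro M; rw [fro, froSq, Fintype.sum_prod_type]
  rw [h1, h2, h2]
  exact Real.sum_mul_le_sqrt_mul_sqrt _ _ _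

theorem mulVec_sq {p q : ℕ} (E : Matrix (Fin p) (Fin q) ℝ) (x : Fin q → ℝ) :
    (E *ᵥ x) ⬝ᵥ (E *ᵥ x) ≤ froSq E * (x ⬝ᵥ x) := by
  simp only [froSq, dotProduct, Finset.sum_mul]
  refine Finset.sum_le_sum fun i _ => ?_
  have := Finset.sum_mul_sq_le_sq_mul_sq Finset.univ (fun j => E i j) x
  rw [← pow_two, Matrix.mulVec, dotProduct]
  refine this.trans (le_of_eq ?_)
  rw [Finset.sum_mul]
  simp only [pow_two (x _)]

theorem form_abs {p : ℕ} (E : Matrix (Fin p) (Fin p) ℝ) (x : Fin p → ℝ) :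
    |x ⬝ᵥ (E *ᵥ x)| ≤ fro E * (x ⬝ᵥ x) := by
  have h0 := dot_self_nonneg x
  apply abs_le_of_sq_le_sq _ (mul_nonneg (fro_nonneg _) h0)
  have h1 : (x ⬝ᵥ (E *ᵥ x)) ^ 2 ≤ (x ⬝ᵥ x) * ((E *ᵥ x) ⬝ᵥ (E *ᵥ x)) := by
    have := Finset.sum_mul_sq_le_sq_mul_sq Finset.univ x (E *ᵥ x)
    simpa [dotProduct, pow_two] using this
  calc _ ≤ _ := h1
    _ ≤ (x ⬝ᵥ x) * (froSq E * (x ⬝ᵥ x)) := mul_le_mul_of_nonneg_left (mulVec_sq E x) h0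
    _ = _ := by rw [mul_pow, fro_sq]; ring

theorem proj_split {p : ℕ} (P : Matrix (Fin p) (Fin p) ℝ) (hP : Pᵀ = P) (hPP : P * P = P)
    (x : Fin p → ℝ) : P *ᵥ (P *ᵥ x) = P *ᵥ x ∧ P *ᵥ (x - P *ᵥ x) = 0 ∧
      x ⬝ᵥ x = (P *ᵥ x) ⬝ᵥ (P *ᵥ x) + (x - P *ᵥ x) ⬝ᵥ (x - P *ᵥ x) := by
  have h1 : P *ᵥ (P *ᵥ x) = P *ᵥ x := by rw [Matrix.mulVec_mulVec, hPP]
  have h2 : P *ᵥ (x - P *ᵥ x) = 0 := by rw [Matrix.mulVec_sub, h1, sub_self]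
  refine ⟨h1, h2, ?_⟩
  have h3 : (P *ᵥ x) ⬝ᵥ (x - P *ᵥ x) = 0 := by
    rw [dotProduct_comm, Matrix.dotProduct_mulVec, ← Matrix.mulVec_transpose, hP, h2, zero_dotProduct]
  have h4 : x = P *ᵥ x + (x - P *ᵥ x) := by abel
  conv_lhs => rw [h4]
  rw [add_dotProduct, dotProduct_add, dotProduct_add, h3, dotProduct_comm (x - _), h3]
  ring

theorem gap_perturb {p : ℕ} {Ms M P Q : Matrix (Fin p) (Fin p) ℝ} {a b : ℝ} (hg : Gap Ms P a b)
    (hMs : Msᵀ = Ms) (hpsd : ∀ x : Fin p → ℝ, 0 ≤ x ⬝ᵥ (Ms *ᵥ x)) (ha : 0 < a)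
    (hP : Pᵀ = P) (hPP : P * P = P)
    (hc : Q * M = M * Q) :
    Gap M Q (a * (1 - froSq (Q - P)) - fro (M - Ms))
      (b + (fro Ms + |b|) * froSq (Q - P) + fro (M - Ms)) := by
  have hform : ∀ x, x ⬝ᵥ (M *ᵥ x) = x ⬝ᵥ (Ms *ᵥ x) + x ⬝ᵥ ((M - Ms) *ᵥ x) := by
    intro x; rw [Matrix.sub_mulVec, dotProduct_sub]; ring
  have hsplit : ∀ x, x ⬝ᵥ (Ms *ᵥ x) = (P *ᵥ x) ⬝ᵥ (Ms *ᵥ (P *ᵥ x)) +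
      (x - P *ᵥ x) ⬝ᵥ (Ms *ᵥ (x - P *ᵥ x)) := by
    intro x
    obtain ⟨h1, h2, h3⟩ := proj_split P hP hPP x
    have h4 : x = P *ᵥ x + (x - P *ᵥ x) := by abel
    conv_lhs => rw [h4]
    apply form_add Ms hMs
    have : P *ᵥ (Ms *ᵥ (x - P *ᵥ x)) = 0 := by
      rw [Matrix.mulVec_mulVec, hg.comm, ← Matrix.mulVec_mulVec, h2, Matrix.mulVec_zero]
    rw [dotProduct_comm, Matrix.dotProduct_mulVec, ← Matrix.mulVec_transpose, hP, this, zero_dotProduct]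
  refine ⟨hc, ?_, ?_⟩
  · intro x hx
    obtain ⟨h1, h2, h3⟩ := proj_split P hP hPP x
    have e1 : (x - P *ᵥ x) = (Q - P) *ᵥ x := by rw [Matrix.sub_mulVec, hx]
    have e2 := mulVec_sq (Q - P) x
    rw [← e1] at e2
    have e3 := hg.lo _ h1
    have e4 := hpsd (x - P *ᵥ x)
    have e5 := (abs_le.mp (form_abs (M - Ms) x)).1
    rw [hform, hsplit]
    have e6 : a * ((x - P *ᵥ x) ⬝ᵥ (x - P *ᵥ x)) ≤ a * (froSq (Q - P) * (x ⬝ᵥ x)) :=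
      mul_le_mul_of_nonneg_left e2 ha.le
    have e7 : a * (x ⬝ᵥ x) = a * ((P *ᵥ x) ⬝ᵥ (P *ᵥ x)) + a * ((x - P *ᵥ x) ⬝ᵥ (x - P *ᵥ x)) := by
      rw [h3]; ring
    linarith
  · intro x hx
    obtain ⟨h1, h2, h3⟩ := proj_split P hP hPP x
    have e1 : P *ᵥ x = - ((Q - P) *ᵥ x) := by rw [Matrix.sub_mulVec, hx]; simp
    have e2 := mulVec_sq (Q - P) x
    have e2' : (P *ᵥ x) ⬝ᵥ (P *ᵥ x) ≤ froSq (Q - P) * (x ⬝ᵥ x) := by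
      rw [e1, neg_dotProduct_neg]; exact e2
    have e3 := hg.hi _ h2
    have e4 := (abs_le.mp (form_abs Ms (P *ᵥ x))).2
    have e5 := (abs_le.mp (form_abs (M - Ms) x)).2
    rw [hform, hsplit]
    have e6 : (fro Ms + |b|) * ((P *ᵥ x) ⬝ᵥ (P *ᵥ x)) ≤ (fro Ms + |b|) * (froSq (Q - P) * (x ⬝ᵥ x)) :=
      mul_le_mul_of_nonneg_left e2' (add_nonneg (fro_nonneg _) (abs_nonneg _))
    have e7 : b * (x ⬝ᵥ x) = b * ((P *ᵥ x) ⬝ᵥ (P *ᵥ x)) + b * ((x - P *ᵥ x) ⬝ᵥ (x - P *ᵥ x)) := by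
      rw [h3]; ring
    have e8 : - |b| * ((P *ᵥ x) ⬝ᵥ (P *ᵥ x)) ≤ b * ((P *ᵥ x) ⬝ᵥ (P *ᵥ x)) :=
      mul_le_mul_of_nonneg_right (neg_abs_le b) (dot_self_nonneg _)
    linarith

theorem block_step {p q : ℕ} (Ms : Matrix (Fin p) (Fin p) ℝ) (hMs : Msᵀ = Ms)
    (hpsd : ∀ x : Fin p → ℝ, 0 ≤ x ⬝ᵥ (Ms *ᵥ x)) (Bs : Matrix (Fin p) (Fin q) ℝ) (hBs : Bsᵀ * Bs = 1)
    {a b : ℝ} (ha : 0 < a) (hab : b < a) (hg : Gap Ms (Bs * Bsᵀ) a b) :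
    ∃ ε0 > (0 : ℝ), ∃ c > (0 : ℝ), ∃ K > (0 : ℝ), ∀ M : Matrix (Fin p) (Fin p) ℝ, Mᵀ = M →
      fro (M - Ms) ≤ ε0 → ∀ B : Matrix (Fin p) (Fin q) ℝ, Bᵀ * B = 1 →
      (∀ B' : Matrix (Fin p) (Fin q) ℝ, B'ᵀ * B' = 1 →
        Matrix.trace (M * (B' * B'ᵀ)) ≤ Matrix.trace (M * (B * Bᵀ))) →
      fro (B * Bᵀ - Bs * Bsᵀ) ≤ K * fro (M - Ms) ∧ M * B = B * Bᵀ * (M * B) ∧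
      ∀ B' : Matrix (Fin p) (Fin q) ℝ, B'ᵀ * B' = 1 →
        c * froSq (B * Bᵀ - B' * B'ᵀ) ≤ Matrix.trace (M * (B * Bᵀ)) - Matrix.trace (M * (B' * B'ᵀ)) := by
  have hd : 0 < a - b := by linarith
  set K := 2 / (a - b) with hK
  have hKp : 0 < K := by positivity
  set W := (a + fro Ms + |b|) * K ^ 2 with hW
  have hW0 : 0 ≤ W := by
    have := fro_nonneg Ms
    positivity
  refine ⟨min 1 ((a - b) / 2 / (2 + W)), by positivity, (a - b) / 4, by positivity, K, hKp, ?_⟩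
  intro M hM hMM B hB hmax
  obtain ⟨p1, p2, p3⟩ := proj_facts B hB
  obtain ⟨s1, s2, s3⟩ := proj_facts Bs hBs
  set P := Bs * Bsᵀ
  set Q := B * Bᵀ with hQ
  set ε := fro (M - Ms)
  have hε0 : 0 ≤ ε := fro_nonneg _
  have hfo := first_order M hM B hB 1 one_pos (fun B' h _ => hmax B' h)
  obtain ⟨c1, c2⟩ := first_order_comm M hM B hB (fun c w hw => (hfo c w hw).1)
  have hcl : fro (Q - P) ≤ K * ε := by
    have g1 := growth_PQ hg s1 s2 s3 p1 p2 p3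
    have g2 := hmax Bs hBs
    have g3 : Matrix.trace (Ms * P) - Matrix.trace (Ms * Q) ≤ fro (Ms - M) * fro (P - Q) := by
      have h1 := trace_cs (Ms - M) (P - Q)
      rw [Matrix.transpose_sub, hMs, hM] at h1
      simp only [Matrix.sub_mul, Matrix.mul_sub, Matrix.trace_sub] at h1
      linarith
    rw [fro_sub_comm Ms M] at g3
    rw [← fro_sq] at g1
    have g4 : (a - b) / 2 * fro (P - Q) ^ 2 ≤ ε * fro (P - Q) := g1.trans g3
    rw [fro_sub_comm Q P]
    rcases (fro_nonneg (P - Q)).eq_or_lt with h | h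
    · rw [← h]; positivity
    · have g5 : (a - b) / 2 * fro (P - Q) ≤ ε := by
        by_contra hcon
        push Not at hcon
        nlinarith [mul_lt_mul_of_pos_right hcon h]
      rw [hK, div_mul_eq_mul_div, le_div_iff₀ hd]
      linarith
  refine ⟨hcl, c2, fun B' hB' => ?_⟩
  obtain ⟨t1, t2, t3⟩ := proj_facts B' hB'
  have hg' := gap_perturb (M := M) (Q := Q) hg hMs hpsd ha s1 s2 c1
  have g1 := growth_PQ hg' p1 p2 p3 t1 t2 t3
  refine le_trans (mul_le_mul_of_nonneg_right ?_ (froSq_nonneg _)) g1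
  have h1 : froSq (Q - P) ≤ K ^ 2 * ε ^ 2 := by
    rw [← fro_sq, ← mul_pow]
    exact pow_le_pow_left₀ (fro_nonneg _) hcl 2
  have hε1 : ε ≤ 1 := hMM.trans (min_le_left _ _)
  have hε2 : (2 + W) * ε ≤ (a - b) / 2 := by
    have := hMM.trans (min_le_right _ _)
    rwa [le_div_iff₀ (by positivity), mul_comm] at this
  have h2 : (a + fro Ms + |b|) * froSq (Q - P) ≤ W * ε := by
    calc _ ≤ (a + fro Ms + |b|) * (K ^ 2 * ε ^ 2) :=
          mul_le_mul_of_nonneg_left h1 (by have := fro_nonneg Ms; positivity)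
      _ = W * ε * ε := by rw [hW]; ring
      _ ≤ W * ε * 1 := mul_le_mul_of_nonneg_left hε1 (by positivity)
      _ = _ := by ring
  change (a - b) / 4 ≤ (a * (1 - froSq (Q - P)) - ε - (b + (fro Ms + |b|) * froSq (Q - P) + ε)) / 2
  nlinarith

end HOOI


namespace HOOI

theorem prod_lip {ι : Type*} (s : Finset ι) (x y : ι → ℝ) (hx : ∀ i, |x i| ≤ 1)
    (hy : ∀ i, |y i| ≤ 1) : |∏ i ∈ s, x i - ∏ i ∈ s, y i| ≤ ∑ i ∈ s, |x i - y i| := by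
  classical
  induction s using Finset.induction_on with
  | empty => simp
  | insert a s ha ih =>
    rw [Finset.prod_insert ha, Finset.prod_insert ha, Finset.sum_insert ha]
    have e : x a * ∏ i ∈ s, x i - y a * ∏ i ∈ s, y i =
      (x a - y a) * ∏ i ∈ s, x i + y a * (∏ i ∈ s, x i - ∏ i ∈ s, y i) := by ring
    rw [e]
    refine (abs_add_le _ _).trans (add_le_add ?_ ?_)
    · rw [abs_mul, Finset.abs_prod]
      exact mul_le_of_le_one_right (abs_nonneg _)
        (Finset.prod_le_one (fun _ _ => abs_nonneg _) fun i _ => hx i)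
    · rw [abs_mul]
      exact (mul_le_of_le_one_left (abs_nonneg _) (hy a)).trans ih

theorem proj_entry {p q : ℕ} (A : Matrix (Fin p) (Fin q) ℝ) (h : Aᵀ * A = 1) (i j : Fin p) :
    |(A * Aᵀ) i j| ≤ 1 := by
  obtain ⟨h1, h2, -⟩ := proj_facts A h
  set Q := A * Aᵀ
  have key : ∀ i j, Q i j ^ 2 ≤ Q i i := by
    intro i j
    have : Q i i = ∑ k, Q i k ^ 2 := by
      conv_lhs => rw [← h2, Matrix.mul_apply]
      refine Finset.sum_congr rfl fun k _ => ?_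
      rw [pow_two, ← Matrix.transpose_apply Q i k, h1]
    rw [this]
    exact Finset.single_le_sum (f := fun k => Q i k ^ 2) (fun _ _ => sq_nonneg _) (Finset.mem_univ j)
  have h3 : Q i i ≤ 1 := by nlinarith [key i i]
  exact (sq_le_one_iff_abs_le_one _).mp ((key i j).trans h3)

theorem quad_expand {S : Type*} [Fintype S] [DecidableEq S] {I r : S → ℕ}
    (A : (s : S) → Matrix (Fin (I s)) (Fin (r s)) ℝ) (x y : ((s : S) → Fin (I s)) → ℝ) :
    ∑ c : ((s : S) → Fin (r s)), (∑ idx, x idx * ∏ s, A s (idx s) (c s)) *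
      (∑ idx, y idx * ∏ s, A s (idx s) (c s)) =
    ∑ idx, ∑ idx', x idx * y idx' * ∏ s, (A s * (A s)ᵀ) (idx s) (idx' s) := by
  simp only [Finset.sum_mul_sum]
  rw [Finset.sum_comm]
  refine Finset.sum_congr rfl fun idx _ => ?_
  rw [Finset.sum_comm]
  refine Finset.sum_congr rfl fun idx' _ => ?_
  simp only [Matrix.mul_apply, Matrix.transpose_apply]
  rw [Finset.prod_univ_sum, Fintype.piFinset_univ, Finset.mul_sum]
  refine Finset.sum_congr rfl fun c _ => ?_
  rw [Finset.prod_mul_distrib]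
  ring

theorem quad_lip {S : Type*} [Fintype S] [DecidableEq S] {I : S → ℕ}
    (Q Q' : (s : S) → Matrix (Fin (I s)) (Fin (I s)) ℝ) (x y : ((s : S) → Fin (I s)) → ℝ)
    (hQ : ∀ s i j, |Q s i j| ≤ 1) (hQ' : ∀ s i j, |Q' s i j| ≤ 1) :
    |∑ idx, ∑ idx', x idx * y idx' * ∏ s, Q s (idx s) (idx' s) -
      ∑ idx, ∑ idx', x idx * y idx' * ∏ s, Q' s (idx s) (idx' s)| ≤
    (∑ idx, |x idx|) * (∑ idx, |y idx|) * ∑ s, fro (Q s - Q' s) := by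
  rw [← Finset.sum_sub_distrib]
  simp only [← Finset.sum_sub_distrib]
  rw [Finset.sum_mul_sum, Finset.sum_mul]
  refine (Finset.abs_sum_le_sum_abs _ _).trans (Finset.sum_le_sum fun idx _ => ?_)
  rw [Finset.sum_mul]
  refine (Finset.abs_sum_le_sum_abs _ _).trans (Finset.sum_le_sum fun idx' _ => ?_)
  rw [← mul_sub, abs_mul, abs_mul]
  refine mul_le_mul_of_nonneg_left ?_ (by positivity)
  refine (prod_lip _ _ _ (fun s => hQ s _ _) (fun s => hQ' s _ _)).trans
    (Finset.sum_le_sum fun s _ => ?_)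
  exact entry_le_fro (Q s - Q' s) _ _

variable {N : ℕ} {I r : Fin N → ℕ}

noncomputable def dQ (A B : (n : Fin N) → Matrix (Fin (I n)) (Fin (r n)) ℝ) : ℝ :=
  ∑ n, fro (A n * (A n)ᵀ - B n * (B n)ᵀ)

theorem dQ_nonneg (A B : (n : Fin N) → Matrix (Fin (I n)) (Fin (r n)) ℝ) : 0 ≤ dQ A B :=
  Finset.sum_nonneg fun _ _ => fro_nonneg _

theorem dQ_comm (A B : (n : Fin N) → Matrix (Fin (I n)) (Fin (r n)) ℝ) : dQ A B = dQ B A :=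
  Finset.sum_congr rfl fun _ _ => fro_sub_comm _ _

theorem dQ_tri (A B C : (n : Fin N) → Matrix (Fin (I n)) (Fin (r n)) ℝ) :
    dQ A C ≤ dQ A B + dQ B C := by
  unfold dQ; rw [← Finset.sum_add_distrib]
  exact Finset.sum_le_sum fun _ _ => fro_tri _ _ _

theorem fro_le_dQ (A B : (n : Fin N) → Matrix (Fin (I n)) (Fin (r n)) ℝ) (n) :
    fro (A n * (A n)ᵀ - B n * (B n)ᵀ) ≤ dQ A B :=
  Finset.single_le_sum (f := fun n => fro (A n * (A n)ᵀ - B n * (B n)ᵀ))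
    (fun _ _ => fro_nonneg _) (Finset.mem_univ n)

noncomputable def Mn (X : ((n : Fin N) → Fin (I n)) → ℝ)
    (A : (n : Fin N) → Matrix (Fin (I n)) (Fin (r n)) ℝ) (n : Fin N) :
    Matrix (Fin (I n)) (Fin (I n)) ℝ := Gmat X A n * (Gmat X A n)ᵀ

theorem Mn_symm (X : ((n : Fin N) → Fin (I n)) → ℝ)
    (A : (n : Fin N) → Matrix (Fin (I n)) (Fin (r n)) ℝ) (n : Fin N) : (Mn X A n)ᵀ = Mn X A n := by
  rw [Mn, Matrix.transpose_mul, Matrix.transpose_transpose]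

theorem Mn_psd (X : ((n : Fin N) → Fin (I n)) → ℝ)
    (A : (n : Fin N) → Matrix (Fin (I n)) (Fin (r n)) ℝ) (n : Fin N) (x : Fin (I n) → ℝ) :
    0 ≤ x ⬝ᵥ (Mn X A n *ᵥ x) := by
  rw [Mn, ← Matrix.mulVec_mulVec, Matrix.dotProduct_mulVec, ← Matrix.mulVec_transpose]
  exact Finset.sum_nonneg fun i _ => mul_self_nonneg _

theorem froSq_block {p q : ℕ} {κ : Type*} [Fintype κ] (G : Matrix (Fin p) κ ℝ)
    (B : Matrix (Fin p) (Fin q) ℝ) : froSq (Bᵀ * G) = Matrix.trace (G * Gᵀ * (B * Bᵀ)) := by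
  classical
  rw [froSq_trace, Matrix.transpose_mul, Matrix.transpose_transpose, Matrix.mul_assoc,
    Matrix.trace_mul_comm, ← Matrix.mul_assoc, Matrix.mul_assoc, Matrix.trace_mul_comm,]

theorem fval_trace (X : ((n : Fin N) → Fin (I n)) → ℝ)
    (A : (n : Fin N) → Matrix (Fin (I n)) (Fin (r n)) ℝ) (n : Fin N) :
    fval X A = Matrix.trace (Mn X A n * (A n * (A n)ᵀ)) := by
  rw [fval_block X A n, froSq_block, Mn]

noncomputable def Lc (X : ((n : Fin N) → Fin (I n)) → ℝ) : ℝ := (∑ idx, |X idx|) * (∑ idx, |X idx|)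

theorem Lc_nonneg (X : ((n : Fin N) → Fin (I n)) → ℝ) : 0 ≤ Lc X := mul_self_nonneg _

theorem fval_lip (X : ((n : Fin N) → Fin (I n)) → ℝ)
    (A B : (n : Fin N) → Matrix (Fin (I n)) (Fin (r n)) ℝ) (hA : TFeas A) (hB : TFeas B) :
    |fval X A - fval X B| ≤ Lc X * dQ A B := by
  unfold fval
  simp only [pow_two]
  rw [quad_expand A X X, quad_expand B X X]
  exact quad_lip (fun s => A s * (A s)ᵀ) (fun s => B s * (B s)ᵀ) X X
    (fun s => proj_entry _ (hA s)) (fun s => proj_entry _ (hB s))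

theorem Mn_lip (X : ((n : Fin N) → Fin (I n)) → ℝ)
    (A B : (n : Fin N) → Matrix (Fin (I n)) (Fin (r n)) ℝ) (hA : TFeas A) (hB : TFeas B)
    (n : Fin N) :
    fro (Mn X A n - Mn X B n) ≤ Lc X * dQ A B := by
  have hent : ∀ i j, |(Mn X A n - Mn X B n) i j| ≤
      (∑ idx, |X (comb n i idx)|) * (∑ idx, |X (comb n j idx)|) * dQ A B := by
    intro i j
    have e : ∀ A : (n : Fin N) → Matrix (Fin (I n)) (Fin (r n)) ℝ, Mn X A n i j =
      ∑ c : ((m : {m : Fin N // m ≠ n}) → Fin (r m.1)),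
        (∑ idx, X (comb n i idx) * ∏ m : {m : Fin N // m ≠ n}, A m.1 (idx m) (c m)) *
        (∑ idx, X (comb n j idx) * ∏ m : {m : Fin N // m ≠ n}, A m.1 (idx m) (c m)) := by
      intro A; rw [Mn, Matrix.mul_apply]; rfl
    rw [Matrix.sub_apply, e A, e B,
      quad_expand (fun m : {m : Fin N // m ≠ n} => A m.1) _ _,
      quad_expand (fun m : {m : Fin N // m ≠ n} => B m.1) _ _]
    refine (quad_lip (fun m : {m : Fin N // m ≠ n} => A m.1 * (A m.1)ᵀ)
      (fun m : {m : Fin N // m ≠ n} => B m.1 * (B m.1)ᵀ) _ _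
      (fun s => proj_entry _ (hA s)) (fun s => proj_entry _ (hB s))).trans ?_
    refine mul_le_mul_of_nonneg_left ?_ (by positivity)
    unfold dQ
    rw [Fintype.sum_eq_add_sum_subtype_ne (fun m => fro (A m * (A m)ᵀ - B m * (B m)ᵀ)) n]
    linarith [fro_nonneg (A n * (A n)ᵀ - B n * (B n)ᵀ)]
  refine (fro_le_sum _).trans ((Finset.sum_le_sum fun i _ => Finset.sum_le_sum fun j _ =>
    hent i j).trans (le_of_eq ?_))
  unfold Lc
  rw [sum_comb n (fun x => |X x|), Finset.sum_mul_sum, Finset.sum_mul]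
  simp only [Finset.sum_mul]

theorem fro_feas {p q : ℕ} (A : Matrix (Fin p) (Fin q) ℝ) (h : Aᵀ * A = 1) : fro A = Real.sqrt q := by
  rw [fro, froSq_trace, h]; simp

theorem proj_lip {p q : ℕ} (A B : Matrix (Fin p) (Fin q) ℝ) (hA : Aᵀ * A = 1) (hB : Bᵀ * B = 1) :
    fro (A * Aᵀ - B * Bᵀ) ≤ 2 * Real.sqrt q * fro (A - B) := by
  have e : A * Aᵀ - B * Bᵀ = A * (A - B)ᵀ + (A - B) * Bᵀ := by
    rw [Matrix.transpose_sub, Matrix.mul_sub, Matrix.sub_mul]; abel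
  rw [e]
  refine (fro_add _ _).trans ?_
  have h1 := fro_mul A (A - B)ᵀ
  have h2 := fro_mul (A - B) Bᵀ
  rw [fro_transpose, fro_feas A hA] at h1
  rw [fro_transpose, fro_feas B hB] at h2
  linarith

theorem fro_le_tdist (A B : (n : Fin N) → Matrix (Fin (I n)) (Fin (r n)) ℝ) (n) :
    fro (A n - B n) ≤ tdist A B := by
  refine Real.sqrt_le_sqrt ?_
  exact Finset.single_le_sum (f := fun n => froSq (A n - B n))
    (fun _ _ => froSq_nonneg _) (Finset.mem_univ n)

theorem dQ_le_tdist : ∃ C : ℝ, 0 < C ∧ ∀ (A B : (n : Fin N) → Matrix (Fin (I n)) (Fin (r n)) ℝ),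
    TFeas A → TFeas B → dQ A B ≤ C * tdist A B := by
  refine ⟨∑ n, 2 * Real.sqrt (r n) + 1, by positivity, fun A B hA hB => ?_⟩
  have h0 : 0 ≤ tdist A B := Real.sqrt_nonneg _
  have : dQ A B ≤ (∑ n, 2 * Real.sqrt (r n)) * tdist A B := by
    rw [Finset.sum_mul]
    refine Finset.sum_le_sum fun n _ => (proj_lip _ _ (hA n) (hB n)).trans ?_
    exact mul_le_mul_of_nonneg_left (fro_le_tdist A B n) (by positivity)
  linarith

theorem tdist_le_sum (A B : (n : Fin N) → Matrix (Fin (I n)) (Fin (r n)) ℝ) :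
    tdist A B ≤ ∑ n, fro (A n - B n) := by
  have h0 : 0 ≤ ∑ n, fro (A n - B n) := Finset.sum_nonneg fun _ _ => fro_nonneg _
  rw [tdist, Real.sqrt_le_left h0]
  simp only [← fro_sq]
  exact Finset.sum_sq_le_sq_sum_of_nonneg fun a _ => fro_nonneg _

end HOOI


namespace HOOI

variable {N : ℕ} {I r : Fin N → ℕ}

theorem exists_pos_lb {ι : Type*} [Finite ι] (f : ι → ℝ) (hf : ∀ i, 0 < f i) :
    ∃ m > (0 : ℝ), ∀ i, m ≤ f i := by
  obtain ⟨M, hM⟩ := Finite.exists_ge (fun i => (⟨f i, hf i⟩ : {x : ℝ // 0 < x}))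
  exact ⟨M.1, M.2, fun i => hM i⟩

theorem exists_pos_ub {ι : Type*} [Finite ι] (f : ι → ℝ) : ∃ m > (0 : ℝ), ∀ i, f i ≤ m := by
  obtain ⟨M, hM⟩ := Finite.exists_le f
  exact ⟨max M 1, by positivity, fun i => (hM i).trans (le_max_left _ _)⟩

theorem Mn_congr (X : ((n : Fin N) → Fin (I n)) → ℝ)
    (A B : (n : Fin N) → Matrix (Fin (I n)) (Fin (r n)) ℝ) (n : Fin N)
    (h : ∀ m, m ≠ n → A m = B m) : Mn X A n = Mn X B n := by
  rw [Mn, Mn, Gmat_eq, Gmat_eq, GR_congr X A B n h]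

theorem block_setup (hr : ∀ n, r n ≤ I n) (X : ((n : Fin N) → Fin (I n)) → ℝ)
    (As : (n : Fin N) → Matrix (Fin (I n)) (Fin (r n)) ℝ) (hs : LocalMax X As) (hnd : NonDeg X As) :
    ∃ ρ > (0 : ℝ), ∃ c > (0 : ℝ), ∃ K > (0 : ℝ), ∀ n,
      ∀ A : (n : Fin N) → Matrix (Fin (I n)) (Fin (r n)) ℝ, TFeas A → dQ A As ≤ ρ →
      ∀ B : Matrix (Fin (I n)) (Fin (r n)) ℝ, Bᵀ * B = 1 →
      (∀ B' : Matrix (Fin (I n)) (Fin (r n)) ℝ, B'ᵀ * B' = 1 →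
        Matrix.trace (Mn X A n * (B' * B'ᵀ)) ≤ Matrix.trace (Mn X A n * (B * Bᵀ))) →
      fro (B * Bᵀ - As n * (As n)ᵀ) ≤ K * dQ A As ∧ Mn X A n * B = B * Bᵀ * (Mn X A n * B) ∧
      ∀ B' : Matrix (Fin (I n)) (Fin (r n)) ℝ, B'ᵀ * B' = 1 →
        c * froSq (B * Bᵀ - B' * B'ᵀ) ≤
          Matrix.trace (Mn X A n * (B * Bᵀ)) - Matrix.trace (Mn X A n * (B' * B'ᵀ)) := by
  obtain ⟨hf, ε, hε, hmax⟩ := hs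
  have hstep : ∀ n, ∃ ε0 > (0 : ℝ), ∃ c > (0 : ℝ), ∃ K > (0 : ℝ),
      ∀ M : Matrix (Fin (I n)) (Fin (I n)) ℝ, Mᵀ = M →
      fro (M - Mn X As n) ≤ ε0 → ∀ B : Matrix (Fin (I n)) (Fin (r n)) ℝ, Bᵀ * B = 1 →
      (∀ B' : Matrix (Fin (I n)) (Fin (r n)) ℝ, B'ᵀ * B' = 1 →
        Matrix.trace (M * (B' * B'ᵀ)) ≤ Matrix.trace (M * (B * Bᵀ))) →
      fro (B * Bᵀ - As n * (As n)ᵀ) ≤ K * fro (M - Mn X As n) ∧ M * B = B * Bᵀ * (M * B) ∧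
      ∀ B' : Matrix (Fin (I n)) (Fin (r n)) ℝ, B'ᵀ * B' = 1 →
        c * froSq (B * Bᵀ - B' * B'ᵀ) ≤
          Matrix.trace (M * (B * Bᵀ)) - Matrix.trace (M * (B' * B'ᵀ)) := by
    intro n
    obtain ⟨a, b, ha, hab, hg⟩ := gap_of_nondeg (hr n) (Gmat X As n) (As n) (hf n) (hnd n) (ε ^ 2)
      (by positivity) (by
        intro B' hB' hd
        have hU : TFeas (Function.update As n B') := by
          intro m
          by_cases h : m = n
          · subst h; simpa using hB'
          · simpa [Function.update_of_ne h] using hf m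
        have h1 := hmax _ hU (by
          rw [tdist]
          refine Real.sqrt_le_iff.mpr ⟨hε.le, ?_⟩
          rw [Finset.sum_eq_single n]
          · simpa using hd
          · intro m _ h
            rw [Function.update_of_ne h, sub_self]; simp [froSq]
          · simp)
        rw [fval_trace X _ n, fval_trace X As n,
          Mn_congr X (Function.update As n B') As n (fun m h => Function.update_of_ne h _ _)] at h1
        simpa [Mn] using h1)
    exact block_step (Mn X As n) (Mn_symm X As n) (Mn_psd X As n) (As n) (hf n) ha hab hg
  choose ε0 hε0 c hc K hK hmain using hstep
  obtain ⟨e, he, hle⟩ := exists_pos_lb ε0 hε0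
  obtain ⟨c', hc', hlc⟩ := exists_pos_lb c hc
  obtain ⟨K', hK', hlK⟩ := exists_pos_ub K
  have hL := Lc_nonneg X
  refine ⟨e / (Lc X + 1), by positivity, c', hc', K' * (Lc X + 1), by positivity, ?_⟩
  intro n A hA hd B hB hBm
  have hdn := dQ_nonneg A As
  have hlip : fro (Mn X A n - Mn X As n) ≤ (Lc X + 1) * dQ A As :=
    (Mn_lip X A As hA hf n).trans (by nlinarith)
  have hd' : (Lc X + 1) * dQ A As ≤ e := by
    rwa [le_div_iff₀ (by positivity), mul_comm] at hd
  obtain ⟨h1, h2, h3⟩ := hmain n (Mn X A n) (Mn_symm X A n) (hlip.trans (hd'.trans (hle n))) B hB hBm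
  refine ⟨h1.trans ?_, h2, fun B' hB' => le_trans ?_ (h3 B' hB')⟩
  · rw [mul_assoc]
    exact mul_le_mul (hlK n) hlip (fro_nonneg _) hK'.le
  · exact mul_le_mul_of_nonneg_right (hlc n) (froSq_nonneg _)

/-- natural-number indexed hybrid -/
def hy (A A' : (n : Fin N) → Matrix (Fin (I n)) (Fin (r n)) ℝ) (j : ℕ) :
    (i : Fin N) → Matrix (Fin (I i)) (Fin (r i)) ℝ :=
  fun i => if i.val < j then A' i else A i

theorem hyb_eq (A A' : (n : Fin N) → Matrix (Fin (I n)) (Fin (r n)) ℝ) (n : Fin N) :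
    hyb A A' n = hy A A' n.val := by
  funext i
  simp only [hyb, hy, Fin.lt_def]

theorem hy_feas {A A' : (n : Fin N) → Matrix (Fin (I n)) (Fin (r n)) ℝ} (hA : TFeas A)
    (hA' : TFeas A') (j : ℕ) : TFeas (hy A A' j) := by
  intro i
  unfold hy
  split_ifs
  · exact hA' i
  · exact hA i

theorem hy_zero (A A' : (n : Fin N) → Matrix (Fin (I n)) (Fin (r n)) ℝ) : hy A A' 0 = A := by
  funext i; simp [hy]

theorem hy_last (A A' : (n : Fin N) → Matrix (Fin (I n)) (Fin (r n)) ℝ) : hy A A' N = A' := by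
  funext i; simp [hy]

theorem hy_self (A A' : (n : Fin N) → Matrix (Fin (I n)) (Fin (r n)) ℝ) (n : Fin N) :
    hy A A' n.val n = A n := by simp [hy]

theorem hy_succ_self (A A' : (n : Fin N) → Matrix (Fin (I n)) (Fin (r n)) ℝ) (n : Fin N) :
    hy A A' (n.val + 1) n = A' n := by simp [hy]

theorem hy_succ_ne (A A' : (n : Fin N) → Matrix (Fin (I n)) (Fin (r n)) ℝ) (n m : Fin N)
    (h : m ≠ n) : hy A A' (n.val + 1) m = hy A A' n.val m := by
  have : m.val ≠ n.val := fun h' => h (Fin.ext h')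
  unfold hy
  by_cases h1 : m.val < n.val
  · rw [if_pos h1, if_pos (by omega)]
  · rw [if_neg h1, if_neg (by omega)]

structure Step (X : ((n : Fin N) → Fin (I n)) → ℝ)
    (A A' : (n : Fin N) → Matrix (Fin (I n)) (Fin (r n)) ℝ) : Prop where
  fe : TFeas A
  fe' : TFeas A'
  mx : ∀ n, ∀ B : Matrix (Fin (I n)) (Fin (r n)) ℝ, Bᵀ * B = 1 →
    Matrix.trace (Mn X (hy A A' n.val) n * (B * Bᵀ)) ≤
      Matrix.trace (Mn X (hy A A' n.val) n * (A' n * (A' n)ᵀ))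

theorem step_of_hooi {X : ((n : Fin N) → Fin (I n)) → ℝ}
    {A : ℕ → (n : Fin N) → Matrix (Fin (I n)) (Fin (r n)) ℝ} (h : IsHOOI X A) (k : ℕ) :
    Step X (A k) (A (k + 1)) := by
  refine ⟨h.1 k, h.1 (k + 1), fun n B hB => ?_⟩
  have := h.2 k n B hB
  rw [froSq_block, froSq_block, Gseq, hyb_eq] at this
  exact this

theorem grad_alg {p q : ℕ} (Q Q' M M' : Matrix (Fin p) (Fin p) ℝ) (A : Matrix (Fin p) (Fin q) ℝ)
    (hQA : Q * A = A) (hM' : M' * Q' = Q' * (M' * Q')) {R S L Δ : ℝ} (hR : 0 ≤ R) (hS : 0 ≤ S)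
    (hL : 0 ≤ L) (hΔ : 0 ≤ Δ) (h1 : fro Q ≤ R) (h2 : fro Q' ≤ R) (h3 : fro M ≤ S) (h4 : fro M' ≤ S)
    (h5 : fro A ≤ R) (h6 : fro (Q - Q') ≤ Δ) (h7 : fro (M - M') ≤ L * Δ) :
    fro (M * A - Q * (M * A)) ≤ ((L * R + S) + S * R + R * (L * R + S)) * R * Δ := by
  have e : M * A - Q * (M * A) = (((M - M') * Q + M' * (Q - Q')) + ((Q' - Q) * (M * Q) +
      Q' * -((M - M') * Q + M' * (Q - Q')))) * A := by
    have e0 : (((M - M') * Q + M' * (Q - Q')) + ((Q' - Q) * (M * Q) +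
      Q' * -((M - M') * Q + M' * (Q - Q')))) = M * Q - Q * (M * Q) - (M' * Q' - Q' * (M' * Q')) := by
      noncomm_ring
    rw [e0, ← hM', sub_self, sub_zero, Matrix.sub_mul, Matrix.mul_assoc, hQA, Matrix.mul_assoc,
      Matrix.mul_assoc, hQA]
  have mm : ∀ {a b c : ℕ} (U : Matrix (Fin a) (Fin b) ℝ) (V : Matrix (Fin b) (Fin c) ℝ) (u v : ℝ),
      0 ≤ u → fro U ≤ u → fro V ≤ v → fro (U * V) ≤ u * v := fun U V u v hu h h' =>
    (fro_mul U V).trans (mul_le_mul h h' (fro_nonneg _) hu)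
  have aa : ∀ {a b : ℕ} (U V : Matrix (Fin a) (Fin b) ℝ) (u v : ℝ),
      fro U ≤ u → fro V ≤ v → fro (U + V) ≤ u + v := fun U V u v h h' =>
    (fro_add U V).trans (add_le_add h h')
  have hE : fro ((M - M') * Q + M' * (Q - Q')) ≤ (L * Δ) * R + S * Δ :=
    aa _ _ _ _ (mm _ _ _ _ (by positivity) h7 h1) (mm _ _ _ _ hS h4 h6)
  have hnE : fro (-((M - M') * Q + M' * (Q - Q'))) ≤ (L * Δ) * R + S * Δ := by
    rw [← zero_sub, fro_sub_comm, sub_zero]; exact hE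
  have hT : fro ((Q' - Q) * (M * Q)) ≤ Δ * (S * R) :=
    mm _ _ _ _ hΔ (by rw [fro_sub_comm]; exact h6) (mm _ _ _ _ hS h3 h1)
  have hT2 := mm Q' (-((M - M') * Q + M' * (Q - Q'))) _ _ hR h2 hnE
  rw [e]
  refine (mm _ _ _ _ ?_ (aa _ _ _ _ hE (aa _ _ _ _ hT hT2)) h5).trans (le_of_eq ?_)
  · positivity
  · ring

set_option maxHeartbeats 2000000 in
theorem sweep (hr : ∀ n, r n ≤ I n) (X : ((n : Fin N) → Fin (I n)) → ℝ)
    (As : (n : Fin N) → Matrix (Fin (I n)) (Fin (r n)) ℝ) (hs : LocalMax X As) (hnd : NonDeg X As) :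
    ∃ ρ > (0 : ℝ), ∃ c > (0 : ℝ), ∃ K ≥ (1 : ℝ), ∃ C > (0 : ℝ),
      ∀ A A' : (n : Fin N) → Matrix (Fin (I n)) (Fin (r n)) ℝ, Step X A A' → dQ A As ≤ ρ →
      dQ A' As ≤ K * dQ A As ∧ c * dQ A A' ^ 2 ≤ fval X A' - fval X A ∧
      (∑ n, ∑ j, ∑ a, |gR X A n j a|) ≤ C * dQ A A' := by
  obtain ⟨ρ, hρ, c, hc, K, hK, hb⟩ := block_setup hr X As hs hnd
  have hfs := hs.1
  set R : ℝ := 1 + ∑ n, (r n : ℝ) with hRdef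
  obtain ⟨S0, hS0, hS0'⟩ := exists_pos_ub (fun n => fro (Mn X As n))
  have hL := Lc_nonneg X
  have hR : 0 ≤ R := by positivity
  set S : ℝ := S0 + Lc X * ρ with hSdef
  have hS : 0 ≤ S := by positivity
  set C0 : ℝ := ((Lc X * R + S) + S * R + R * (Lc X * R + S)) * R with hC0
  have hC0n : 0 ≤ C0 := by positivity
  have hsum : 0 ≤ ∑ n : Fin N, ∑ j : Fin (I n), ∑ a : Fin (r n), C0 :=
    Finset.sum_nonneg fun _ _ => Finset.sum_nonneg fun _ _ => Finset.sum_nonneg fun _ _ => hC0n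
  refine ⟨ρ / (1 + K) ^ N, by positivity, c / (N + 1), by positivity, (1 + K) ^ N,
    one_le_pow₀ (by linarith), (∑ n : Fin N, ∑ j : Fin (I n), ∑ a : Fin (r n), C0) + 1, by linarith, ?_⟩
  intro A A' st hd
  have hd' : (1 + K) ^ N * dQ A As ≤ ρ := by
    rwa [le_div_iff₀ (by positivity), mul_comm] at hd
  have hdn := dQ_nonneg A As
  have hfe : ∀ j, TFeas (hy A A' j) := fun j => hy_feas st.fe st.fe' j
  have hind : ∀ j ≤ N, dQ (hy A A' j) As ≤ (1 + K) ^ j * dQ A As := by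
    intro j
    induction j with
    | zero => intro _; rw [hy_zero]; simp
    | succ j ih =>
      intro hj
      have h1 := ih (by omega)
      have h2 : dQ (hy A A' j) As ≤ ρ := h1.trans (le_trans (mul_le_mul_of_nonneg_right
        (pow_le_pow_right₀ (by linarith) (by omega)) hdn) hd')
      obtain ⟨b1, -, -⟩ := hb ⟨j, hj⟩ (hy A A' j) (hfe j) h2 (A' ⟨j, hj⟩) (st.fe' _) (st.mx ⟨j, hj⟩)
      have h3 : dQ (hy A A' (j + 1)) As ≤ dQ (hy A A' j) As + K * dQ (hy A A' j) As := by
        have : ∀ m, fro (hy A A' (j + 1) m * (hy A A' (j + 1) m)ᵀ - As m * (As m)ᵀ) ≤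
            fro (hy A A' j m * (hy A A' j m)ᵀ - As m * (As m)ᵀ) +
              if m = ⟨j, hj⟩ then K * dQ (hy A A' j) As else 0 := by
          intro m
          by_cases h : m = ⟨j, hj⟩
          · subst h
            have e := hy_succ_self A A' ⟨j, hj⟩
            simp only at e
            rw [e, if_pos rfl]
            linarith [fro_nonneg (hy A A' j ⟨j, hj⟩ * (hy A A' j ⟨j, hj⟩)ᵀ - As ⟨j, hj⟩ * (As ⟨j, hj⟩)ᵀ)]
          · have e := hy_succ_ne A A' ⟨j, hj⟩ m h
            simp only at e
            rw [e, if_neg h, add_zero]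
        calc _ ≤ _ := Finset.sum_le_sum fun m _ => this m
          _ = _ := by rw [Finset.sum_add_distrib, Finset.sum_ite_eq' Finset.univ, if_pos (Finset.mem_univ _)]; rfl
      calc _ ≤ _ := h3
        _ = (1 + K) * dQ (hy A A' j) As := by ring
        _ ≤ (1 + K) * ((1 + K) ^ j * dQ A As) := mul_le_mul_of_nonneg_left h1 (by linarith)
        _ = _ := by ring
  have hnear : ∀ j ≤ N, dQ (hy A A' j) As ≤ ρ := fun j hj =>
    (hind j hj).trans (le_trans (mul_le_mul_of_nonneg_right
        (pow_le_pow_right₀ (by linarith) hj) hdn) hd')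
  refine ⟨?_, ?_, ?_⟩
  · have := hind N le_rfl
    rwa [hy_last] at this
  · have hf : ∀ j ≤ N, c * ∑ m, froSq (hy A A' j m * (hy A A' j m)ᵀ - A m * (A m)ᵀ) ≤
        fval X (hy A A' j) - fval X A := by
      intro j
      induction j with
      | zero => intro _; rw [hy_zero]; simp [froSq]
      | succ j ih =>
        intro hj
        have h1 := ih (by omega)
        obtain ⟨-, -, b3⟩ := hb ⟨j, hj⟩ (hy A A' j) (hfe j) (hnear j (by omega)) (A' ⟨j, hj⟩)
          (st.fe' _) (st.mx ⟨j, hj⟩)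
        have b4 := b3 (A ⟨j, hj⟩) (st.fe _)
        have e1 := fval_trace X (hy A A' (j + 1)) ⟨j, hj⟩
        have e2 := fval_trace X (hy A A' j) ⟨j, hj⟩
        have s1 := hy_succ_self A A' ⟨j, hj⟩
        have s2 := hy_self A A' ⟨j, hj⟩
        have s3 := hy_succ_ne A A' ⟨j, hj⟩
        simp only at s1 s2 s3
        rw [Mn_congr X _ (hy A A' j) ⟨j, hj⟩ s3, s1] at e1
        rw [s2] at e2
        have : ∀ m, froSq (hy A A' (j + 1) m * (hy A A' (j + 1) m)ᵀ - A m * (A m)ᵀ) =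
            froSq (hy A A' j m * (hy A A' j m)ᵀ - A m * (A m)ᵀ) +
              if m = ⟨j, hj⟩ then froSq (A' ⟨j, hj⟩ * (A' ⟨j, hj⟩)ᵀ - A ⟨j, hj⟩ * (A ⟨j, hj⟩)ᵀ) else 0 := by
          intro m
          by_cases h : m = ⟨j, hj⟩
          · subst h
            rw [s1, s2, if_pos rfl, sub_self]; simp [froSq]
          · rw [s3 m h, if_neg h, add_zero]
        rw [Finset.sum_congr rfl fun m _ => this m, Finset.sum_add_distrib,
          Finset.sum_ite_eq' Finset.univ, if_pos (Finset.mem_univ _), mul_add]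
        linarith
    have h1 := hf N le_rfl
    rw [hy_last] at h1
    refine le_trans ?_ h1
    have h2 : dQ A A' ^ 2 ≤ N * ∑ m, froSq (A' m * (A' m)ᵀ - A m * (A m)ᵀ) := by
      rw [dQ_comm]
      have := sq_sum_le_card_mul_sum_sq (s := Finset.univ)
        (f := fun m => fro (A' m * (A' m)ᵀ - A m * (A m)ᵀ))
      simpa [fro_sq, dQ] using this
    have h3 : 0 ≤ ∑ m, froSq (A' m * (A' m)ᵀ - A m * (A m)ᵀ) :=
      Finset.sum_nonneg fun _ _ => froSq_nonneg _
    rw [div_mul_eq_mul_div, div_le_iff₀ (by positivity)]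
    calc _ ≤ c * (N * ∑ m, froSq (A' m * (A' m)ᵀ - A m * (A m)ᵀ)) := mul_le_mul_of_nonneg_left h2 hc.le
      _ ≤ _ := by nlinarith [mul_nonneg hc.le h3]
  · have hΔ := dQ_nonneg A A'
    have hg : ∀ n, fro (gR X A n) ≤ C0 * dQ A A' := by
      intro n
      obtain ⟨-, b2, -⟩ := hb n (hy A A' n.val) (hfe _) (hnear _ n.2.le) (A' n) (st.fe' n) (st.mx n)
      have hrR : (r n : ℝ) ≤ R := by
        have := Finset.single_le_sum (f := fun n => (r n : ℝ)) (fun _ _ => Nat.cast_nonneg _)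
          (Finset.mem_univ n)
        linarith
      have hR1 : 1 ≤ R := by
        have : 0 ≤ ∑ n, (r n : ℝ) := by positivity
        linarith
      have hproj : ∀ B : Matrix (Fin (I n)) (Fin (r n)) ℝ, Bᵀ * B = 1 → fro (B * Bᵀ) ≤ R := by
        intro B hB
        refine (fro_mul _ _).trans ?_
        rw [fro_transpose, fro_feas B hB, Real.mul_self_sqrt (Nat.cast_nonneg _)]
        exact hrR
      have hfA : fro (A n) ≤ R := by
        rw [fro_feas _ (st.fe n)]
        refine Real.sqrt_le_iff.mpr ⟨hR, ?_⟩
        nlinarith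
      have hMb : ∀ j ≤ N, fro (Mn X (hy A A' j) n) ≤ S := by
        intro j hj
        have h1 := Mn_lip X (hy A A' j) As (hfe j) hfs n
        have h2 := fro_add (Mn X (hy A A' j) n - Mn X As n) (Mn X As n)
        rw [sub_add_cancel] at h2
        have h3 := mul_le_mul_of_nonneg_left (hnear j hj) hL
        have h4 : fro (Mn X As n) ≤ S0 := hS0' n
        linarith
      have hMA : fro (Mn X A n) ≤ S := by
        have := hMb 0 (Nat.zero_le _)
        rwa [hy_zero] at this
      have hdd : dQ A (hy A A' n.val) ≤ dQ A A' := by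
        refine Finset.sum_le_sum fun m _ => ?_
        unfold hy
        split_ifs
        · exact le_rfl
        · rw [sub_self, fro_zero]; exact fro_nonneg _
      have hMM : fro (Mn X A n - Mn X (hy A A' n.val) n) ≤ Lc X * dQ A A' :=
        (Mn_lip X A _ st.fe (hfe _) n).trans (mul_le_mul_of_nonneg_left hdd hL)
      have hQA : A n * (A n)ᵀ * A n = A n := by
        rw [Matrix.mul_assoc, st.fe n, Matrix.mul_one]
      have := grad_alg (A n * (A n)ᵀ) (A' n * (A' n)ᵀ) (Mn X A n) (Mn X (hy A A' n.val) n) (A n) hQA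
        (by
          have b3 := congrArg (fun Z => Z * (A' n)ᵀ) b2
          simp only [Matrix.mul_assoc] at b3 ⊢
          exact b3)
        hR hS hL hΔ (hproj _ (st.fe n)) (hproj _ (st.fe' n)) hMA (hMb _ n.2.le) hfA
        (fro_le_dQ A A' n) hMM
      have e : gR X A n = Mn X A n * A n - A n * (A n)ᵀ * (Mn X A n * A n) := by
        rw [gR, Mn, Gmat_eq]
        simp only [Matrix.mul_assoc]
      rw [e]
      exact this
    have h2 : (∑ n, ∑ j, ∑ a, |gR X A n j a|) ≤
        ∑ n : Fin N, ∑ j : Fin (I n), ∑ a : Fin (r n), C0 * dQ A A' :=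
      Finset.sum_le_sum fun n _ => Finset.sum_le_sum fun j _ => Finset.sum_le_sum fun a _ =>
        (entry_le_fro (gR X A n) j a).trans (hg n)
    refine h2.trans ?_
    simp only [← Finset.sum_mul]
    nlinarith

end HOOI


namespace HOOI

variable {N : ℕ} {I r : Fin N → ℕ}

theorem feas_subseq (u : ℕ → (n : Fin N) → Matrix (Fin (I n)) (Fin (r n)) ℝ)
    (hu : ∀ k, TFeas (u k)) :
    ∃ Ab : (n : Fin N) → Matrix (Fin (I n)) (Fin (r n)) ℝ, TFeas Ab ∧ ∃ φ : ℕ → ℕ, StrictMono φ ∧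
      ∀ n, Tendsto (fun k => fro (u (φ k) n - Ab n)) atTop (nhds 0) := by
  let S : Set ((n : Fin N) → Fin (I n) → Fin (r n) → ℝ) := Set.pi Set.univ fun n => Set.pi Set.univ fun i => Set.pi Set.univ fun a =>
    Set.Icc (-1 : ℝ) 1
  have hS : IsCompact S := isCompact_univ_pi fun n => isCompact_univ_pi fun i =>
    isCompact_univ_pi fun a => isCompact_Icc
  obtain ⟨Ab, -, φ, hφ, hlim⟩ := hS.tendsto_subseq (x := fun k n i a => u k n i a) (by
    intro k n _ i _ a _
    exact abs_le.mp (entry_le_one (u k n) (hu k n) i a))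
  have hent : ∀ n i a, Tendsto (fun k => u (φ k) n i a) atTop (nhds (Ab n i a)) := by
    intro n i a
    have h1 := (tendsto_pi_nhds.mp hlim) n
    have h2 := (tendsto_pi_nhds.mp h1) i
    exact (tendsto_pi_nhds.mp h2) a
  refine ⟨Ab, ?_, φ, hφ, ?_⟩
  · intro n
    ext a b
    have h1 : Tendsto (fun k => ((u (φ k) n)ᵀ * u (φ k) n) a b) atTop
        (nhds (∑ i, Ab n i a * Ab n i b)) := by
      simp only [Matrix.mul_apply, Matrix.transpose_apply]
      exact tendsto_finsetSum _ fun i _ => (hent n i a).mul (hent n i b)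
    simp only [hu _ n] at h1
    have := tendsto_nhds_unique h1 tendsto_const_nhds
    exact (Matrix.mul_apply (M := (Matrix.of (Ab n))ᵀ) (N := Matrix.of (Ab n))).trans this
  · intro n
    have h1 : Tendsto (fun k => ∑ i, ∑ a, |(u (φ k) n - Matrix.of (Ab n)) i a|) atTop (nhds 0) := by
      have : (0 : ℝ) = ∑ i : Fin (I n), ∑ a : Fin (r n), |(0 : ℝ)| := by simp
      rw [this]
      refine tendsto_finsetSum _ fun i _ => tendsto_finsetSum _ fun a _ => ?_
      refine Tendsto.abs ?_
      have := (hent n i a).sub_const (Ab n i a)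
      rw [sub_self] at this
      exact this
    exact squeeze_zero (fun _ => fro_nonneg _) (fun k => fro_le_sum _) h1

theorem fval_of_dQ_zero (X : ((n : Fin N) → Fin (I n)) → ℝ)
    (A B : (n : Fin N) → Matrix (Fin (I n)) (Fin (r n)) ℝ) (hA : TFeas A) (hB : TFeas B)
    (h : ∀ n, A n * (A n)ᵀ = B n * (B n)ᵀ) : fval X A = fval X B := by
  have h1 := fval_lip X A B hA hB
  have h2 : dQ A B = 0 := Finset.sum_eq_zero fun n _ => by rw [h n, sub_self, fro_zero]
  rw [h2, mul_zero] at h1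
  exact sub_eq_zero.mp (abs_nonpos_iff.mp h1)

theorem fro_eq_zero {ι κ : Type*} [Fintype ι] [Fintype κ] (M : Matrix ι κ ℝ) (h : fro M ≤ 0) : M = 0 := by
  ext i j
  have := (entry_le_fro M i j).trans h
  simpa using this

theorem localmax_proj (X : ((n : Fin N) → Fin (I n)) → ℝ)
    (As : (n : Fin N) → Matrix (Fin (I n)) (Fin (r n)) ℝ) (hs : LocalMax X As) :
    ∃ η > (0 : ℝ), ∀ B : (n : Fin N) → Matrix (Fin (I n)) (Fin (r n)) ℝ, TFeas B → dQ B As ≤ η →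
      fval X B ≤ fval X As := by
  obtain ⟨hf, ε, hε, hmax⟩ := hs
  by_contra hcon
  push Not at hcon
  choose u hu hd hgt using fun m : ℕ => hcon (1 / ((m : ℝ) + 1)) (by positivity)
  obtain ⟨Ab, hAb, φ, hφ, hlim⟩ := feas_subseq u hu
  have hd0 : Tendsto (fun k => dQ (u (φ k)) As) atTop (nhds 0) :=
    squeeze_zero (fun _ => dQ_nonneg _ _) (fun k => hd (φ k))
      (tendsto_one_div_add_atTop_nhds_zero_nat.comp hφ.tendsto_atTop)
  have hP : ∀ n, Ab n * (Ab n)ᵀ = As n * (As n)ᵀ := by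
    intro n
    rw [← sub_eq_zero]
    apply fro_eq_zero
    have h1 : Tendsto (fun k => 2 * Real.sqrt (r n) * fro (u (φ k) n - Ab n) + dQ (u (φ k)) As)
        atTop (nhds (2 * Real.sqrt (r n) * 0 + 0)) := ((hlim n).const_mul _).add hd0
    simp only [mul_zero, add_zero] at h1
    refine ge_of_tendsto' h1 fun k => ?_
    have h2 := fro_tri (Ab n * (Ab n)ᵀ) (u (φ k) n * (u (φ k) n)ᵀ) (As n * (As n)ᵀ)
    have h3 := proj_lip (u (φ k) n) (Ab n) (hu _ n) (hAb n)
    rw [fro_sub_comm] at h3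
    have h4 := fro_le_dQ (u (φ k)) As n
    linarith
  have hO1 : ∀ n, ((Ab n)ᵀ * As n)ᵀ * ((Ab n)ᵀ * As n) = 1 := by
    intro n
    rw [Matrix.transpose_mul, Matrix.transpose_transpose, Matrix.mul_assoc, ← Matrix.mul_assoc (Ab n),
      hP n, Matrix.mul_assoc, hf n, Matrix.mul_one, hf n]
  have hO2 : ∀ n, ((Ab n)ᵀ * As n) * ((Ab n)ᵀ * As n)ᵀ = 1 := fun n =>
    mul_eq_one_comm.mp (hO1 n)
  have hO3 : ∀ n, Ab n * ((Ab n)ᵀ * As n) = As n := by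
    intro n
    rw [← Matrix.mul_assoc, hP n, Matrix.mul_assoc, hf n, Matrix.mul_one]
  set O := fun n => (Ab n)ᵀ * As n with hO
  have hvf : ∀ k, TFeas (fun n => u k n * O n) := by
    intro k n
    change (u k n * O n)ᵀ * (u k n * O n) = 1
    rw [Matrix.transpose_mul, Matrix.mul_assoc, ← Matrix.mul_assoc (u k n)ᵀ, hu k n, Matrix.one_mul]
    exact hO1 n
  have hvq : ∀ k, fval X (fun n => u k n * O n) = fval X (u k) := by
    intro k
    refine fval_of_dQ_zero X _ _ (hvf k) (hu k) fun n => ?_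
    change (u k n * O n) * (u k n * O n)ᵀ = _
    rw [Matrix.transpose_mul, Matrix.mul_assoc, ← Matrix.mul_assoc (O n)]
    rw [show O n * (O n)ᵀ = 1 from hO2 n, Matrix.one_mul]
  have ht : Tendsto (fun k => ∑ n, fro (u (φ k) n - Ab n) * fro (O n)) atTop (nhds 0) := by
    have : (0 : ℝ) = ∑ n, 0 * fro (O n) := by simp
    rw [this]
    exact tendsto_finsetSum _ fun n _ => (hlim n).mul_const _
  obtain ⟨k, hk⟩ := (ht.eventually (gt_mem_nhds hε)).exists
  have h1 := hmax (fun n => u (φ k) n * O n) (hvf _) (by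
    refine (tdist_le_sum _ _).trans (le_trans (Finset.sum_le_sum fun n _ => ?_) hk.le)
    have : u (φ k) n * O n - As n = (u (φ k) n - Ab n) * O n := by
      rw [Matrix.sub_mul]
      rw [show Ab n * O n = As n from hO3 n]
    rw [this]
    exact fro_mul _ _)
  rw [hvq] at h1
  exact absurd h1 (not_le.mpr (hgt _))

theorem pow_diff (a b : ℝ) (hb : 0 ≤ b) (hab : b ≤ a) (D : ℕ) :
    a ^ (D + 1) - b ^ (D + 1) ≤ (D + 1) * a ^ D * (a - b) := by
  have ha : 0 ≤ a := hb.trans hab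
  induction D with
  | zero => simp
  | succ D ih =>
    have h1 : b ^ (D + 1) ≤ a ^ (D + 1) := pow_le_pow_left₀ hb hab _
    have h2 : a ^ (D + 1 + 1) - b ^ (D + 1 + 1) = a * (a ^ (D + 1) - b ^ (D + 1)) +
      b ^ (D + 1) * (a - b) := by ring
    rw [h2]
    have h3 := mul_le_mul_of_nonneg_left ih ha
    have h4 := mul_le_mul_of_nonneg_right h1 (sub_nonneg.mpr hab)
    push_cast
    calc _ ≤ _ := add_le_add h3 h4
      _ = _ := by ring

theorem scalar_step (C C2 c : ℝ) (hC : 0 < C) (hC2 : 0 < C2) (hc : 0 < c) (E : ℕ) :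
    ∃ s1 > (0 : ℝ), ∃ C3 > (0 : ℝ), ∃ C4 > (0 : ℝ), ∀ s s' g Δ : ℝ, 0 ≤ s → s ≤ s1 → 0 ≤ s' → 0 ≤ Δ →
      0 ≤ g → g ≤ C2 * Δ → c * Δ ^ 2 ≤ s - s' →
      (s ≠ 0 → 1 ≤ s * (C * (1 + g / s) ^ (E + 1))) →
      (s ≠ 0 → (s ^ (1 / ((E : ℝ) + 1))) ^ E ≤ C3 * Δ) ∧
      Δ ≤ C4 * (s ^ (1 / ((E : ℝ) + 1)) - s' ^ (1 / ((E : ℝ) + 1))) := by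
  have hE : (0 : ℝ) < (E : ℝ) + 1 := by positivity
  have hroot : ∀ x : ℝ, 0 ≤ x → (x ^ (1 / ((E : ℝ) + 1))) ^ (E + 1) = x := by
    intro x hx
    rw [← Real.rpow_natCast, ← Real.rpow_mul hx]
    push_cast
    rw [one_div, inv_mul_cancel₀ hE.ne', Real.rpow_one]
  set C1 : ℝ := (C * 2 ^ (E + 1)) ^ (1 / ((E : ℝ) + 1)) with hC1
  have hC1p : 0 < C1 := by positivity
  have hC1' : C1 ^ (E + 1) = C * 2 ^ (E + 1) := hroot _ (by positivity)
  refine ⟨1 / (2 * (C * 2 ^ (E + 1))), by positivity, C1 * C2, by positivity,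
    (E + 1) * (C1 * C2) / c, by positivity, ?_⟩
  intro s s' g Δ hs hs1 hs' hΔ hg hg2 hdec hloj
  set a := s ^ (1 / ((E : ℝ) + 1)) with ha
  set b := s' ^ (1 / ((E : ℝ) + 1)) with hb
  have ha0 : 0 ≤ a := Real.rpow_nonneg hs _
  have hb0 : 0 ≤ b := Real.rpow_nonneg hs' _
  have hss : s' ≤ s := by nlinarith [mul_nonneg hc.le (sq_nonneg Δ)]
  have hab : b ≤ a := Real.rpow_le_rpow hs' hss (by positivity)
  have haE : a ^ (E + 1) = s := hroot s hs
  have hbE : b ^ (E + 1) = s' := hroot s' hs'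
  have key : s ≠ 0 → a ^ E ≤ C1 * C2 * Δ := by
    intro hs0
    have hsp : 0 < s := lt_of_le_of_ne hs (Ne.symm hs0)
    have h1 := hloj hs0
    have h2 : 1 ≤ g / s := by
      by_contra hcon
      push Not at hcon
      have hgs : 0 ≤ g / s := by positivity
      have h3 : (1 + g / s) ^ (E + 1) ≤ 2 ^ (E + 1) :=
        pow_le_pow_left₀ (by linarith) (by linarith) _
      have h4 : s * (C * (1 + g / s) ^ (E + 1)) ≤ s * (C * 2 ^ (E + 1)) := by gcongr
      have h5 : s * (2 * (C * 2 ^ (E + 1))) ≤ 1 := by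
        rwa [le_div_iff₀ (by positivity)] at hs1
      nlinarith
    have h3 : (1 + g / s) ^ (E + 1) ≤ (2 * (g / s)) ^ (E + 1) :=
      pow_le_pow_left₀ (by linarith) (by linarith) _
    have h4 : 1 ≤ s * (C * (2 * (g / s)) ^ (E + 1)) := h1.trans (by gcongr)
    have h5 : s * (C * (2 * (g / s)) ^ (E + 1)) = (C1 * g) ^ (E + 1) / s ^ E := by
      rw [mul_pow C1, hC1', mul_pow 2, div_pow, pow_succ s]
      field_simp
    rw [h5, le_div_iff₀ (by positivity), one_mul] at h4
    have h6 : (a ^ E) ^ (E + 1) ≤ (C1 * g) ^ (E + 1) := by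
      rw [← pow_mul, mul_comm, pow_mul, haE]; exact h4
    have h7 : a ^ E ≤ C1 * g := le_of_pow_le_pow_left₀ (Nat.succ_ne_zero E) (by positivity) h6
    calc _ ≤ _ := h7
      _ ≤ C1 * (C2 * Δ) := by gcongr
      _ = _ := by ring
  refine ⟨key, ?_⟩
  rcases eq_or_ne s 0 with h0 | h0
  · have h1 : Δ = 0 := by
      have : c * Δ ^ 2 ≤ 0 := by linarith
      have h2 : Δ ^ 2 ≤ 0 := by
        by_contra hcon
        push Not at hcon
        nlinarith [mul_pos hc hcon]
      exact pow_eq_zero_iff (two_ne_zero) |>.mp (le_antisymm h2 (sq_nonneg _))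
    rw [h1]
    exact mul_nonneg (by positivity) (sub_nonneg.mpr hab)
  · have h1 := key h0
    have h2 := pow_diff a b hb0 hab E
    rw [haE, hbE] at h2
    rcases hΔ.eq_or_lt with h3 | h3
    · rw [← h3]
      exact mul_nonneg (by positivity) (sub_nonneg.mpr hab)
    · rw [div_mul_eq_mul_div, le_div_iff₀ hc]
      have h4 : c * Δ ^ 2 ≤ (E + 1) * (C1 * C2 * Δ) * (a - b) := by
        refine hdec.trans (h2.trans ?_)
        have := sub_nonneg.mpr hab
        gcongr
      have h5 : Δ * (Δ * c) ≤ Δ * ((E + 1) * (C1 * C2) * (a - b)) := by nlinarith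
      exact le_of_mul_le_mul_left h5 h3

end HOOI


namespace HOOI

variable {N : ℕ} {I r : Fin N → ℕ}

theorem hooi_main (hr : ∀ n, r n ≤ I n) (X : ((n : Fin N) → Fin (I n)) → ℝ)
    (As : (n : Fin N) → Matrix (Fin (I n)) (Fin (r n)) ℝ) (hs : LocalMax X As) (hnd : NonDeg X As) :
    ∃ δ > (0 : ℝ), ∀ A : ℕ → (n : Fin N) → Matrix (Fin (I n)) (Fin (r n)) ℝ, IsHOOI X A →
      tdist (A 0) As ≤ δ →
      ∃ Ab : (n : Fin N) → Matrix (Fin (I n)) (Fin (r n)) ℝ, TFeas Ab ∧ LocalMax X Ab ∧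
        ∀ n, Tendsto (fun k => fro (A k n * (A k n)ᵀ - Ab n * (Ab n)ᵀ)) atTop (nhds 0) := by
  obtain ⟨ρ, hρ, c, hc, K, hK, C2, hC2, hsweep⟩ := sweep hr X As hs hnd
  obtain ⟨η, hη, hloc⟩ := localmax_proj X As hs
  obtain ⟨C, hC, D, hD, hloj⟩ := loj (r := r) X (fval X As)
  obtain ⟨E, rfl⟩ : ∃ E, D = E + 1 := ⟨D - 1, by omega⟩
  obtain ⟨s1, hs1, C3, hC3, C4, hC4, hsc⟩ := scalar_step C C2 c hC hC2 hc E
  obtain ⟨Ct, hCt, hdt⟩ := dQ_le_tdist (I := I) (r := r)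
  have hKp : 0 < K := by linarith
  have hL := Lc_nonneg X
  have hE : (0 : ℝ) < (E : ℝ) + 1 := by positivity
  have hroot : ∀ x : ℝ, 0 ≤ x → (x ^ (1 / ((E : ℝ) + 1))) ^ (E + 1) = x := by
    intro x hx
    rw [← Real.rpow_natCast, ← Real.rpow_mul hx]
    push_cast
    rw [one_div, inv_mul_cancel₀ hE.ne', Real.rpow_one]
  set τ := min ρ (η / 2) / K with hτ
  have hτp : 0 < τ := by positivity
  have hKτ : K * τ = min ρ (η / 2) := by rw [hτ]; field_simp
  have hττ : τ ≤ K * τ := by nlinarith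
  have hτρ : τ ≤ ρ := hττ.trans (hKτ ▸ min_le_left _ _)
  have hKη : K * τ ≤ η / 2 := hKτ ▸ min_le_right _ _
  set s2 := min s1 ((τ / (2 * C4)) ^ (E + 1)) with hs2
  have hs2p : 0 < s2 := by positivity
  set δ0 := min (τ / 2) (s2 / (Lc X + 1)) with hδ0
  have hδ0p : 0 < δ0 := by positivity
  refine ⟨δ0 / Ct, by positivity, ?_⟩
  intro A hA hA0
  have hfs := hs.1
  have hd0 : dQ (A 0) As ≤ δ0 := by
    refine (hdt _ _ (hA.1 0) hfs).trans ?_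
    rw [le_div_iff₀ hCt] at hA0
    linarith
  have hd0a : dQ (A 0) As ≤ τ / 2 := hd0.trans (min_le_left _ _)
  have hd0b : Lc X * dQ (A 0) As ≤ s2 := by
    have h1 := hd0.trans (min_le_right _ _)
    rw [le_div_iff₀ (by positivity)] at h1
    nlinarith [dQ_nonneg (A 0) As]
  set s : ℕ → ℝ := fun k => fval X As - fval X (A k) with hsdef
  set a : ℕ → ℝ := fun k => (s k) ^ (1 / ((E : ℝ) + 1)) with hadef
  set Δ : ℕ → ℝ := fun k => dQ (A k) (A (k + 1)) with hΔdef
  have hs00 : 0 ≤ s 0 := sub_nonneg.mpr (hloc _ (hA.1 0) (by linarith))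
  have hs02 : s 0 ≤ s2 := by
    have h1 := fval_lip X (A 0) As (hA.1 0) hfs
    have h2 := (abs_le.mp h1).1
    simp only [hsdef]
    linarith
  have hs0s1 : s 0 ≤ s1 := hs02.trans (min_le_left _ _)
  have ha0 : C4 * a 0 ≤ τ / 2 := by
    have h1 : a 0 ^ (E + 1) ≤ (τ / (2 * C4)) ^ (E + 1) := by
      simp only [hadef]
      rw [hroot _ hs00]
      exact hs02.trans (min_le_right _ _)
    have h2 : a 0 ≤ τ / (2 * C4) :=
      le_of_pow_le_pow_left₀ (Nat.succ_ne_zero E) (by positivity) h1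
    rw [le_div_iff₀ (by positivity)] at h2
    linarith
  -- one step
  have hone : ∀ k, dQ (A k) As ≤ τ → 0 ≤ s k → s k ≤ s1 →
      0 ≤ s (k + 1) ∧ s (k + 1) ≤ s k ∧ (s k ≠ 0 → a k ^ E ≤ C3 * Δ k) ∧
        Δ k ≤ C4 * (a k - a (k + 1)) := by
    intro k hk hsk hsk1
    obtain ⟨w1, w2, w3⟩ := hsweep (A k) (A (k + 1)) (step_of_hooi hA k) (hk.trans hτρ)
    have hΔ0 : 0 ≤ Δ k := dQ_nonneg _ _
    have h1 : 0 ≤ s (k + 1) := by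
      refine sub_nonneg.mpr (hloc _ (hA.1 _) ?_)
      have := mul_le_mul_of_nonneg_left hk hKp.le
      linarith
    have h2 : c * Δ k ^ 2 ≤ s k - s (k + 1) := by
      simp only [hsdef, hΔdef]; linarith
    have h3 : s (k + 1) ≤ s k := by
      have : 0 ≤ c * Δ k ^ 2 := by positivity
      linarith
    have h4 := hsc (s k) (s (k + 1)) (∑ n, ∑ j, ∑ b, |gR X (A k) n j b|) (Δ k) hsk hsk1 h1 hΔ0
      (Finset.sum_nonneg fun _ _ => Finset.sum_nonneg fun _ _ => Finset.sum_nonneg fun _ _ =>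
        abs_nonneg _) w3 h2 (by
        intro hne
        have h5 := hloj (A k) (hA.1 k) (fun h => hne (by simp only [hsdef]; rw [h, sub_self]))
        rw [show fval X As - fval X (A k) = s k from rfl, abs_of_nonneg hsk] at h5
        exact h5)
    exact ⟨h1, h3, h4.1, h4.2⟩
  have hainn : ∀ k, 0 ≤ s k → 0 ≤ a k := fun k h => Real.rpow_nonneg h _
  have hinv : ∀ k, dQ (A k) As ≤ τ ∧ 0 ≤ s k ∧ s k ≤ s1 ∧ dQ (A 0) (A k) ≤ C4 * (a 0 - a k) := by
    intro k
    induction k with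
    | zero =>
      refine ⟨by linarith, hs00, hs0s1, ?_⟩
      rw [sub_self, mul_zero]
      refine le_of_eq (Finset.sum_eq_zero fun n _ => by rw [sub_self, fro_zero])
    | succ k ih =>
      obtain ⟨i1, i2, i3, i4⟩ := ih
      obtain ⟨o1, o2, -, o4⟩ := hone k i1 i2 i3
      have h1 : dQ (A 0) (A (k + 1)) ≤ C4 * (a 0 - a (k + 1)) := by
        have := dQ_tri (A 0) (A k) (A (k + 1))
        have h2 : dQ (A k) (A (k + 1)) ≤ C4 * (a k - a (k + 1)) := o4
        linarith
      refine ⟨?_, o1, o2.trans i3, h1⟩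
      have h2 := dQ_tri (A (k + 1)) (A 0) As
      rw [dQ_comm (A (k + 1)) (A 0)] at h2
      have h3 := mul_nonneg hC4.le (hainn (k + 1) o1)
      linarith
  have hstep : ∀ k, 0 ≤ a k ∧ a (k + 1) ≤ a k ∧ (s k ≠ 0 → a k ^ E ≤ C3 * Δ k) ∧
      Δ k ≤ C4 * (a k - a (k + 1)) := by
    intro k
    obtain ⟨i1, i2, i3, -⟩ := hinv k
    obtain ⟨o1, o2, o3, o4⟩ := hone k i1 i2 i3
    exact ⟨hainn k i2, Real.rpow_le_rpow o1 o2 (by positivity), o3, o4⟩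
  have hanti : Antitone a := antitone_nat_of_succ_le fun k => (hstep k).2.1
  obtain ⟨l, hl⟩ : ∃ l, Tendsto a atTop (nhds l) :=
    ⟨_, tendsto_atTop_ciInf hanti ⟨0, by rintro _ ⟨k, rfl⟩; exact (hstep k).1⟩⟩
  have hla : ∀ k, l ≤ a k := fun k => hanti.le_of_tendsto hl k
  have hpair : ∀ k m, dQ (A k) (A (k + m)) ≤ C4 * (a k - a (k + m)) := by
    intro k m
    induction m with
    | zero =>
      rw [add_zero, sub_self, mul_zero]
      refine le_of_eq (Finset.sum_eq_zero fun n _ => by rw [sub_self, fro_zero])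
    | succ m ih =>
      have := dQ_tri (A k) (A (k + m)) (A (k + m + 1))
      have h2 : dQ (A (k + m)) (A (k + m + 1)) ≤ C4 * (a (k + m) - a (k + m + 1)) := (hstep (k + m)).2.2.2
      rw [← add_assoc]
      linarith
  obtain ⟨Ab, hAb, φ, hφ, hlim⟩ := feas_subseq A hA.1
  have hsub : Tendsto (fun j => dQ (A (φ j)) Ab) atTop (nhds 0) := by
    have h1 : Tendsto (fun j => Ct * ∑ n, fro (A (φ j) n - Ab n)) atTop (nhds (Ct * 0)) := by
      refine Tendsto.const_mul _ ?_
      have : (0 : ℝ) = ∑ n : Fin N, (0 : ℝ) := by simp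
      rw [this]
      exact tendsto_finsetSum _ fun n _ => hlim n
    rw [mul_zero] at h1
    refine squeeze_zero (fun _ => dQ_nonneg _ _) (fun j => ?_) h1
    exact (hdt _ _ (hA.1 _) hAb).trans (mul_le_mul_of_nonneg_left (tdist_le_sum _ _) hCt.le)
  have hconv0 : ∀ k, dQ (A k) Ab ≤ C4 * (a k - l) := by
    intro k
    have h1 : Tendsto (fun j => C4 * (a k - l) + dQ (A (φ j)) Ab) atTop (nhds (C4 * (a k - l) + 0)) :=
      hsub.const_add _
    rw [add_zero] at h1
    refine ge_of_tendsto h1 ?_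
    filter_upwards [eventually_ge_atTop k] with j hj
    have hjk : k ≤ φ j := hj.trans (hφ.id_le j)
    obtain ⟨m, hm⟩ := Nat.exists_eq_add_of_le hjk
    have h2 := dQ_tri (A k) (A (φ j)) Ab
    have h3 := hpair k m
    rw [← hm] at h3
    have h4 := mul_le_mul_of_nonneg_left (hla (φ j)) hC4.le
    linarith
  have hcl : Tendsto (fun k => C4 * (a k - l)) atTop (nhds 0) := by
    have := (hl.sub_const l).const_mul C4
    rwa [sub_self, mul_zero] at this
  have hconv : Tendsto (fun k => dQ (A k) Ab) atTop (nhds 0) :=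
    squeeze_zero (fun _ => dQ_nonneg _ _) hconv0 hcl
  have hl0 : 0 ≤ l := ge_of_tendsto' hl fun k => (hstep k).1
  have hlz : l = 0 := by
    by_contra hne
    have hlp : 0 < l := lt_of_le_of_ne hl0 (Ne.symm hne)
    have h1 : ∀ k, l ^ E ≤ C3 * (C4 * (a k - l)) := by
      intro k
      have hsk : s k ≠ 0 := by
        intro h0
        have h2 := hla k
        simp only [hadef] at h2
        rw [h0, Real.zero_rpow (by positivity)] at h2
        linarith
      calc l ^ E ≤ a k ^ E := pow_le_pow_left₀ hl0 (hla k) _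
        _ ≤ C3 * Δ k := (hstep k).2.2.1 hsk
        _ ≤ C3 * (C4 * (a k - a (k + 1))) := mul_le_mul_of_nonneg_left (hstep k).2.2.2 hC3.le
        _ ≤ _ := by
          have := hla (k + 1)
          gcongr
    have h2 := ge_of_tendsto' (hcl.const_mul C3) h1
    rw [mul_zero] at h2
    have : 0 < l ^ E := by positivity
    linarith
  have hfb : fval X Ab = fval X As := by
    have h1 : Tendsto s atTop (nhds 0) := by
      have h2 := hl.pow (E + 1)
      rw [hlz, zero_pow (Nat.succ_ne_zero E)] at h2
      refine h2.congr fun k => ?_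
      exact hroot _ (hinv k).2.1
    have h2 : Tendsto s atTop (nhds (fval X As - fval X Ab)) := by
      refine Tendsto.const_sub _ ?_
      rw [tendsto_iff_dist_tendsto_zero]
      have h3 := hconv.const_mul (Lc X)
      rw [mul_zero] at h3
      refine squeeze_zero (fun _ => dist_nonneg) (fun k => ?_) h3
      rw [Real.dist_eq]
      exact fval_lip X _ _ (hA.1 k) hAb
    have := tendsto_nhds_unique h1 h2
    linarith
  have hdb : dQ Ab As ≤ τ := by
    have h1 := hconv.add_const τ
    rw [zero_add] at h1
    refine ge_of_tendsto' h1 fun k => ?_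
    have := dQ_tri Ab (A k) As
    rw [dQ_comm Ab (A k)] at this
    have := (hinv k).1
    linarith
  refine ⟨Ab, hAb, ⟨hAb, η / 2 / Ct, by positivity, fun B hB hBd => ?_⟩, fun n => ?_⟩
  · rw [hfb]
    refine hloc B hB ?_
    have h1 := dQ_tri B Ab As
    have h2 := hdt B Ab hB hAb
    rw [le_div_iff₀ hCt] at hBd
    linarith
  · exact squeeze_zero (fun _ => fro_nonneg _) (fun k => fro_le_dQ (A k) Ab n) hconv

end HOOI


/-- For every HOOI sequence starting sufficiently close to a
block-nondegenerate local maximizer, the projection matrices converge to those of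
some local maximizer. -/
theorem stmt16 {N : ℕ} {I r : Fin N → ℕ} (hr : ∀ n, r n ≤ I n)
    (X : ((n : Fin N) → Fin (I n)) → ℝ)
    (Astar : (n : Fin N) → Matrix (Fin (I n)) (Fin (r n)) ℝ)
    (hstar : LocalMax X Astar) (hnd : NonDeg X Astar) :
    ∃ δ > (0 : ℝ), ∀ A : ℕ → (n : Fin N) → Matrix (Fin (I n)) (Fin (r n)) ℝ,
      IsHOOI X A → tdist (A 0) Astar ≤ δ →
      ∃ Abar : (n : Fin N) → Matrix (Fin (I n)) (Fin (r n)) ℝ,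
        TFeas Abar ∧ LocalMax X Abar ∧
        ∀ n, Filter.Tendsto (fun k => fro (A k n * (A k n)ᵀ - Abar n * (Abar n)ᵀ))
          Filter.atTop (nhds 0) := by
  exact HOOI.hooi_main hr X Astar hstar hnd
end

section
/- Let Ā and Ã be feasible points with ĀₙĀₙᵀ = ÃₙÃₙᵀ for all n. If Ã is a critical point, then Ā is also a critical point. -/
open Matrix BigOperators Filter

theorem Gmat_gram {N : ℕ} {I r : Fin N → ℕ} (X : ((n : Fin N) → Fin (I n)) → ℝ)
    (A : (n : Fin N) → Matrix (Fin (I n)) (Fin (r n)) ℝ) (n : Fin N) (j k : Fin (I n)) :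
    (Gmat X A n * (Gmat X A n)ᵀ) j k =
      ∑ p : ((m : {m : Fin N // m ≠ n}) → Fin (I m.1)),
      ∑ q : ((m : {m : Fin N // m ≠ n}) → Fin (I m.1)),
        (X (fun i => if h : i = n then Fin.cast (by rw [h]) j else p ⟨i, h⟩) *
         X (fun i => if h : i = n then Fin.cast (by rw [h]) k else q ⟨i, h⟩)) *
        ∏ m : {m : Fin N // m ≠ n}, (A m.1 * (A m.1)ᵀ) (p m) (q m) := by
  simp only [Matrix.mul_apply, Matrix.transpose_apply, Gmat, Finset.sum_mul_sum]
  rw [Finset.sum_comm]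
  refine Finset.sum_congr rfl fun p _ => ?_
  rw [Finset.sum_comm]
  refine Finset.sum_congr rfl fun q _ => ?_
  rw [Finset.prod_univ_sum, Fintype.piFinset_univ, Finset.mul_sum]
  refine Finset.sum_congr rfl fun c _ => ?_
  rw [Finset.prod_mul_distrib]
  ring

/-- If `Ā` and `Ã` are feasible with `Āₙ Āₙᵀ = Ãₙ Ãₙᵀ` for all
`n` and `Ã` is a critical point, then so is `Ā`. -/
theorem stmt17 {N : ℕ} {I r : Fin N → ℕ} (hr : ∀ n, r n ≤ I n)
    (X : ((n : Fin N) → Fin (I n)) → ℝ)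
    (Abar Atil : (n : Fin N) → Matrix (Fin (I n)) (Fin (r n)) ℝ)
    (hAbar : TFeas Abar) (hAtil : TFeas Atil)
    (hproj : ∀ n, Abar n * (Abar n)ᵀ = Atil n * (Atil n)ᵀ)
    (hcrit : Critical X Atil) :
    Critical X Abar := by
  intro n
  have hM : Gmat X Abar n * (Gmat X Abar n)ᵀ = Gmat X Atil n * (Gmat X Atil n)ᵀ := by
    ext j k
    rw [Gmat_gram, Gmat_gram]
    simp only [hproj]
  have h := hcrit n
  rw [hM]
  generalize Gmat X Atil n * (Gmat X Atil n)ᵀ = M at h ⊢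
  have hA : Abar n = Atil n * ((Atil n)ᵀ * Abar n) := by
    rw [← Matrix.mul_assoc, ← hproj n, Matrix.mul_assoc, hAbar n, Matrix.mul_one]
  have h2 : M * Abar n = Atil n * (Atil n)ᵀ * (M * Abar n) := by
    have h3 := congrArg (fun Z => Z * ((Atil n)ᵀ * Abar n)) h
    rw [Matrix.mul_assoc M, ← hA, Matrix.mul_assoc (Atil n * (Atil n)ᵀ), Matrix.mul_assoc M,
      ← hA] at h3
    exact h3
  rw [hproj n]
  exact h2
end
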